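/- arXiv:math/0405393 — 2 statements merged into one kernel-verified Lean document; each statement's English description precedes it below -/
import Mathlib

section
/- The d-Skeleton Conjecture holds in the following cases: (a) for d = 1 and every q ≥ 1, every continuous map f : Δ_1^{2(q-1)} → ℝ admits a Tverberg partition {S_1, …, S_q} with |S_i| ≤ 2 for all i; (b) if q is a prime power, then for every d ≥ 1, every continuous map f : Δ_d^{(d+1)(q-1)} → ℝ^d admits a Tverberg partition {S_1, …, S_q} with |S_i| ≤ d+1 for all i. -/
open scoped BigOperators

noncomputable section

/-- Euclidean space `ℝ^d`. -/
abbrev Euc (d : ℕ) : Type := EuclideanSpace ℝ (Fin d)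

/-- The standard `N`-simplex `Δ^N ⊆ ℝ^{N+1}`. -/
def stdSimp (N : ℕ) : Set (Fin (N+1) → ℝ) :=
  {x | (∀ i, 0 ≤ x i) ∧ ∑ i, x i = 1}

/-- The face `σ_S` of `Δ^N` spanned by the vertices in `S`. -/
def simpFace {N : ℕ} (S : Finset (Fin (N+1))) : Set (Fin (N+1) → ℝ) :=
  {x ∈ stdSimp N | ∀ i ∉ S, x i = 0}

/-- The `k`-skeleton `Δ_k^N` of the standard `N`-simplex. -/
def skel (N k : ℕ) : Set (Fin (N+1) → ℝ) :=
  {x ∈ stdSimp N | {i | x i ≠ 0}.ncard ≤ k + 1}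

/-- A Tverberg partition for (the relevant restriction of) `f`: a set of `q`
pairwise disjoint nonempty vertex subsets whose faces have images with a common point. -/
def IsTverbergPartition (q : ℕ) {N d : ℕ}
    (f : (Fin (N+1) → ℝ) → Euc d) (P : Finset (Finset (Fin (N+1)))) : Prop :=
  P.card = q ∧ (∀ S ∈ P, S.Nonempty) ∧
  (∀ S ∈ P, ∀ T ∈ P, S ≠ T → Disjoint S T) ∧
  (⋂ S ∈ P, f '' simpFace S).Nonempty

/-!
A coincidence of a test map is forced by an equivariant obstruction. Let `G = (ℤ/p)^r` with
`q = p^r` elements. The joins of orbits of `G` carry a chain map from the tensor product of `r`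
periodic resolutions of `ℤ/p`. A zero-free equivariant map to the character `χ` of `G` pulls the
winding cocycle back to a cocycle which represents the linear form `χ` in polynomial generators over
`𝔽_p`; since the polynomial ring is a domain, the product of these forms over the nontrivial
characters is nonzero, and so the maps have a common zero when the simplex is large enough. A
common zero is a colouring of the vertices by `G` and a weight vector whose `q` monochromatic parts
have equal test values.

The test functions are the homogeneous coordinates of a map which is affine on a fine subdivision
and agrees with `f` on its vertices up to a small perturbation into strong general position. Strong
general position bounds from below the number of subdivision vertices needed to support `q` points
with a common image, while by Carathéodory's theorem `d + 1` of them suffice for each point. As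
there are only `(d + 1)(q - 1) + 1` vertices in total, each point must lie in a face of dimension
at most `d`, where `f` is defined. A compactness argument removes the approximation.

For `d = 1` one sorts the vertices by their values under `f`. The edges which join the `k`-th
smallest to the `k`-th largest vertex are disjoint, and by the intermediate value theorem the image
of each of them contains the value at the median vertex.
-/

namespace SkeletonTverberg

/-! ### Chains on lists of points -/

section Chain

variable {S S' : Type*}

/-- Ordered simplicial chains with vertices in `S`: a list is the simplex on its entries, in that
order and possibly with repetitions, and the empty list is the generator in degree `-1`. -/
abbrev Chain (S : Type*) : Type _ := List S →₀ ℤ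

/-- The cone with apex `s` over a chain. -/
def cone (s : S) : Chain S →ₗ[ℤ] Chain S := Finsupp.lmapDomain ℤ ℤ (List.cons s)

/-- The chain map induced by a map of vertices. -/
def chainMap (f : S → S') : Chain S →ₗ[ℤ] Chain S' := Finsupp.lmapDomain ℤ ℤ (List.map f)

/-- The boundary of a single simplex, defined recursively as that of a cone over a simplex. -/
def simplexBoundary : List S → Chain S
  | [] => 0
  | a :: l => Finsupp.single l 1 - cone a (simplexBoundary l)

/-- The augmented simplicial boundary operator. -/
def boundary : Chain S →ₗ[ℤ] Chain S := Finsupp.linearCombination ℤ simplexBoundary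

/-- The subgroup of chains all of whose simplices satisfy `P`. -/
def supportedOn (P : List S → Prop) : Submodule ℤ (Chain S) := Finsupp.supported ℤ ℤ {l | P l}

@[simp] lemma cone_single (s : S) (l : List S) (a : ℤ) :
    cone s (Finsupp.single l a) = Finsupp.single (s :: l) a := by
  simp [cone]

@[simp] lemma chainMap_single (f : S → S') (l : List S) (a : ℤ) :
    chainMap f (Finsupp.single l a) = Finsupp.single (l.map f) a := by
  simp [chainMap]

@[simp] lemma boundary_single_nil (a : ℤ) : boundary (Finsupp.single ([] : List S) a) = 0 := by
  simp [boundary, simplexBoundary]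

lemma boundary_cone (s : S) (c : Chain S) : boundary (cone s c) = c - cone s (boundary c) := by
  have h : boundary ∘ₗ cone s = LinearMap.id - cone s ∘ₗ boundary := by
    ext l : 2
    simp [boundary, simplexBoundary]
  exact LinearMap.congr_fun h c

lemma boundary_single_cons (s : S) (l : List S) :
    boundary (Finsupp.single (s :: l) 1) =
      Finsupp.single l 1 - cone s (boundary (Finsupp.single l 1)) := by
  rw [← cone_single, boundary_cone]

@[simp] lemma boundary_boundary (c : Chain S) : boundary (boundary c) = 0 := by
  have h : boundary ∘ₗ boundary = (0 : Chain S →ₗ[ℤ] Chain S) := by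
    ext l : 2
    simp only [LinearMap.comp_apply, Finsupp.lsingle_apply, LinearMap.zero_apply]
    induction l with
    | nil => simp
    | cons a l ih => simp [boundary_single_cons, boundary_cone, ih]
  exact LinearMap.congr_fun h c

lemma chainMap_cone (f : S → S') (s : S) (c : Chain S) :
    chainMap f (cone s c) = cone (f s) (chainMap f c) := by
  have h : chainMap f ∘ₗ cone s = cone (f s) ∘ₗ chainMap f := by
    ext l : 2
    simp
  exact LinearMap.congr_fun h c

lemma chainMap_boundary (f : S → S') (c : Chain S) :
    chainMap f (boundary c) = boundary (chainMap f c) := by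
  have h : chainMap f ∘ₗ boundary = boundary ∘ₗ chainMap f := by
    ext l : 2
    simp only [LinearMap.comp_apply, Finsupp.lsingle_apply]
    induction l with
    | nil => simp
    | cons a l ih => simp [boundary_single_cons, chainMap_cone, ih]
  exact LinearMap.congr_fun h c

lemma mem_supportedOn {P : List S → Prop} {c : Chain S} :
    c ∈ supportedOn P ↔ ∀ l, c l ≠ 0 → P l := by
  simp only [supportedOn, Finsupp.mem_supported, Set.subset_def, Finset.mem_coe,
    Finsupp.mem_support_iff]
  rfl

lemma single_mem_supportedOn {P : List S → Prop} {l : List S} (h : P l) (a : ℤ) :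
    Finsupp.single l a ∈ supportedOn P :=
  Finsupp.single_mem_supported ℤ a h

lemma supportedOn_le {P : List S → Prop} {N : Submodule ℤ (Chain S)}
    (h : ∀ l, P l → Finsupp.single l 1 ∈ N) : supportedOn P ≤ N := by
  rw [supportedOn, Finsupp.supported_eq_span_single, Submodule.span_le]
  rintro _ ⟨l, hl, rfl⟩
  exact h l hl

lemma supportedOn_mono {P Q : List S → Prop} (h : ∀ l, P l → Q l) :
    supportedOn P ≤ supportedOn Q :=
  supportedOn_le fun l hl => single_mem_supportedOn (h l hl) 1

lemma map_mem_of_mem_supportedOn {M : Type*} [AddCommGroup M] {P : List S → Prop}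
    {N : Submodule ℤ M} (φ : Chain S →ₗ[ℤ] M) (h : ∀ l, P l → φ (Finsupp.single l 1) ∈ N)
    {c : Chain S} (hc : c ∈ supportedOn P) : φ c ∈ N :=
  supportedOn_le (N := N.comap φ) h hc

lemma eq_of_mem_supportedOn {M : Type*} [AddCommGroup M] {P : List S → Prop}
    {φ ψ : Chain S →ₗ[ℤ] M}
    (h : ∀ l, P l → φ (Finsupp.single l 1) = ψ (Finsupp.single l 1)) {c : Chain S}
    (hc : c ∈ supportedOn P) : φ c = ψ c :=
  supportedOn_le (N := LinearMap.eqLocus φ ψ) h hc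

lemma cone_mem_supportedOn {P Q : List S → Prop} {s : S} (h : ∀ l, P l → Q (s :: l))
    {c : Chain S} (hc : c ∈ supportedOn P) : cone s c ∈ supportedOn Q :=
  map_mem_of_mem_supportedOn _
    (fun l hl => by simpa using single_mem_supportedOn (h l hl) 1) hc

lemma chainMap_mem_supportedOn {P : List S → Prop} {Q : List S' → Prop} {f : S → S'}
    (h : ∀ l, P l → Q (l.map f)) {c : Chain S} (hc : c ∈ supportedOn P) :
    chainMap f c ∈ supportedOn Q :=
  map_mem_of_mem_supportedOn _
    (fun l hl => by simpa using single_mem_supportedOn (h l hl) 1) hc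

lemma boundary_single_mem_supportedOn (l : List S) :
    boundary (Finsupp.single l 1) ∈
      supportedOn fun l' => l'.Sublist l ∧ l'.length + 1 = l.length := by
  induction l with
  | nil => simp
  | cons a l ih =>
    rw [boundary_single_cons]
    refine Submodule.sub_mem _
      (single_mem_supportedOn ⟨List.sublist_cons_self _ _, by simp⟩ 1)
      (cone_mem_supportedOn ?_ ih)
    rintro l' ⟨hsub, hlen⟩
    exact ⟨hsub.cons_cons a, by simp [hlen]⟩

end Chain

/-! ### Total differentials of families indexed by multidegrees -/

section TotalDiff

lemma sum_mul_self_eq_zero_of_anticommute {R ι : Type*} [Ring R] (s : Finset ι) (D : ι → R)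
    (hsq : ∀ i, D i * D i = 0) (hanti : ∀ i k, i ≠ k → D i * D k + D k * D i = 0) :
    (∑ i ∈ s, D i) * ∑ i ∈ s, D i = 0 := by
  induction s using Finset.cons_induction with
  | empty => simp
  | cons i s hi ih =>
    have hcross : D i * ∑ k ∈ s, D k + (∑ k ∈ s, D k) * D i = 0 := by
      rw [Finset.mul_sum, Finset.sum_mul, ← Finset.sum_add_distrib]
      exact Finset.sum_eq_zero fun k hk => hanti i k fun h => hi (h ▸ hk)
    calc _ = D i * D i + (D i * ∑ k ∈ s, D k + (∑ k ∈ s, D k) * D i)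
          + (∑ k ∈ s, D k) * ∑ k ∈ s, D k := by rw [Finset.sum_cons]; noncomm_ring
      _ = 0 := by rw [hsq, hcross, ih]; simp

variable {M M' : Type*} [AddCommGroup M] [AddCommGroup M'] {r : ℕ}

/-- The differentials of the periodic resolution of a cyclic group of order `p` with generator
`t`: the norm in even degrees and `t - 1` in odd degrees. -/
def periodicMap (p : ℕ) (t : Module.End ℤ M) (n : ℤ) : Module.End ℤ M :=
  if Even n then ∑ k ∈ Finset.range p, t ^ k else t - 1

lemma periodicMap_mul_pred {p : ℕ} {t : Module.End ℤ M} (ht : t ^ p = 1) (n : ℤ) :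
    periodicMap p t n * periodicMap p t (n - 1) = 0 := by
  by_cases h : Even n
  · have h' : ¬ Even (n - 1) := by simp [h]
    rw [periodicMap, periodicMap, if_pos h, if_neg h', geom_sum_mul, ht, sub_self]
  · have h' : Even (n - 1) := by simpa [Int.even_sub] using h
    rw [periodicMap, periodicMap, if_neg h, if_pos h', mul_geom_sum, ht, sub_self]

lemma commute_periodicMap_left (p : ℕ) {t s : Module.End ℤ M} (h : Commute t s) (n : ℤ) :
    Commute (periodicMap p t n) s := by
  unfold periodicMap
  split_ifs
  · exact Commute.sum_left _ _ _ fun i _ => h.pow_left i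
  · exact h.sub_left (Commute.one_left s)

lemma commute_periodicMap (p : ℕ) {t s : Module.End ℤ M} (h : Commute t s) (n k : ℤ) :
    Commute (periodicMap p t n) (periodicMap p s k) :=
  (commute_periodicMap_left p (commute_periodicMap_left p h n).symm k).symm

lemma map_pow_apply {t : Module.End ℤ M} {t' : Module.End ℤ M'} {φ : M →ₗ[ℤ] M'}
    (h : ∀ x, φ (t x) = t' (φ x)) (k : ℕ) (x : M) : φ ((t ^ k) x) = (t' ^ k) (φ x) := by
  induction k with
  | zero => rfl
  | succ k ih => rw [pow_succ', pow_succ', Module.End.mul_apply, h, ih, Module.End.mul_apply]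

lemma map_periodicMap (p : ℕ) {t : Module.End ℤ M} {t' : Module.End ℤ M'} {φ : M →ₗ[ℤ] M'}
    (h : ∀ x, φ (t x) = t' (φ x)) (n : ℤ) (x : M) :
    φ (periodicMap p t n x) = periodicMap p t' n (φ x) := by
  unfold periodicMap
  split_ifs
  · simp [LinearMap.sum_apply, map_pow_apply h]
  · simp [h]

lemma periodicMap_mem (p : ℕ) {t : Module.End ℤ M} {N : Submodule ℤ M}
    (ht : ∀ x ∈ N, t x ∈ N) (n : ℤ) {x : M} (hx : x ∈ N) : periodicMap p t n x ∈ N := by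
  have h := map_periodicMap p (t := t.restrict ht) (t' := t) (φ := N.subtype)
    (fun _ => rfl) n ⟨x, hx⟩
  rw [Submodule.subtype_apply, Submodule.subtype_apply] at h
  exact h ▸ Subtype.coe_prop _

/-- The `i`-th summand of the total differential `totalDiff`. -/
def partialDiff (p : ℕ) (t : Fin r → Module.End ℤ M) (i : Fin r) :
    Module.End ℤ ((Fin r → ℤ) → M) :=
  LinearMap.pi fun m => ((∑ l ∈ Finset.Iio i, m l).negOnePow : ℤ) •
    periodicMap p (t i) (m i) ∘ₗ LinearMap.proj (m - Pi.single i 1)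

/-- The total differential on families indexed by multidegrees: the transpose of the differential
of the tensor product of `r` periodic resolutions, the `i`-th one with generator `t i`. -/
def totalDiff (p : ℕ) (t : Fin r → Module.End ℤ M) : Module.End ℤ ((Fin r → ℤ) → M) :=
  ∑ i, partialDiff p t i

lemma partialDiff_apply (p : ℕ) (t : Fin r → Module.End ℤ M) (i : Fin r) (z : (Fin r → ℤ) → M)
    (m : Fin r → ℤ) :
    partialDiff p t i z m = ((∑ l ∈ Finset.Iio i, m l).negOnePow : ℤ) •
      periodicMap p (t i) (m i) (z (m - Pi.single i 1)) :=
  rfl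

lemma totalDiff_apply (p : ℕ) (t : Fin r → Module.End ℤ M) (z : (Fin r → ℤ) → M)
    (m : Fin r → ℤ) :
    totalDiff p t z m = ∑ i, ((∑ l ∈ Finset.Iio i, m l).negOnePow : ℤ) •
      periodicMap p (t i) (m i) (z (m - Pi.single i 1)) := by
  simp [totalDiff, LinearMap.sum_apply, Finset.sum_apply, partialDiff_apply]

lemma sum_sub_single (m : Fin r → ℤ) (i : Fin r) :
    ∑ j, (m - Pi.single i 1 : Fin r → ℤ) j = ∑ j, m j - 1 := by
  simp [Finset.sum_sub_distrib]

lemma totalDiff_congr (p : ℕ) (t : Fin r → Module.End ℤ M) {z z' : (Fin r → ℤ) → M}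
    {m : Fin r → ℤ} (h : ∀ m', ∑ i, m' i = ∑ i, m i - 1 → z m' = z' m') :
    totalDiff p t z m = totalDiff p t z' m := by
  rw [totalDiff_apply, totalDiff_apply]
  exact Finset.sum_congr rfl fun i _ => by rw [h _ (sum_sub_single m i)]

lemma totalDiff_mem (p : ℕ) {t : Fin r → Module.End ℤ M} {N : Submodule ℤ M}
    (ht : ∀ i, ∀ x ∈ N, t i x ∈ N) {z : (Fin r → ℤ) → M} {m : Fin r → ℤ}
    (h : ∀ i, z (m - Pi.single i 1) ∈ N) : totalDiff p t z m ∈ N := by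
  rw [totalDiff_apply]
  exact Submodule.sum_mem _ fun i _ =>
    Submodule.smul_mem _ _ (periodicMap_mem p (ht i) _ (h i))

lemma map_totalDiff (p : ℕ) {t : Fin r → Module.End ℤ M} {t' : Fin r → Module.End ℤ M'}
    {φ : M →ₗ[ℤ] M'} (h : ∀ i x, φ (t i x) = t' i (φ x)) (z : (Fin r → ℤ) → M)
    (m : Fin r → ℤ) : φ (totalDiff p t z m) = totalDiff p t' (fun m' => φ (z m')) m := by
  simp only [totalDiff_apply, map_sum, map_smul, map_periodicMap p (h _)]

lemma partialDiff_mul_self {p : ℕ} {t : Fin r → Module.End ℤ M} (ht : ∀ i, t i ^ p = 1)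
    (i : Fin r) : partialDiff p t i * partialDiff p t i = 0 := by
  ext z m
  have h := LinearMap.congr_fun (periodicMap_mul_pred (ht i) (m i))
    (z (m - Pi.single i 1 - Pi.single i 1))
  rw [Module.End.mul_apply, LinearMap.zero_apply] at h
  simp [partialDiff_apply, h]

lemma partialDiff_anticommute_of_lt {p : ℕ} {t : Fin r → Module.End ℤ M} {i k : Fin r}
    (hc : Commute (t i) (t k)) (hik : i < k) :
    partialDiff p t i * partialDiff p t k + partialDiff p t k * partialDiff p t i = 0 := by
  ext z m
  have hdeg_k : ∑ l ∈ Finset.Iio k, (m l - (Pi.single i 1 : Fin r → ℤ) l)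
      = ∑ l ∈ Finset.Iio k, m l - 1 := by
    simp [Finset.sum_sub_distrib, Pi.single_apply, hik]
  have hdeg_i : ∑ l ∈ Finset.Iio i, (m l - (Pi.single k 1 : Fin r → ℤ) l)
      = ∑ l ∈ Finset.Iio i, m l := by
    simp [Finset.sum_sub_distrib, Pi.single_apply, hik.le]
  have hcomm := LinearMap.congr_fun (commute_periodicMap p hc (m i) (m k)).eq
    (z (m - Pi.single i 1 - Pi.single k 1))
  rw [Module.End.mul_apply, Module.End.mul_apply] at hcomm
  simp only [LinearMap.add_apply, Module.End.mul_apply, Pi.add_apply, LinearMap.zero_apply,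
    Pi.zero_apply, partialDiff_apply, map_smul, hdeg_i, hdeg_k, Pi.sub_apply,
    Pi.single_eq_of_ne hik.ne, Pi.single_eq_of_ne hik.ne', sub_zero]
  rw [sub_right_comm m (Pi.single k 1), hcomm, Int.negOnePow_sub, smul_smul, smul_smul,
    ← add_smul]
  simp [mul_comm]

theorem totalDiff_totalDiff {p : ℕ} {t : Fin r → Module.End ℤ M} (ht : ∀ i, t i ^ p = 1)
    (hc : ∀ i j, Commute (t i) (t j)) (z : (Fin r → ℤ) → M) :
    totalDiff p t (totalDiff p t z) = 0 := by
  have hsq : totalDiff p t * totalDiff p t = 0 := by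
    refine sum_mul_self_eq_zero_of_anticommute _ _ (partialDiff_mul_self ht) fun i k hik => ?_
    rcases hik.lt_or_gt with h | h
    · exact partialDiff_anticommute_of_lt (hc i k) h
    · rw [add_comm]
      exact partialDiff_anticommute_of_lt (hc k i) h
  exact LinearMap.congr_fun hsq z

end TotalDiff

/-! ### Equivariant homotopies modulo `p` -/

section Homotopy

variable {S : Type*} {r p : ℕ} {σ : Fin r → S → S}

/-- The empty simplex, which generates the chains in degree `-1`. -/
abbrev emptySimplex : Chain S := Finsupp.single [] 1

/-- The operators on chains induced by self-maps of the set of vertices. -/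
abbrev chainOps (σ : Fin r → S → S) : Fin r → Module.End ℤ (Chain S) := fun i => chainMap (σ i)

/-- An action of `(ℤ/p)^r` on `S`, given by the commuting maps `σ i` of exponent `p` through which
the standard generators act. -/
structure IsElementaryAction (p : ℕ) (σ : Fin r → S → S) : Prop where
  comm : ∀ i j x, σ i (σ j x) = σ j (σ i x)
  iterate : ∀ i x, (σ i)^[p] x = x

lemma chainMap_pow (f : S → S) (k : ℕ) :
    (chainMap f : Module.End ℤ (Chain S)) ^ k = chainMap f^[k] := by
  induction k with
  | zero => ext l : 2; simp
  | succ k ih => rw [pow_succ, ih]; ext l : 2; simp [Function.iterate_succ]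

lemma IsElementaryAction.chainOps_pow (hσ : IsElementaryAction p σ) (i : Fin r) :
    chainOps σ i ^ p = 1 := by
  rw [chainOps, chainMap_pow, (funext (hσ.iterate i) : (σ i)^[p] = id)]
  ext l : 2
  simp

lemma IsElementaryAction.chainOps_commute (hσ : IsElementaryAction p σ) (i j : Fin r) :
    Commute (chainOps σ i) (chainOps σ j) := by
  have h : chainMap (σ i) ∘ₗ chainMap (σ j) =
      chainMap (σ j) ∘ₗ (chainMap (σ i) : Chain S →ₗ[ℤ] Chain S) := by
    ext l : 2
    simp [Function.comp_def, hσ.comm i j]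
  exact h

lemma boundary_totalDiff (p : ℕ) (σ : Fin r → S → S) (z : (Fin r → ℤ) → Chain S)
    (m : Fin r → ℤ) :
    boundary (totalDiff p (chainOps σ) z m) =
      totalDiff p (chainOps σ) (fun m' => boundary (z m')) m :=
  map_totalDiff p (fun i x => (chainMap_boundary (σ i) x).symm) z m

variable {z h y : (Fin r → ℤ) → Chain S} {c : (Fin r → ℤ) → ℤ}

lemma boundary_sub_totalDiff (hσ : IsElementaryAction p σ) {m : Fin r → ℤ}
    (hc : (p : ℤ) ∣ c m)
    (hz : boundary (z m) = totalDiff p (chainOps σ) z m + c m • emptySimplex)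
    (hhom : ∀ m', ∑ i, m' i = ∑ i, m i - 1 →
      z m' = boundary (h m') + totalDiff p (chainOps σ) h m' + (p : ℤ) • y m') :
    boundary (z m - totalDiff p (chainOps σ) h m) =
      (p : ℤ) • ((c m / p) • emptySimplex + totalDiff p (chainOps σ) y m) := by
  have hbh : totalDiff p (chainOps σ) (fun m' => boundary (h m')) m =
      totalDiff p (chainOps σ) z m - (p : ℤ) • totalDiff p (chainOps σ) y m := by
    rw [totalDiff_congr (z' := z - totalDiff p (chainOps σ) h - (p : ℤ) • y) _ _ fun m' hm' => by
        simp only [Pi.sub_apply, Pi.smul_apply, hhom m' hm']; abel,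
      map_sub, map_sub, map_smul, totalDiff_totalDiff hσ.chainOps_pow hσ.chainOps_commute,
      sub_zero]
    rfl
  rw [map_sub, hz, boundary_totalDiff, hbh, smul_add, smul_smul, Int.mul_ediv_cancel' hc]
  abel

/-- The homotopy is built degree by degree from the contraction by cones over `s₀`. -/
lemma exists_homotopy (hσ : IsElementaryAction p σ) (s₀ : S)
    (hneg : ∀ m, ∑ i, m i < 0 → z m = 0) (n : ℕ)
    (hc : ∀ m, ∑ i, m i < (n : ℤ) → (p : ℤ) ∣ c m)
    (hz : ∀ m, ∑ i, m i < (n : ℤ) →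
      boundary (z m) = totalDiff p (chainOps σ) z m + c m • emptySimplex) :
    ∃ h y : (Fin r → ℤ) → Chain S, ∀ m, ∑ i, m i < (n : ℤ) →
      z m = boundary (h m) + totalDiff p (chainOps σ) h m + (p : ℤ) • y m := by
  induction n with
  | zero => exact ⟨0, 0, fun m hm => by simp [hneg m (by simpa using hm)]⟩
  | succ n ih =>
    obtain ⟨h, y, hhom⟩ :=
      ih (fun m hm => hc m (by push_cast; omega)) fun m hm => hz m (by push_cast; omega)
    let h' : (Fin r → ℤ) → Chain S := fun m =>
      if ∑ i, m i < (n : ℤ) then h m else cone s₀ (z m - totalDiff p (chainOps σ) h m)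
    let y' : (Fin r → ℤ) → Chain S := fun m =>
      if ∑ i, m i < (n : ℤ) then y m
      else cone s₀ ((c m / p) • emptySimplex + totalDiff p (chainOps σ) y m)
    refine ⟨h', y', fun m hm => ?_⟩
    push_cast at hm
    have hDh : totalDiff p (chainOps σ) h' m = totalDiff p (chainOps σ) h m :=
      totalDiff_congr _ _ fun m' hm' => if_pos (by omega)
    by_cases hlt : ∑ i, m i < (n : ℤ)
    · rw [hDh]
      simp only [h', y', if_pos hlt]
      exact hhom m hlt
    · have hstep := boundary_sub_totalDiff hσ (hc m (by push_cast; omega))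
        (hz m (by push_cast; omega)) fun m' hm' => hhom m' (by omega)
      rw [hDh]
      simp only [h', y', if_neg hlt]
      rw [boundary_cone, hstep, map_smul]
      abel

lemma periodicMap_eq_zero_of_invariant {M : Type*} [AddCommGroup M] {t : Module.End ℤ M}
    {α : M →ₗ[ℤ] ZMod p} (hα : ∀ x, α (t x) = α x) (n : ℤ) (x : M) :
    α (periodicMap p t n x) = 0 := by
  rw [map_periodicMap p (t' := 1) hα]
  unfold periodicMap
  split_ifs <;> simp

theorem invariant_cocycle_eq_zero (hσ : IsElementaryAction p σ) (s₀ : S)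
    (hneg : ∀ m, ∑ i, m i < 0 → z m = 0) {n : ℕ}
    (hc : ∀ m, ∑ i, m i < (n : ℤ) → (p : ℤ) ∣ c m)
    (hz : ∀ m, ∑ i, m i < (n : ℤ) →
      boundary (z m) = totalDiff p (chainOps σ) z m + c m • emptySimplex)
    {α : Chain S →ₗ[ℤ] ZMod p} (hα : ∀ x, α (boundary x) = 0)
    (hασ : ∀ i x, α (chainMap (σ i) x) = α x) {m : Fin r → ℤ} (hm : ∑ i, m i < (n : ℤ)) :
    α (z m) = 0 := by
  obtain ⟨h, y, hhom⟩ := exists_homotopy hσ s₀ hneg n hc hz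
  rw [hhom m hm, map_add, map_add, hα, totalDiff_apply, map_sum]
  simp [periodicMap_eq_zero_of_invariant (hασ _)]

end Homotopy

/-! ### Cap products -/

section CapProduct

variable {S : Type*} {r : ℕ}

/-- The augmentation of zero-dimensional chains, extended by zero to the other degrees. -/
def augmentation : Chain S →ₗ[ℤ] ℤ := Finsupp.lapply [] ∘ₗ boundary

/-- The condition on a function of three points to be a simplicial 2-cocycle. -/
def IsCocycle (u : S → S → S → ℤ) : Prop :=
  ∀ a b c d, u b c d - u a c d + u a b d - u a b c = 0

/-- The condition on a 2-cochain to be preserved by the maps `σ i`. -/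
def IsInvariant (σ : Fin r → S → S) (u : S → S → S → ℤ) : Prop :=
  ∀ i x y w, u (σ i x) (σ i y) (σ i w) = u x y w

/-- The cap product of a simplex with a 2-cochain, evaluated on the front face. -/
def capSimplex (u : S → S → S → ℤ) : List S → Chain S
  | x :: y :: w :: l => u x y w • Finsupp.single (w :: l) 1
  | _ => 0

/-- The cap product of chains with a 2-cochain. -/
def cap (u : S → S → S → ℤ) : Chain S →ₗ[ℤ] Chain S := Finsupp.linearCombination ℤ (capSimplex u)

/-- The evaluation on chains of the cup product of a list of 2-cochains, defined by iterated cap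
products. -/
def cupEval : List (S → S → S → ℤ) → Chain S →ₗ[ℤ] ℤ
  | [] => augmentation
  | u :: us => cupEval us ∘ₗ cap u

@[simp] lemma augmentation_single_nil (a : ℤ) :
    augmentation (Finsupp.single ([] : List S) a) = 0 := by
  simp [augmentation]

@[simp] lemma augmentation_single_cons (s : S) (l : List S) :
    augmentation (Finsupp.single (s :: l) 1) = if l = [] then 1 else 0 := by
  have h : cone s (boundary (Finsupp.single l 1)) [] = 0 := by
    rw [cone, Finsupp.lmapDomain_apply, Finsupp.mapDomain_of_notMem_range]
    simp
  simp [augmentation, boundary_single_cons, Finsupp.single_apply, h]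

@[simp] lemma augmentation_boundary (c : Chain S) : augmentation (boundary c) = 0 := by
  simp [augmentation]

lemma augmentation_chainMap (f : S → S) (c : Chain S) :
    augmentation (chainMap f c) = augmentation c := by
  have h : augmentation ∘ₗ chainMap f = (augmentation : Chain S →ₗ[ℤ] ℤ) := by
    ext l : 2
    cases l <;> simp
  exact LinearMap.congr_fun h c

@[simp] lemma cap_single (u : S → S → S → ℤ) (l : List S) :
    cap u (Finsupp.single l 1) = capSimplex u l := by
  simp [cap]

lemma cap_cone_cone_cone (u : S → S → S → ℤ) (x y w : S) (c : Chain S) :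
    cap u (cone x (cone y (cone w c))) = u x y w • cone w c := by
  have h : cap u ∘ₗ cone x ∘ₗ cone y ∘ₗ cone w = u x y w • cone w := by
    ext l : 2
    simp [capSimplex]
  exact LinearMap.congr_fun h c

lemma cap_boundary_single {u : S → S → S → ℤ} (hu : IsCocycle u) (l : List S) :
    cap u (boundary (Finsupp.single l 1)) =
      boundary (capSimplex u l) - augmentation (capSimplex u l) • emptySimplex := by
  match l with
  | [] => simp [capSimplex]
  | [x] => simp [boundary_single_cons, capSimplex]
  | [x, y] => simp [boundary_single_cons, capSimplex]
  | [x, y, w] =>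
    rw [capSimplex, map_smul, map_smul]
    simp [boundary_single_cons, capSimplex]
  | x :: y :: w :: v :: l =>
    have hu' : u y w v - u x w v + u x y v = u x y w := by linarith [hu x y w v]
    simp only [boundary_single_cons, map_sub, cone_single, cap_single, capSimplex,
      cap_cone_cone_cone, map_smul, augmentation_single_cons, reduceCtorEq, if_false,
      smul_zero, zero_smul, sub_zero, smul_sub]
    rw [← hu']
    module

lemma cap_boundary {u : S → S → S → ℤ} (hu : IsCocycle u) (c : Chain S) :
    cap u (boundary c) = boundary (cap u c) - augmentation (cap u c) • emptySimplex := by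
  have h : cap u ∘ₗ boundary = boundary ∘ₗ cap u -
      LinearMap.toSpanSingleton ℤ (Chain S) emptySimplex ∘ₗ augmentation ∘ₗ cap u := by
    ext l : 2
    simpa using cap_boundary_single hu l
  exact LinearMap.congr_fun h c

lemma cap_chainMap {u : S → S → S → ℤ} {f : S → S}
    (hu : ∀ x y w, u (f x) (f y) (f w) = u x y w) (c : Chain S) :
    cap u (chainMap f c) = chainMap f (cap u c) := by
  have h : cap u ∘ₗ chainMap f = chainMap f ∘ₗ cap u := by
    ext l : 2
    match l with
    | [] | [x] | [x, y] => simp [capSimplex]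
    | x :: y :: w :: l => simp [capSimplex, hu]
  exact LinearMap.congr_fun h c

lemma cupEval_single_nil (us : List (S → S → S → ℤ)) :
    cupEval us emptySimplex = 0 := by
  cases us <;> simp [cupEval, capSimplex]

lemma cupEval_boundary {us : List (S → S → S → ℤ)} (hus : ∀ u ∈ us, IsCocycle u)
    (c : Chain S) : cupEval us (boundary c) = 0 := by
  induction us generalizing c with
  | nil => exact augmentation_boundary c
  | cons u us ih =>
    obtain ⟨hu, hus⟩ := List.forall_mem_cons.1 hus
    rw [cupEval, LinearMap.comp_apply, cap_boundary hu, map_sub, ih hus, map_smul,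
      cupEval_single_nil, smul_zero, sub_zero]

lemma cupEval_chainMap {σ : Fin r → S → S} {us : List (S → S → S → ℤ)}
    (hus : ∀ u ∈ us, IsInvariant σ u) (i : Fin r) (c : Chain S) :
    cupEval us (chainMap (σ i) c) = cupEval us c := by
  induction us generalizing c with
  | nil => exact augmentation_chainMap _ c
  | cons u us ih =>
    obtain ⟨hu, hus⟩ := List.forall_mem_cons.1 hus
    rw [cupEval, LinearMap.comp_apply, cap_chainMap (hu i), ih hus]
    rfl

lemma exists_ne_zero_of_cupEval_single_ne_zero {us : List (S → S → S → ℤ)} {l : List S}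
    (h : cupEval us (Finsupp.single l 1) ≠ 0) :
    ∀ u ∈ us, ∃ x ∈ l, ∃ y ∈ l, ∃ w ∈ l, u x y w ≠ 0 := by
  induction us generalizing l with
  | nil => simp
  | cons u us ih =>
    rw [cupEval, LinearMap.comp_apply, cap_single] at h
    match l, h with
    | [], h | [x], h | [x, y], h => simp [capSimplex] at h
    | x :: y :: w :: l, h =>
      rw [capSimplex, map_smul, smul_ne_zero_iff] at h
      refine List.forall_mem_cons.2
        ⟨⟨x, by simp, y, by simp, w, by simp, h.1⟩, fun v hv => ?_⟩
      have hsub : ∀ {x'}, x' ∈ w :: l → x' ∈ x :: y :: w :: l := fun hx =>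
        List.mem_cons_of_mem _ (List.mem_cons_of_mem _ hx)
      obtain ⟨x', hx, y', hy, w', hw, hne⟩ := ih h.2 v hv
      exact ⟨x', hsub hx, y', hsub hy, w', hsub hw, hne⟩

lemma exists_ne_zero_of_cupEval_ne_zero {us : List (S → S → S → ℤ)} {c : Chain S}
    {P : List S → Prop} (hc : c ∈ supportedOn P) (h : cupEval us c ≠ 0) :
    ∃ l, P l ∧ ∀ u ∈ us, ∃ x ∈ l, ∃ y ∈ l, ∃ w ∈ l, u x y w ≠ 0 := by
  by_contra! hvanish
  refine h (eq_of_mem_supportedOn (ψ := 0) (fun l hl => ?_) hc)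
  by_contra hne
  obtain ⟨u, hu, hzero⟩ := hvanish l hl
  obtain ⟨x, hx, y, hy, w, hw, hxyw⟩ := exists_ne_zero_of_cupEval_single_ne_zero hne u hu
  exact hxyw (hzero x hx y hy w hw)

end CapProduct

/-! ### Cup products on resolutions -/

section Resolution

variable {S : Type*} {r p n : ℕ} {σ : Fin r → S → S} {z : (Fin r → ℤ) → Chain S}

/-- In degrees below `n`, the equations saying that `z m` is the image of the generator of
multidegree `m` under an augmented equivariant chain map from the tensor product of `r` periodic
resolutions to the chains on `S`. -/
structure IsResolutionMap (p : ℕ) (σ : Fin r → S → S) (n : ℕ) (z : (Fin r → ℤ) → Chain S) :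
    Prop where
  mem : ∀ m, z m ∈ supportedOn fun l => (∀ i, 0 ≤ m i) ∧ (l.length : ℤ) = ∑ i, m i + 1
  boundary_eq : ∀ m, ∑ i, m i < (n : ℤ) →
    boundary (z m) =
      totalDiff p (chainOps σ) z m + (if m = 0 then 1 else 0 : ℤ) • emptySimplex

lemma IsResolutionMap.eq_zero (hz : IsResolutionMap p σ n z) {m : Fin r → ℤ} {i : Fin r}
    (hm : m i < 0) : z m = 0 := by
  ext l
  by_contra h
  exact absurd ((mem_supportedOn.1 (hz.mem m) l h).1 i) (not_le.2 hm)

lemma IsResolutionMap.eq_zero_of_sum_neg (hz : IsResolutionMap p σ n z) {m : Fin r → ℤ}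
    (hm : ∑ i, m i < 0) : z m = 0 := by
  obtain ⟨i, -, hi⟩ := Finset.exists_lt_of_sum_lt (s := Finset.univ) (f := m) (g := 0) (by simpa)
  exact hz.eq_zero hi

lemma IsResolutionMap.augmentation_eq (hz : IsResolutionMap p σ n z) (hn : 0 < n)
    (m : Fin r → ℤ) : augmentation (z m) = if m = 0 then 1 else 0 := by
  split_ifs with h
  · subst h
    have hD : totalDiff p (chainOps σ) z 0 = 0 := by
      rw [totalDiff_apply]
      exact Finset.sum_eq_zero fun i _ => by rw [hz.eq_zero (i := i) (by simp)]; simp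
    rw [augmentation, LinearMap.comp_apply, hz.boundary_eq 0 (by simpa using hn), hD]
    simp
  · refine eq_of_mem_supportedOn (ψ := 0) (fun l hl => ?_) (hz.mem m)
    match l, hl with
    | [], _ => simp
    | [x], ⟨hnonneg, hlen⟩ =>
      refine absurd (funext fun i => ?_) h
      exact (Finset.sum_eq_zero_iff_of_nonneg fun i _ => hnonneg i).1
        (by simpa using hlen) i (Finset.mem_univ i)
    | x :: y :: l, _ => simp

/-- The shift of a family by degree `2` in the `j`-th direction. -/
def shift {M : Type*} (j : Fin r) (z : (Fin r → ℤ) → M) : (Fin r → ℤ) → M :=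
  fun m => z (m - Pi.single j 2)

@[simp] lemma shift_apply {M : Type*} (j : Fin r) (z : (Fin r → ℤ) → M) (m : Fin r → ℤ) :
    shift j z m = z (m - Pi.single j 2) :=
  rfl

lemma totalDiff_shift {M : Type*} [AddCommGroup M] (p : ℕ) (t : Fin r → Module.End ℤ M)
    (z : (Fin r → ℤ) → M) (j : Fin r) :
    totalDiff p t (shift j z) = shift j (totalDiff p t z) := by
  ext1 m
  rw [shift_apply, totalDiff_apply, totalDiff_apply]
  refine Finset.sum_congr rfl fun i _ => ?_
  have hsign : (∑ l ∈ Finset.Iio i, (m - Pi.single j 2 : Fin r → ℤ) l).negOnePow =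
      (∑ l ∈ Finset.Iio i, m l).negOnePow := by
    have hsum : ∑ l ∈ Finset.Iio i, (m - Pi.single j 2 : Fin r → ℤ) l =
        ∑ l ∈ Finset.Iio i, m l - if j ∈ Finset.Iio i then 2 else 0 := by
      simp [Finset.sum_sub_distrib, Pi.single_apply]
    rw [hsum, Int.negOnePow_sub]
    split_ifs
    · rw [Int.negOnePow_even 2 even_two, mul_one]
    · rw [Int.negOnePow_zero, mul_one]
  have hparity : Even ((m - Pi.single j 2 : Fin r → ℤ) i) ↔ Even (m i) := by
    rcases eq_or_ne i j with rfl | hij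
    · simp
    · simp [hij]
  rw [hsign, shift_apply, sub_right_comm]
  simp only [periodicMap, hparity]

lemma IsResolutionMap.boundary_shift (hz : IsResolutionMap p σ n z) (j : Fin r)
    {m : Fin r → ℤ} (hm : ∑ i, m i < (n : ℤ)) :
    boundary (shift j z m) = totalDiff p (chainOps σ) (shift j z) m +
      (if m = Pi.single j 2 then 1 else 0 : ℤ) • emptySimplex := by
  have hlt : ∑ i, (m - Pi.single j 2 : Fin r → ℤ) i < (n : ℤ) := by
    simp only [Pi.sub_apply, Finset.sum_sub_distrib, Finset.sum_pi_single', Finset.mem_univ,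
      if_true]
    omega
  rw [totalDiff_shift, shift_apply, shift_apply, hz.boundary_eq _ hlt]
  simp only [sub_eq_zero]

lemma IsResolutionMap.boundary_cap (hz : IsResolutionMap p σ n z) {u : S → S → S → ℤ}
    (hu : IsCocycle u) (huσ : IsInvariant σ u) {m : Fin r → ℤ} (hm : ∑ i, m i < (n : ℤ)) :
    boundary (cap u (z m)) = totalDiff p (chainOps σ) (fun m' => cap u (z m')) m +
      augmentation (cap u (z m)) • emptySimplex := by
  have h := cap_boundary hu (z m)
  have hnil : cap u emptySimplex = 0 := by simp [capSimplex]
  rw [hz.boundary_eq m hm, map_add, map_smul, hnil, smul_zero, add_zero,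
    map_totalDiff p fun i x => cap_chainMap (huσ i) x] at h
  rw [h, sub_add_cancel]

/-- A 2-cochain `u` is an invariant cocycle whose class modulo `p` is the linear form with
coefficients `a`: its values on the resolution vanish in the mixed multidegrees of total degree
two. -/
structure IsLinearCocycle (p : ℕ) (σ : Fin r → S → S) (n : ℕ) (z : (Fin r → ℤ) → Chain S)
    (u : S → S → S → ℤ) (a : Fin r → ℤ) : Prop where
  cocycle : IsCocycle u
  invariant : IsInvariant σ u
  dvd_augmentation_cap_sub : ∀ m, ∑ i, m i < (n : ℤ) →
    (p : ℤ) ∣ augmentation (cap u (z m)) - ∑ i, a i * if m = Pi.single i 2 then 1 else 0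

/-- The family `m ↦ cap u (z m) - ∑ i, a i • z (m - 2eᵢ)` has augmentation divisible by `p`, so
every invariant cocycle modulo `p` vanishes on it. -/
lemma IsResolutionMap.cupEval_cons (hσ : IsElementaryAction p σ) (s₀ : S)
    (hz : IsResolutionMap p σ n z) {u : S → S → S → ℤ} {a : Fin r → ℤ}
    (hu : IsLinearCocycle p σ n z u a) {us : List (S → S → S → ℤ)}
    (hus : ∀ v ∈ us, IsCocycle v) (husσ : ∀ v ∈ us, IsInvariant σ v)
    {m : Fin r → ℤ} (hm : ∑ i, m i < (n : ℤ)) :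
    (cupEval (u :: us) (z m) : ZMod p) =
      ∑ i, (a i : ZMod p) * (cupEval us (z (m - Pi.single i 2)) : ZMod p) := by
  let w : (Fin r → ℤ) → Chain S := (fun m => cap u (z m)) - ∑ i, a i • shift i z
  have hneg : ∀ m, ∑ i, m i < 0 → w m = 0 := by
    intro m hm
    have hshift : ∀ i, shift i z m = 0 := fun i => hz.eq_zero_of_sum_neg (by
      simp only [Pi.sub_apply, Finset.sum_sub_distrib, Finset.sum_pi_single', Finset.mem_univ,
        if_true]
      omega)
    simp [w, hz.eq_zero_of_sum_neg hm, -shift_apply, hshift]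
  have hw : ∀ m, ∑ i, m i < (n : ℤ) → boundary (w m) = totalDiff p (chainOps σ) w m +
      (augmentation (cap u (z m)) - ∑ i, a i * if m = Pi.single i 2 then 1 else 0) •
        emptySimplex := by
    intro m hm
    simp only [w, Pi.sub_apply, Finset.sum_apply, Pi.smul_apply, map_sub, map_sum, map_smul,
      hz.boundary_cap hu.cocycle hu.invariant hm, hz.boundary_shift _ hm, smul_add,
      Finset.sum_add_distrib, sub_smul, Finset.sum_smul, smul_smul]
    abel
  have hvanish := invariant_cocycle_eq_zero hσ s₀ hneg hu.dvd_augmentation_cap_sub hw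
    (α := (Int.castAddHom (ZMod p)).toIntLinearMap ∘ₗ cupEval us)
    (fun x => by simp [cupEval_boundary hus]) (fun i x => by simp [cupEval_chainMap husσ]) hm
  simpa [w, sub_eq_zero, cupEval] using hvanish

/-- The linear form with the given integral coefficients, reduced modulo `p`. -/
def linForm (p : ℕ) (a : Fin r → ℤ) : MvPolynomial (Fin r) (ZMod p) :=
  ∑ i, MvPolynomial.C (a i : ZMod p) * MvPolynomial.X i

lemma linForm_isHomogeneous (p : ℕ) (a : Fin r → ℤ) : (linForm p a).IsHomogeneous 1 :=
  MvPolynomial.IsHomogeneous.sum _ _ _ fun i _ => by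
    simpa using (MvPolynomial.isHomogeneous_C (Fin r) (a i : ZMod p)).mul
      (MvPolynomial.isHomogeneous_X (ZMod p) i)

lemma linForm_ne_zero {a : Fin r → ℤ} (ha : ∃ i, (a i : ZMod p) ≠ 0) : linForm p a ≠ 0 := by
  obtain ⟨i, hi⟩ := ha
  have hcoeff : (linForm p a).coeff (Finsupp.single i 1) = a i := by
    simp only [linForm, MvPolynomial.coeff_sum, MvPolynomial.coeff_C_mul, MvPolynomial.coeff_X]
    simp [Finsupp.single_left_inj]
  intro h
  exact hi (by rw [← hcoeff, h, MvPolynomial.coeff_zero])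

lemma coeff_linForm_mul (a : Fin r → ℤ) (P : MvPolynomial (Fin r) (ZMod p)) (k : Fin r →₀ ℕ) :
    (linForm p a * P).coeff k =
      ∑ i, (a i : ZMod p) * if k i = 0 then 0 else P.coeff (k - Finsupp.single i 1) := by
  rw [linForm, Finset.sum_mul, MvPolynomial.coeff_sum]
  refine Finset.sum_congr rfl fun i _ => ?_
  rw [mul_assoc, MvPolynomial.coeff_C_mul, MvPolynomial.coeff_X_mul']
  simp only [Finsupp.mem_support_iff, ite_not]

lemma two_mul_sub_single {k : Fin r →₀ ℕ} {i : Fin r} (hi : k i ≠ 0) :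
    (fun j => 2 * (k j : ℤ)) - Pi.single i 2 =
      fun j => 2 * ((k - Finsupp.single i 1 : Fin r →₀ ℕ) j : ℤ) := by
  ext j
  rcases eq_or_ne j i with rfl | hj
  · simp only [Pi.sub_apply, Pi.single_eq_same, Finsupp.coe_tsub, Finsupp.single_eq_same]
    omega
  · simp [hj]

theorem IsResolutionMap.cupEval_eq_coeff (hσ : IsElementaryAction p σ) (s₀ : S)
    (hz : IsResolutionMap p σ n z) {ws : List ((S → S → S → ℤ) × (Fin r → ℤ))}
    (hws : ∀ w ∈ ws, IsLinearCocycle p σ n z w.1 w.2) (k : Fin r →₀ ℕ)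
    (hk : ∑ i, 2 * (k i : ℤ) < n) :
    (cupEval (ws.map Prod.fst) (z fun i => 2 * (k i : ℤ)) : ZMod p) =
      MvPolynomial.coeff k (ws.map fun w => linForm p w.2).prod := by
  induction ws generalizing k with
  | nil =>
    have hn : 0 < n := by
      have : (0 : ℤ) ≤ ∑ i, 2 * (k i : ℤ) := Finset.sum_nonneg fun i _ => by positivity
      omega
    have hk0 : (fun i => 2 * (k i : ℤ)) = 0 ↔ 0 = k := by
      rw [eq_comm (a := (0 : Fin r →₀ ℕ)), funext_iff, Finsupp.ext_iff]
      simp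
    simp [cupEval, hz.augmentation_eq hn, MvPolynomial.coeff_one, hk0]
  | cons w ws ih =>
    obtain ⟨hw, hws⟩ := List.forall_mem_cons.1 hws
    rw [List.map_cons, hz.cupEval_cons hσ s₀ hw
        (List.forall_mem_map.2 fun v hv => (hws v hv).cocycle)
        (List.forall_mem_map.2 fun v hv => (hws v hv).invariant) hk,
      List.map_cons, List.prod_cons, coeff_linForm_mul]
    refine Finset.sum_congr rfl fun i _ => ?_
    split_ifs with hi
    · rw [hz.eq_zero (i := i) (by simp [hi])]
      simp
    · rw [two_mul_sub_single hi, ih hws]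
      exact lt_of_le_of_lt (Finset.sum_le_sum fun j _ => by simp) hk

lemma isHomogeneous_prod_linForm (p : ℕ) (as : List (Fin r → ℤ)) :
    (as.map (linForm p)).prod.IsHomogeneous as.length := by
  induction as with
  | nil => simpa using MvPolynomial.isHomogeneous_one (Fin r) (ZMod p)
  | cons a as ih =>
    rw [List.map_cons, List.prod_cons, List.length_cons, add_comm]
    exact (linForm_isHomogeneous p a).mul ih

/-- The product of the corresponding linear forms is nonzero, since polynomials over a field form
a domain. -/
theorem IsResolutionMap.exists_cupEval_ne_zero [Fact p.Prime] (hσ : IsElementaryAction p σ)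
    (s₀ : S) (hz : IsResolutionMap p σ n z) {ws : List ((S → S → S → ℤ) × (Fin r → ℤ))}
    (hws : ∀ w ∈ ws, IsLinearCocycle p σ n z w.1 w.2)
    (ha : ∀ w ∈ ws, ∃ i, (w.2 i : ZMod p) ≠ 0) (hn : 2 * ws.length < n) :
    ∃ m, ∑ i, m i = (2 * ws.length : ℤ) ∧ cupEval (ws.map Prod.fst) (z m) ≠ 0 := by
  have hne : (ws.map fun w => linForm p w.2).prod ≠ 0 := by
    rw [Ne, List.prod_eq_zero_iff, List.mem_map]
    rintro ⟨w, hw, hw0⟩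
    exact linForm_ne_zero (ha w hw) hw0
  obtain ⟨k, hk⟩ := MvPolynomial.ne_zero_iff.1 hne
  have hdeg : ∑ i, 2 * (k i : ℤ) = 2 * ws.length := by
    have hhom := isHomogeneous_prod_linForm p (ws.map Prod.snd)
    rw [List.map_map, List.length_map] at hhom
    have hweight := hhom hk
    rw [Pi.one_def, ← Finsupp.degree_eq_weight_one, Finsupp.degree_eq_sum] at hweight
    rw [← Finset.mul_sum, ← hweight, Nat.cast_sum]
  refine ⟨fun i => 2 * (k i : ℤ), hdeg, fun h0 => hk ?_⟩
  rw [← hz.cupEval_eq_coeff hσ s₀ hws k (by rw [hdeg]; exact_mod_cast hn), h0, Int.cast_zero]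

end Resolution

/-! ### Winding cocycles -/

section Winding

variable {S : Type*} {r p n : ℕ} {σ : Fin r → S → S} {z : (Fin r → ℤ) → Chain S} {W : S → ℂ}

/-- The angle in `(-π, π]` swept by a nonvanishing function from `x` to `y`. -/
def sweep (W : S → ℂ) (x y : S) : ℝ := (W y / W x).arg

/-- The winding number of a nonvanishing function around a triangle. The quotient is already an
integer; rounding serves only to land in `ℤ`. -/
def wind (W : S → ℂ) (x y w : S) : ℤ :=
  round ((sweep W y w - sweep W x w + sweep W x y) / (2 * Real.pi))

/-- `sweep`, as a 1-cochain on simplices of all dimensions. -/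
def sweepSimplex (W : S → ℂ) : List S → ℝ
  | [x, y] => sweep W x y
  | _ => 0

/-- The linear extension to chains of the angle swept along edges. -/
def sweepMap (W : S → ℂ) : Chain S →ₗ[ℤ] ℝ := Finsupp.linearCombination ℤ (sweepSimplex W)

/-- The argument of a function at vertices, as a 0-cochain on simplices of all dimensions. -/
def argSimplex (W : S → ℂ) : List S → Real.Angle
  | [x] => (W x).arg
  | _ => 0

/-- The linear extension to chains of the argument at vertices. -/
def argMap (W : S → ℂ) : Chain S →ₗ[ℤ] Real.Angle := Finsupp.linearCombination ℤ (argSimplex W)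

@[simp] lemma sweepMap_single (W : S → ℂ) (l : List S) :
    sweepMap W (Finsupp.single l 1) = sweepSimplex W l := by
  simp [sweepMap]

@[simp] lemma argMap_single (W : S → ℂ) (l : List S) :
    argMap W (Finsupp.single l 1) = argSimplex W l := by
  simp [argMap]

lemma sweepMap_cone_cone_cone (W : S → ℂ) (x y w : S) (c : Chain S) :
    sweepMap W (cone x (cone y (cone w c))) = 0 := by
  have h : sweepMap W ∘ₗ cone x ∘ₗ cone y ∘ₗ cone w = 0 := by
    ext l : 2
    simp [sweepSimplex]
  exact LinearMap.congr_fun h c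

lemma argMap_cone_cone (W : S → ℂ) (x y : S) (c : Chain S) :
    argMap W (cone x (cone y c)) = 0 := by
  have h : argMap W ∘ₗ cone x ∘ₗ cone y = 0 := by
    ext l : 2
    simp [argSimplex]
  exact LinearMap.congr_fun h c

lemma coe_sweep (hW : ∀ x, W x ≠ 0) (x y : S) :
    (sweep W x y : Real.Angle) = ((W y).arg : Real.Angle) - ((W x).arg : Real.Angle) :=
  Complex.arg_div_coe_angle (hW y) (hW x)

lemma two_pi_mul_wind (hW : ∀ x, W x ≠ 0) (x y w : S) :
    2 * Real.pi * wind W x y w = sweep W y w - sweep W x w + sweep W x y := by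
  have hangle : ((sweep W y w - sweep W x w + sweep W x y : ℝ) : Real.Angle) = (0 : ℝ) := by
    rw [Real.Angle.coe_add, Real.Angle.coe_sub, coe_sweep hW, coe_sweep hW, coe_sweep hW,
      Real.Angle.coe_zero]
    abel
  obtain ⟨k, hk⟩ := Real.Angle.angle_eq_iff_two_pi_dvd_sub.1 hangle
  rw [sub_zero] at hk
  rw [wind, hk, mul_div_cancel_left₀ _ Real.two_pi_pos.ne', round_intCast]

lemma isCocycle_wind (hW : ∀ x, W x ≠ 0) : IsCocycle (wind W) := by
  intro x y w v
  have h : 2 * Real.pi *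
      ((wind W y w v - wind W x w v + wind W x y v - wind W x y w : ℤ) : ℝ) = 0 := by
    push_cast
    rw [mul_sub, mul_add, mul_sub]
    simp only [two_pi_mul_wind hW]
    ring
  exact_mod_cast (mul_eq_zero.1 h).resolve_left Real.two_pi_pos.ne'

lemma sweep_comp {f : S → S} {ζ : ℂ} (hζ : ζ ≠ 0) (hf : ∀ x, W (f x) = ζ * W x) (x y : S) :
    sweep W (f x) (f y) = sweep W x y := by
  rw [sweep, hf, hf, mul_div_mul_left _ _ hζ, sweep]

lemma sweepMap_chainMap {f : S → S} {ζ : ℂ} (hζ : ζ ≠ 0) (hf : ∀ x, W (f x) = ζ * W x)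
    (c : Chain S) : sweepMap W (chainMap f c) = sweepMap W c := by
  have h : sweepMap W ∘ₗ chainMap f = sweepMap W := by
    ext l : 2
    match l with
    | [] | [x] => simp [sweepSimplex]
    | [x, y] => simp [sweepSimplex, sweep_comp hζ hf]
    | x :: y :: w :: l => simp [sweepSimplex]
  exact LinearMap.congr_fun h c

lemma argMap_chainMap (hW : ∀ x, W x ≠ 0) {f : S → S} {ζ : ℂ} (hζ : ζ ≠ 0)
    (hf : ∀ x, W (f x) = ζ * W x) (c : Chain S) :
    argMap W (chainMap f c) = argMap W c + augmentation c • (ζ.arg : Real.Angle) := by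
  have h : argMap W ∘ₗ chainMap f = argMap W +
      LinearMap.toSpanSingleton ℤ Real.Angle (ζ.arg : Real.Angle) ∘ₗ augmentation := by
    ext l : 2
    match l with
    | [] => simp [argSimplex]
    | [x] => simp [argSimplex, hf, Complex.arg_mul_coe_angle hζ (hW x), add_comm]
    | x :: y :: l => simp [argSimplex]
  exact LinearMap.congr_fun h c

lemma two_pi_mul_augmentation_cap_wind (hW : ∀ x, W x ≠ 0) (c : Chain S) :
    2 * Real.pi * (augmentation (cap (wind W) c) : ℤ) = sweepMap W (boundary c) := by
  have h : (AddMonoidHom.mulLeft (2 * Real.pi)).toIntLinearMap ∘ₗ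
      (Int.castAddHom ℝ).toIntLinearMap ∘ₗ augmentation ∘ₗ cap (wind W) =
        sweepMap W ∘ₗ boundary := by
    ext l : 2
    match l with
    | [] | [x] | [x, y] => simp [boundary_single_cons, capSimplex, sweepSimplex]
    | [x, y, w] =>
      have hw := two_pi_mul_wind hW x y w
      simp only [LinearMap.comp_apply, Finsupp.lsingle_apply, cap_single, capSimplex, map_smul,
        augmentation_single_cons, boundary_single_cons, map_sub, cone_single, sweepMap_single,
        sweepSimplex, boundary_single_nil, map_zero, AddMonoidHom.coe_toIntLinearMap,
        if_true, Int.coe_castAddHom, AddMonoidHom.coe_mulLeft, zsmul_eq_mul, Int.cast_id, mul_one,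
        sub_zero]
      linarith
    | x :: y :: w :: v :: l =>
      simp only [LinearMap.comp_apply, Finsupp.lsingle_apply, cap_single, capSimplex, map_smul,
        augmentation_single_cons, boundary_single_cons, map_sub, cone_single, sweepMap_single,
        sweepSimplex, sweepMap_cone_cone_cone]
      simp
  exact LinearMap.congr_fun h c

lemma coe_sweepMap (hW : ∀ x, W x ≠ 0) (c : Chain S) :
    (sweepMap W c : Real.Angle) = argMap W (boundary c) := by
  have h : Real.Angle.coeHom.toIntLinearMap ∘ₗ sweepMap W = argMap W ∘ₗ boundary := by
    ext l : 2
    match l with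
    | [] | [x] => simp [boundary_single_cons, argSimplex, sweepSimplex]
    | [x, y] => simp [boundary_single_cons, argSimplex, sweepSimplex, coe_sweep hW]
    | x :: y :: w :: l =>
      simp [boundary_single_cons, argSimplex, sweepSimplex, argMap_cone_cone]
  exact LinearMap.congr_fun h c

lemma exists_eq_single_of_sum_eq_one {m : Fin r → ℤ} (hm : ∀ i, 0 ≤ m i)
    (hsum : ∑ i, m i = 1) : ∃ i, m = Pi.single i 1 := by
  obtain ⟨i, -, hi⟩ := Finset.exists_lt_of_sum_lt (s := Finset.univ) (f := 0) (g := m)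
    (by simp [hsum])
  have hrest : ∑ j ∈ Finset.univ.erase i, m j = 1 - m i := by
    rw [← hsum, ← Finset.add_sum_erase _ _ (Finset.mem_univ i), add_sub_cancel_left]
  have hrest_nonneg : 0 ≤ ∑ j ∈ Finset.univ.erase i, m j := Finset.sum_nonneg fun j _ => hm j
  have hmi : m i = 1 := by
    have : 0 < m i := hi
    omega
  refine ⟨i, funext fun j => ?_⟩
  rcases eq_or_ne j i with rfl | hj
  · rw [hmi, Pi.single_eq_same]
  · rw [Pi.single_eq_of_ne hj]
    exact (Finset.sum_eq_zero_iff_of_nonneg fun j _ => hm j).1 (by rw [hrest, hmi, sub_self]) j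
      (Finset.mem_erase.2 ⟨hj, Finset.mem_univ j⟩)

lemma IsResolutionMap.sweepMap_eq_zero (hz : IsResolutionMap p σ n z) {m : Fin r → ℤ}
    (hm : ∀ i, m ≠ Pi.single i 1) : sweepMap W (z m) = 0 := by
  refine eq_of_mem_supportedOn (ψ := 0) (fun l hl => ?_) (hz.mem m)
  match l, hl with
  | [], _ | [x], _ | x :: y :: w :: l, _ => simp [sweepSimplex]
  | [x, y], ⟨hnonneg, hlen⟩ =>
    rw [List.length_cons, List.length_singleton] at hlen
    push_cast at hlen
    obtain ⟨i, hi⟩ := exists_eq_single_of_sum_eq_one hnonneg (by omega)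
    exact absurd hi (hm i)

lemma sum_Iio_single (i : Fin r) (a : ℤ) :
    ∑ l ∈ Finset.Iio i, (Pi.single i a : Fin r → ℤ) l = 0 :=
  Finset.sum_eq_zero fun _ hj => Pi.single_eq_of_ne (Finset.mem_Iio.1 hj).ne _

lemma IsResolutionMap.totalDiff_single_one (hz : IsResolutionMap p σ n z) (i : Fin r) :
    totalDiff p (chainOps σ) z (Pi.single i 1) = chainMap (σ i) (z 0) - z 0 := by
  rw [totalDiff_apply, Finset.sum_eq_single i]
  · rw [sum_Iio_single, Pi.single_eq_same, sub_self, periodicMap, if_neg (by decide)]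
    simp
  · intro j _ hji
    rw [hz.eq_zero (i := j) (by simp [hji]), map_zero, smul_zero]
  · simp

variable {a : Fin r → ℤ}

/-- If `m - eᵢ` is a unit vector `eⱼ` and `mᵢ` is even then `m = 2eᵢ`, so no other multidegree
contributes. -/
lemma IsResolutionMap.two_pi_mul_augmentation_cap_wind (hz : IsResolutionMap p σ n z)
    (hW : ∀ x, W x ≠ 0) (hσW : ∀ i c, sweepMap W (chainMap (σ i) c) = sweepMap W c)
    {m : Fin r → ℤ} (hm : ∑ i, m i < (n : ℤ)) :
    2 * Real.pi * (augmentation (cap (wind W) (z m)) : ℤ) =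
      ∑ i, if m = Pi.single i 2 then p * sweepMap W (z (Pi.single i 1)) else 0 := by
  have hnorm : ∀ i (k : ℤ) c, sweepMap W (periodicMap p (chainOps σ i) k c) =
      if Even k then p * sweepMap W c else 0 := by
    intro i k c
    rw [map_periodicMap p (t' := 1) (hσW i)]
    unfold periodicMap
    split_ifs <;> simp
  have hnil : sweepMap W emptySimplex = 0 := by simp [sweepSimplex]
  rw [SkeletonTverberg.two_pi_mul_augmentation_cap_wind hW, hz.boundary_eq m hm, map_add,
    map_smul, hnil, smul_zero, add_zero, totalDiff_apply, map_sum]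
  refine Finset.sum_congr rfl fun i _ => ?_
  rw [map_smul, hnorm]
  by_cases h2 : m = Pi.single i 2
  · subst h2
    rw [if_pos rfl, sum_Iio_single, Pi.single_eq_same, if_pos even_two, ← Pi.single_sub]
    simp
  · rw [if_neg h2, ite_eq_right_iff.2 fun heven => ?_, smul_zero]
    rw [hz.sweepMap_eq_zero, mul_zero]
    intro j hj
    have hm' : m = Pi.single i 1 + Pi.single j 1 := by rw [← hj]; abel
    rcases eq_or_ne i j with rfl | hij
    · exact h2 (by rw [hm', ← Pi.single_add, one_add_one_eq_two])
    · rw [hm'] at heven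
      simp [hij] at heven

lemma IsResolutionMap.exists_sweepMap_eq (hz : IsResolutionMap p σ n z) (hW : ∀ x, W x ≠ 0)
    (hσW : ∀ i x, W (σ i x) = Complex.exp ((2 * Real.pi * a i / p : ℝ) * Complex.I) * W x)
    (hn : 1 < n) (i : Fin r) :
    ∃ k : ℤ, sweepMap W (z (Pi.single i 1)) = 2 * Real.pi * a i / p + 2 * Real.pi * k := by
  set θ : ℝ := 2 * Real.pi * a i / p
  have harg : ((Complex.exp (θ * Complex.I)).arg : Real.Angle) = θ := by
    have h := Complex.arg_cos_add_sin_mul_I_coe_angle (θ : Real.Angle)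
    rwa [Real.Angle.cos_coe, Real.Angle.sin_coe, Complex.ofReal_cos, Complex.ofReal_sin,
      ← Complex.exp_mul_I] at h
  have hangle : (sweepMap W (z (Pi.single i 1)) : Real.Angle) = θ := by
    rw [coe_sweepMap hW, hz.boundary_eq _ (by simpa using hn), if_neg (by simp), zero_smul,
      add_zero, hz.totalDiff_single_one, map_sub,
      argMap_chainMap hW (Complex.exp_ne_zero _) (hσW i), hz.augmentation_eq (by omega),
      if_pos rfl, harg, one_smul, add_sub_cancel_left]
  obtain ⟨k, hk⟩ := Real.Angle.angle_eq_iff_two_pi_dvd_sub.1 hangle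
  exact ⟨k, by linarith⟩

theorem IsResolutionMap.isLinearCocycle_wind (hp : p ≠ 0) (hz : IsResolutionMap p σ n z)
    (hW : ∀ x, W x ≠ 0)
    (hσW : ∀ i x, W (σ i x) = Complex.exp ((2 * Real.pi * a i / p : ℝ) * Complex.I) * W x) :
    IsLinearCocycle p σ n z (wind W) a where
  cocycle := isCocycle_wind hW
  invariant i x y w := by
    simp only [wind, sweep_comp (Complex.exp_ne_zero _) (hσW i)]
  dvd_augmentation_cap_sub m hm := by
    have hterm : ∀ i, ∃ k : ℤ,
        (if m = Pi.single i 2 then p * sweepMap W (z (Pi.single i 1)) else 0) =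
          2 * Real.pi * ((a i * if m = Pi.single i 2 then 1 else 0) + p * k : ℤ) := by
      intro i
      split_ifs with h2
      · have hn : (2 : ℤ) < n := by simpa [h2] using hm
        obtain ⟨k, hk⟩ := hz.exists_sweepMap_eq hW hσW (by omega) i
        have hp' : (p : ℝ) ≠ 0 := Nat.cast_ne_zero.2 hp
        exact ⟨k, by rw [hk]; push_cast; field_simp⟩
      · exact ⟨0, by simp⟩
    choose k hk using hterm
    have hval := hz.two_pi_mul_augmentation_cap_wind hW
      (fun i c => sweepMap_chainMap (Complex.exp_ne_zero _) (hσW i) c) hm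
    simp only [hk, ← Finset.mul_sum, ← Int.cast_sum] at hval
    rw [Int.cast_inj.1 (mul_left_cancel₀ Real.two_pi_pos.ne' hval), Finset.sum_add_distrib,
      add_sub_cancel_left, ← Finset.mul_sum]
    exact dvd_mul_right _ _

end Winding

/-! ### Resolution maps into joins of the group -/

section Join

variable {S : Type*} {r p n : ℕ} {σ : Fin r → S → S} {z : (Fin r → ℤ) → Chain S}

/-- The cycle in degree `m` that has to be filled in order to extend the family `z`. -/
def obstruction (p : ℕ) (σ : Fin r → S → S) (z : (Fin r → ℤ) → Chain S) (m : Fin r → ℤ) :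
    Chain S :=
  totalDiff p (chainOps σ) z m + (if m = 0 then 1 else 0 : ℤ) • emptySimplex

/-- The extension of `z` to degree `n` that fills all obstructions by cones with apex `s`. -/
def coneExtension (p : ℕ) (σ : Fin r → S → S) (n : ℕ) (s : S) (z : (Fin r → ℤ) → Chain S)
    (m : Fin r → ℤ) : Chain S :=
  if ∑ i, m i < n then z m else if ∑ i, m i = n then cone s (obstruction p σ z m) else 0

lemma totalDiff_single_zero (m : Fin r → ℤ) :
    totalDiff p (chainOps σ)
      (fun m' => (if m' = 0 then 1 else 0 : ℤ) • (emptySimplex : Chain S)) m = 0 := by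
  rw [totalDiff_apply]
  refine Finset.sum_eq_zero fun i _ => ?_
  by_cases h : m - Pi.single i 1 = 0
  · rw [sub_eq_zero] at h
    subst h
    simp [periodicMap]
  · simp [h]

lemma IsResolutionMap.boundary_obstruction (hσ : IsElementaryAction p σ)
    (hz : IsResolutionMap p σ n z) {m : Fin r → ℤ} (hm : ∑ i, m i ≤ n) :
    boundary (obstruction p σ z m) = 0 := by
  have hcongr : totalDiff p (chainOps σ) (fun m' => boundary (z m')) m =
      totalDiff p (chainOps σ) (totalDiff p (chainOps σ) z +
        fun m' => (if m' = 0 then 1 else 0 : ℤ) • emptySimplex) m :=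
    totalDiff_congr p _ fun m' hm' => hz.boundary_eq m' (by omega)
  rw [obstruction, map_add, map_smul, boundary_single_nil, smul_zero, add_zero,
    boundary_totalDiff, hcongr, map_add, Pi.add_apply, totalDiff_single_zero,
    totalDiff_totalDiff hσ.chainOps_pow hσ.chainOps_commute, Pi.zero_apply, zero_add]

lemma IsResolutionMap.obstruction_mem (hz : IsResolutionMap p σ n z) (m : Fin r → ℤ) :
    obstruction p σ z m ∈
      supportedOn fun l => (∀ i, 0 ≤ m i) ∧ (l.length : ℤ) = ∑ i, m i := by
  refine Submodule.add_mem _ (totalDiff_mem p (fun i x hx =>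
    chainMap_mem_supportedOn (fun l hl => by simpa using hl) hx) fun i => ?_) ?_
  · refine supportedOn_mono (fun l hl => ⟨fun j => ?_, ?_⟩) (hz.mem (m - Pi.single i 1))
    · have hj := hl.1 j
      rcases eq_or_ne j i with rfl | h
      · simp at hj
        omega
      · simpa [h] using hj
    · rw [hl.2, sum_sub_single, sub_add_cancel]
  · split_ifs with h
    · subst h
      exact Submodule.smul_mem _ _ (single_mem_supportedOn (by simp) 1)
    · simp

lemma isResolutionMap_coneExtension (hσ : IsElementaryAction p σ)
    (hz : IsResolutionMap p σ n z) (s : S) :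
    IsResolutionMap p σ (n + 1) (coneExtension p σ n s z) where
  mem m := by
    unfold coneExtension
    split_ifs
    · exact hz.mem m
    · exact cone_mem_supportedOn (fun l hl => ⟨hl.1, by simp [hl.2]⟩) (hz.obstruction_mem m)
    · exact Submodule.zero_mem _
  boundary_eq m hm := by
    push_cast at hm
    rw [totalDiff_congr (z := coneExtension p σ n s z) (z' := z) p _
      fun m' hm' => if_pos (by omega)]
    rcases (Int.lt_add_one_iff.1 hm).lt_or_eq with hlt | heq
    · rw [coneExtension, if_pos hlt, hz.boundary_eq m hlt]
    · rw [coneExtension, if_neg heq.not_lt, if_pos heq, boundary_cone,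
        hz.boundary_obstruction hσ heq.le, map_zero, sub_zero, obstruction]

lemma obstruction_mem_supportedOn {P : List S → Prop} (hnil : P [])
    (hP : ∀ i l, P l → P (l.map (σ i))) (hz : ∀ m, z m ∈ supportedOn P) (m : Fin r → ℤ) :
    obstruction p σ z m ∈ supportedOn P :=
  Submodule.add_mem _ (totalDiff_mem p
      (fun i _ hx => chainMap_mem_supportedOn (hP i) hx) fun _ => hz _)
    (Submodule.smul_mem _ _ (single_mem_supportedOn hnil 1))

end Join

section TaggedPoint

/-- The elementary abelian group `(ℤ/p)^r`. -/
abbrev ElementaryGroup (p r : ℕ) : Type := Fin r → ZMod p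

/-- Points with real coordinates indexed by `V × (ℤ/p)^r`, together with a tag in the group. The
tags make the translation action free. -/
abbrev TaggedPoint (V : Type*) (p r : ℕ) : Type _ :=
  (V × ElementaryGroup p r → ℝ) × ElementaryGroup p r

variable {V : Type*} {p r : ℕ}

/-- The linear action of the `i`-th standard generator of the group on coordinates. -/
def translateCoords (i : Fin r) :
    (V × ElementaryGroup p r → ℝ) →ₗ[ℝ] (V × ElementaryGroup p r → ℝ) :=
  LinearMap.funLeft ℝ ℝ fun a => (a.1, a.2 - Pi.single i 1)

/-- The action of the `i`-th standard generator of the group on tagged points. -/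
def translate (i : Fin r) (s : TaggedPoint V p r) : TaggedPoint V p r :=
  (translateCoords i s.1, s.2 + Pi.single i 1)

@[simp] lemma translateCoords_apply (i : Fin r) (x : V × ElementaryGroup p r → ℝ)
    (a : V × ElementaryGroup p r) : translateCoords i x a = x (a.1, a.2 - Pi.single i 1) :=
  rfl

lemma translate_iterate (i : Fin r) (k : ℕ) (s : TaggedPoint V p r) :
    (translate i)^[k] s =
      (fun a => s.1 (a.1, a.2 - k • Pi.single i 1), s.2 + k • Pi.single i 1) := by
  induction k with
  | zero => simp
  | succ k ih =>
    rw [Function.iterate_succ_apply', ih, translate]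
    ext a
    · simp only [translateCoords_apply, succ_nsmul', sub_sub]
    · simp only [succ_nsmul, add_assoc]

lemma isElementaryAction_translate :
    IsElementaryAction p (translate : Fin r → TaggedPoint V p r → TaggedPoint V p r) where
  comm i j x := by
    ext a
    · simp only [translate, translateCoords_apply, sub_right_comm]
    · simp only [translate, Pi.add_apply, add_right_comm]
  iterate i x := by
    have h : p • (Pi.single i 1 : ElementaryGroup p r) = 0 := by
      rw [← Pi.single_smul]
      simp
    simp [translate_iterate, h]

variable [DecidableEq V]

lemma translateCoords_single (i : Fin r) (v : V) (g : ElementaryGroup p r) :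
    translateCoords i (Pi.single (v, g) 1) = Pi.single (v, g + Pi.single i 1) 1 := by
  ext ⟨w, k⟩
  simp only [translateCoords_apply, Pi.single_apply, Prod.mk.injEq, sub_eq_iff_eq_add]

/-- The points of the list are vertices of a common simplex of the join of the copies of
`(ℤ/p)^r` indexed by `A`. -/
def IsJoinSimplex (A : Finset V) (l : List (TaggedPoint V p r)) : Prop :=
  ∃ φ : V → ElementaryGroup p r, ∀ s ∈ l, ∃ v ∈ A, s.1 = Pi.single (v, φ v) 1

lemma IsJoinSimplex.map_translate {A : Finset V} {l : List (TaggedPoint V p r)}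
    (h : IsJoinSimplex A l) (i : Fin r) : IsJoinSimplex A (l.map (translate i)) := by
  obtain ⟨φ, hφ⟩ := h
  refine ⟨fun v => φ v + Pi.single i 1, fun s hs => ?_⟩
  obtain ⟨⟨x, g⟩, hx, rfl⟩ := List.mem_map.1 hs
  obtain ⟨v, hv, rfl⟩ := hφ _ hx
  exact ⟨v, hv, translateCoords_single i v _⟩

lemma IsJoinSimplex.cons {A : Finset V} {l : List (TaggedPoint V p r)} (h : IsJoinSimplex A l)
    {a : V} (ha : a ∉ A) : IsJoinSimplex (insert a A) ((Pi.single (a, 0) 1, 0) :: l) := by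
  obtain ⟨φ, hφ⟩ := h
  refine ⟨Function.update φ a 0, List.forall_mem_cons.2
    ⟨⟨a, Finset.mem_insert_self a A, by simp⟩, fun s hs => ?_⟩⟩
  obtain ⟨v, hv, hs⟩ := hφ s hs
  refine ⟨v, Finset.mem_insert_of_mem hv, ?_⟩
  rw [Function.update_of_ne (ne_of_mem_of_not_mem hv ha), hs]

lemma IsJoinSimplex.mono {A B : Finset V} (hAB : A ⊆ B) {l : List (TaggedPoint V p r)}
    (h : IsJoinSimplex A l) : IsJoinSimplex B l := by
  obtain ⟨φ, hφ⟩ := h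
  refine ⟨φ, fun s hs => ?_⟩
  obtain ⟨v, hv, hs⟩ := hφ s hs
  exact ⟨v, hAB hv, hs⟩

theorem exists_isResolutionMap_join (A : Finset V) :
    ∃ z : (Fin r → ℤ) → Chain (TaggedPoint V p r),
      IsResolutionMap p translate A.card z ∧ ∀ m, z m ∈ supportedOn (IsJoinSimplex A) := by
  induction A using Finset.induction with
  | empty =>
    refine ⟨0, ⟨fun _ => Submodule.zero_mem _, fun m hm => ?_⟩, fun _ => Submodule.zero_mem _⟩
    have hm0 : m ≠ 0 := by
      rintro rfl
      simp at hm
    simp [hm0]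
  | insert a A ha ih =>
    obtain ⟨z, hz, hjoin⟩ := ih
    have hobs := obstruction_mem_supportedOn (p := p) (σ := translate) ⟨0, by simp⟩
      (fun i l hl => hl.map_translate i) hjoin
    refine ⟨coneExtension p translate A.card (Pi.single (a, 0) 1, 0) z, ?_, fun m => ?_⟩
    · rw [Finset.card_insert_of_notMem ha]
      exact isResolutionMap_coneExtension isElementaryAction_translate hz _
    · unfold coneExtension
      split_ifs
      · exact supportedOn_mono (fun l hl => hl.mono (Finset.subset_insert a A)) (hjoin m)
      · exact cone_mem_supportedOn (fun l hl => hl.cons ha) (hobs m)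
      · exact Submodule.zero_mem _

end TaggedPoint

/-! ### Barycentric subdivision of chains -/

section Average

variable {E F : Type*}

/-- The average of a multiset of points, with the junk value `0` for the empty multiset. -/
def average [AddCommGroup E] [Module ℝ E] (m : Multiset E) : E :=
  (m.card : ℝ)⁻¹ • m.sum

lemma map_average [AddCommGroup E] [Module ℝ E] [AddCommGroup F] [Module ℝ F] (ρ : E →ₗ[ℝ] F)
    (m : Multiset E) : ρ (average m) = average (m.map ρ) := by
  rw [average, map_smul, map_multiset_sum, average, Multiset.card_map]

lemma average_cons [AddCommGroup E] [Module ℝ E] (a : E) (m : Multiset E) :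
    average (a ::ₘ m) = a + (m.card / (m.card + 1) : ℝ) • (average m - a) := by
  rcases eq_or_ne m 0 with rfl | hm
  · simp [average]
  · have hcard : (m.card : ℝ) ≠ 0 := by simpa using hm
    rw [average, average, Multiset.card_cons, Multiset.sum_cons, Nat.cast_add_one]
    match_scalars
    · field_simp
      ring
    · field_simp

lemma average_mem [AddCommGroup E] [Module ℝ E] {m : Multiset E} {C : Set E} (hm : m ≠ 0)
    (hC : Convex ℝ C) (h : ∀ x ∈ m, x ∈ C) : average m ∈ C := by
  induction m using Multiset.induction with
  | empty => exact absurd rfl hm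
  | cons a m ih =>
    rw [Multiset.forall_mem_cons] at h
    rw [average_cons]
    rcases eq_or_ne m 0 with rfl | hm'
    · simpa using h.1
    · exact hC.add_smul_sub_mem h.1 (ih hm' h.2)
        ⟨by positivity, div_le_one_of_le₀ (by linarith) (by positivity)⟩

lemma dist_average_le [NormedAddCommGroup E] [NormedSpace ℝ E] {m : Multiset E} {N : ℕ} {δ : ℝ}
    (hm : m.card ≤ N + 1) (hδ : ∀ x ∈ m, ∀ y ∈ m, dist x y ≤ δ) {x : E} (hx : x ∈ m) :
    dist x (average m) ≤ N / (N + 1) * δ := by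
  obtain ⟨m, rfl⟩ := Multiset.exists_cons_of_mem hx
  have hδ0 : 0 ≤ δ := dist_nonneg.trans (hδ x hx x hx)
  have hcard : (m.card : ℝ) ≤ N := by simpa using hm
  rw [average_cons, dist_self_add_right, norm_smul, Real.norm_of_nonneg (by positivity),
    ← dist_eq_norm]
  rcases eq_or_ne m 0 with rfl | hm0
  · simp only [Multiset.card_zero, Nat.cast_zero, zero_div, zero_mul]
    positivity
  have hdist : dist (average m) x ≤ δ :=
    Metric.mem_closedBall.1 <| average_mem hm0 (convex_closedBall x δ) fun y hy =>
      hδ y (Multiset.mem_cons_of_mem hy) x hx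
  have hfrac : (m.card : ℝ) / (m.card + 1) ≤ N / (N + 1) := by
    rw [div_le_div_iff₀ (by positivity) (by positivity)]
    linarith
  gcongr

end Average

section Subdivision

variable {E T : Type*} [AddCommGroup E] [Module ℝ E]

/-- The barycentre of a nonempty list of tagged points, with the tag of its head. -/
def barycenter (s : E × T) (l : List (E × T)) : E × T :=
  (average ((s :: l).map Prod.fst : Multiset E), s.2)

/-- Barycentric subdivision of the simplices with `k` vertices. -/
def subdivide : ℕ → Chain (E × T) →ₗ[ℤ] Chain (E × T)
  | 0 => LinearMap.id
  | k + 1 => Finsupp.linearCombination ℤ fun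
    | [] => 0
    | s :: l => cone (barycenter s l) (subdivide k (boundary (Finsupp.single (s :: l) 1)))

lemma subdivide_zero (c : Chain (E × T)) : subdivide 0 c = c :=
  rfl

lemma subdivide_succ_single_nil (k : ℕ) :
    subdivide (k + 1) (Finsupp.single ([] : List (E × T)) 1) = 0 := by
  simp [subdivide]

lemma subdivide_succ_single_cons (k : ℕ) (s : E × T) (l : List (E × T)) :
    subdivide (k + 1) (Finsupp.single (s :: l) 1) =
      cone (barycenter s l) (subdivide k (boundary (Finsupp.single (s :: l) 1))) := by
  simp [subdivide]

lemma boundary_mem_supportedOn_length {S : Type*} {k : ℕ} {c : Chain S}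
    (hc : c ∈ supportedOn fun l => l.length = k + 1) :
    boundary c ∈ supportedOn fun l => l.length = k :=
  map_mem_of_mem_supportedOn boundary (fun l hl => supportedOn_mono
    (fun l' hl' => by omega) (boundary_single_mem_supportedOn l)) hc

lemma boundary_subdivide (k : ℕ) {c : Chain (E × T)}
    (hc : c ∈ supportedOn fun l => l.length = k + 1) :
    boundary (subdivide (k + 1) c) = subdivide k (boundary c) := by
  suffices h : ∀ l : List (E × T), l.length = k + 1 →
      (boundary ∘ₗ subdivide (k + 1)) (Finsupp.single l 1) =
        (subdivide k ∘ₗ boundary) (Finsupp.single l 1) from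
    eq_of_mem_supportedOn h hc
  intro l hl
  match l, hl with
  | s :: l, hl =>
    have hcycle : boundary (subdivide k (boundary (Finsupp.single (s :: l) 1))) = 0 := by
      cases k with
      | zero => rw [subdivide_zero, boundary_boundary]
      | succ k =>
        rw [boundary_subdivide k (boundary_mem_supportedOn_length (single_mem_supportedOn hl 1)),
          boundary_boundary, map_zero]
    rw [LinearMap.comp_apply, LinearMap.comp_apply, subdivide_succ_single_cons, boundary_cone,
      hcycle, map_zero, sub_zero]

lemma subdivide_mem_supportedOn_length (k : ℕ) {c : Chain (E × T)}
    (hc : c ∈ supportedOn fun l => l.length = k) :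
    subdivide k c ∈ supportedOn fun l => l.length = k := by
  induction k generalizing c with
  | zero => exact hc
  | succ k ih =>
    refine map_mem_of_mem_supportedOn _ (fun l hl => ?_) hc
    match l, hl with
    | s :: l, hl =>
      rw [subdivide_succ_single_cons]
      exact cone_mem_supportedOn (fun l hl => by simp [hl])
        (ih (boundary_mem_supportedOn_length (single_mem_supportedOn hl 1)))

lemma barycenter_map {E' T' : Type*} [AddCommGroup E'] [Module ℝ E'] (ρ : E →ₗ[ℝ] E')
    (τ : T → T') (s : E × T) (l : List (E × T)) :
    barycenter (Prod.map ρ τ s) (l.map (Prod.map ρ τ)) = Prod.map ρ τ (barycenter s l) := by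
  simp [barycenter, map_average, List.map_map, Function.comp_def]

lemma subdivide_chainMap {E' T' : Type*} [AddCommGroup E'] [Module ℝ E'] (ρ : E →ₗ[ℝ] E')
    (τ : T → T') (k : ℕ) (c : Chain (E × T)) :
    subdivide k (chainMap (Prod.map ρ τ) c) = chainMap (Prod.map ρ τ) (subdivide k c) := by
  induction k generalizing c with
  | zero => rfl
  | succ k ih =>
    have h : subdivide (k + 1) ∘ₗ chainMap (Prod.map ρ τ) =
        chainMap (Prod.map ρ τ) ∘ₗ subdivide (k + 1) := by
      ext l : 2
      cases l with
      | nil => simp [subdivide_succ_single_nil]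
      | cons s l =>
        have hmap : chainMap (Prod.map ρ τ) (Finsupp.single (s :: l) 1) =
            Finsupp.single (Prod.map ρ τ s :: l.map (Prod.map ρ τ)) 1 := by simp
        simp only [LinearMap.comp_apply, Finsupp.lsingle_apply]
        rw [hmap, subdivide_succ_single_cons, subdivide_succ_single_cons, chainMap_cone,
          barycenter_map, ← ih, chainMap_boundary, hmap]
    exact LinearMap.congr_fun h c

/-- The subdivision of a family, in which `z m` is a chain of simplices of dimension `∑ i, m i`. -/
def subdivideFamily {r : ℕ} (z : (Fin r → ℤ) → Chain (E × T)) (m : Fin r → ℤ) : Chain (E × T) :=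
  subdivide ((∑ i, m i).toNat + 1) (z m)

theorem isResolutionMap_subdivideFamily {p r n : ℕ} {ρ : Fin r → E →ₗ[ℝ] E} {τ : Fin r → T → T}
    {z : (Fin r → ℤ) → Chain (E × T)}
    (hz : IsResolutionMap p (fun i => Prod.map (ρ i) (τ i)) n z) :
    IsResolutionMap p (fun i => Prod.map (ρ i) (τ i)) n (subdivideFamily z) := by
  have hlen : ∀ m, z m ∈ supportedOn fun l =>
      (∀ i, 0 ≤ m i) ∧ l.length = (∑ i, m i).toNat + 1 := fun m =>
    supportedOn_mono (fun l hl => ⟨hl.1, by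
      have hnonneg : 0 ≤ ∑ i, m i := Finset.sum_nonneg fun i _ => hl.1 i
      omega⟩) (hz.mem m)
  refine ⟨fun m => map_mem_of_mem_supportedOn _ (fun l hl => ?_) (hlen m), fun m hm => ?_⟩
  · have hnonneg : 0 ≤ ∑ i, m i := Finset.sum_nonneg fun i _ => hl.1 i
    exact supportedOn_mono (fun l' hl' => ⟨hl.1, by omega⟩)
      (subdivide_mem_supportedOn_length _ (single_mem_supportedOn hl.2 1))
  · have hdiff : subdivide (∑ i, m i).toNat
          (totalDiff p (chainOps fun i => Prod.map (ρ i) (τ i)) z m) =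
        totalDiff p (chainOps fun i => Prod.map (ρ i) (τ i))
          (subdivideFamily z) m := by
      rw [map_totalDiff p fun i => subdivide_chainMap (ρ i) (τ i) _]
      refine totalDiff_congr _ _ fun m' hm' => ?_
      rcases lt_or_ge (∑ i, m' i) 0 with h | h
      · simp [subdivideFamily, hz.eq_zero_of_sum_neg h]
      · rw [subdivideFamily]
        congr 2
        omega
    rw [subdivideFamily,
      boundary_subdivide _ (supportedOn_mono (fun l hl => hl.2) (hlen m)),
      hz.boundary_eq m hm, map_add, hdiff, map_smul]
    split_ifs with h
    · subst h
      simp [subdivide_zero]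
    · simp

end Subdivision

section Mesh

variable {E T : Type*} [NormedAddCommGroup E]

/-- The points of the list are pairwise at distance at most `δ`. -/
def MeshLE (δ : ℝ) (l : List (E × T)) : Prop :=
  ∀ s ∈ l, ∀ t ∈ l, dist s.1 t.1 ≤ δ

lemma MeshLE.cons {δ : ℝ} {s : E × T} {l : List (E × T)} (hl : MeshLE δ l) (hδ : 0 ≤ δ)
    (hs : ∀ t ∈ l, dist t.1 s.1 ≤ δ) : MeshLE δ (s :: l) :=
  List.forall_mem_cons.2 ⟨List.forall_mem_cons.2
      ⟨(dist_self _).trans_le hδ, fun t ht => dist_comm t.1 s.1 ▸ hs t ht⟩,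
    fun t ht => List.forall_mem_cons.2 ⟨hs t ht, hl t ht⟩⟩

variable [NormedSpace ℝ E]

/-- The convex hull of the points of a list. -/
def hull (l : List (E × T)) : Set E := convexHull ℝ (Prod.fst '' {s | s ∈ l})

lemma hull_subset {l : List (E × T)} {C : Set E} (hC : Convex ℝ C) (h : ∀ s ∈ l, s.1 ∈ C) :
    hull l ⊆ C := by
  refine convexHull_min ?_ hC
  rintro _ ⟨s, hs, rfl⟩
  exact h s hs

lemma fst_mem_hull {l : List (E × T)} {s : E × T} (hs : s ∈ l) : s.1 ∈ hull l :=
  subset_convexHull ℝ _ ⟨s, hs, rfl⟩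

lemma fst_barycenter_mem_hull (s : E × T) (l : List (E × T)) :
    (barycenter s l).1 ∈ hull (s :: l) := by
  refine average_mem (by simp) (convex_convexHull ℝ _) fun x hx => ?_
  obtain ⟨t, ht, rfl⟩ := List.mem_map.1 (Multiset.mem_coe.1 hx)
  exact fst_mem_hull ht

lemma dist_fst_barycenter_le {N : ℕ} {δ : ℝ} {s : E × T} {l : List (E × T)} (hl : l.length ≤ N)
    (hδ : MeshLE δ (s :: l)) {x : E} (hx : x ∈ hull (s :: l)) :
    dist x (barycenter s l).1 ≤ N / (N + 1) * δ := by
  refine Metric.mem_closedBall.1 (hull_subset (convex_closedBall _ _) (fun t ht => ?_) hx)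
  refine Metric.mem_closedBall.2 (dist_average_le (by simpa using hl) ?_
    (Multiset.mem_coe.2 (List.mem_map_of_mem ht)))
  simpa only [MeshLE, Multiset.mem_coe, List.forall_mem_map] using hδ

lemma subdivide_single_mem_supportedOn {N : ℕ} {δ : ℝ} (k : ℕ) {l : List (E × T)}
    (hk : k ≤ N + 1) (hl : l.length = k) (hδ : MeshLE δ l) :
    subdivide k (Finsupp.single l 1) ∈
      supportedOn fun l' => (∀ s ∈ l', s.1 ∈ hull l) ∧ MeshLE (N / (N + 1) * δ) l' := by
  induction k generalizing l with
  | zero =>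
    rw [List.length_eq_zero_iff] at hl
    subst hl
    exact single_mem_supportedOn ⟨by simp, by simp [MeshLE]⟩ 1
  | succ k ih =>
    match l, hl with
    | s :: l, hl =>
      have hδ0 : 0 ≤ δ := dist_nonneg.trans (hδ s List.mem_cons_self s List.mem_cons_self)
      have hfaces : subdivide k (boundary (Finsupp.single (s :: l) 1)) ∈ supportedOn fun l' =>
          (∀ t ∈ l', t.1 ∈ hull (s :: l)) ∧ MeshLE (N / (N + 1) * δ) l' := by
        refine map_mem_of_mem_supportedOn _ (fun l' hl' => ?_)
          (boundary_single_mem_supportedOn (s :: l))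
        have hsub : hull l' ⊆ hull (s :: l) :=
          hull_subset (convex_convexHull ℝ _) fun t ht => fst_mem_hull (hl'.1.subset ht)
        exact supportedOn_mono (fun l'' hl'' => ⟨fun t ht => hsub (hl''.1 t ht), hl''.2⟩)
          (ih (by omega) (by omega) fun a ha b hb =>
            hδ a (hl'.1.subset ha) b (hl'.1.subset hb))
      rw [subdivide_succ_single_cons]
      refine cone_mem_supportedOn (fun l' hl' => ⟨?_, hl'.2.cons (by positivity) ?_⟩) hfaces
      · exact List.forall_mem_cons.2 ⟨fst_barycenter_mem_hull s l, hl'.1⟩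
      · rw [List.length_cons] at hl
        exact fun t ht => dist_fst_barycenter_le (by omega) hδ (hl'.1 t ht)

end Mesh

section Face

variable {V : Type*} [Fintype V]

/-- The face of the simplex on `V` spanned by the vertices in `S`. -/
def face (S : Set V) : Set (V → ℝ) :=
  {x ∈ stdSimplex ℝ V | ∀ v ∉ S, x v = 0}

lemma face_eq_inter (S : Set V) :
    face S = stdSimplex ℝ V ∩ ⋂ v, ⋂ (_ : v ∉ S), {x | x v = 0} := by
  ext
  simp [face]

lemma convex_face (S : Set V) : Convex ℝ (face S) := by
  rw [face_eq_inter]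
  exact (convex_stdSimplex ℝ V).inter <| convex_iInter fun v => convex_iInter fun _ =>
    convex_hyperplane (LinearMap.proj v : (V → ℝ) →ₗ[ℝ] ℝ).isLinear 0

lemma isCompact_face (S : Set V) : IsCompact (face S) := by
  rw [face_eq_inter]
  exact (isCompact_stdSimplex ℝ V).inter_right <| isClosed_iInter fun v => isClosed_iInter fun _ =>
    isClosed_eq (continuous_apply v) continuous_const

lemma single_mem_face [DecidableEq V] {S : Set V} {v : V} (hv : v ∈ S) :
    Pi.single v 1 ∈ face S :=
  ⟨single_mem_stdSimplex ℝ v, fun _ hu => Pi.single_eq_of_ne (ne_of_mem_of_not_mem hv hu).symm _⟩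

end Face

section Facet

variable {V : Type*} [Fintype V] {p r : ℕ} [NeZero p]

/-- The geometric realization of the facet with vertices `(v, φ v)` of the join of the copies of
`(ℤ/p)^r` indexed by `V`. -/
def facet (φ : V → ElementaryGroup p r) : Set (V × ElementaryGroup p r → ℝ) :=
  face {a | a.2 = φ a.1}

lemma dist_le_one_of_mem_stdSimplex {ι : Type*} [Fintype ι] {x y : ι → ℝ}
    (hx : x ∈ stdSimplex ℝ ι) (hy : y ∈ stdSimplex ℝ ι) : dist x y ≤ 1 :=
  (dist_pi_le_iff zero_le_one).2 fun i =>
    Real.dist_le_of_mem_Icc_01 (mem_Icc_of_mem_stdSimplex hx i) (mem_Icc_of_mem_stdSimplex hy i)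

/-- The points of the list lie in a common facet, pairwise at distance at most `δ`. -/
def IsFacetList (δ : ℝ) (l : List (TaggedPoint V p r)) : Prop :=
  (∃ φ, ∀ s ∈ l, s.1 ∈ facet φ) ∧ MeshLE δ l

lemma IsJoinSimplex.isFacetList [DecidableEq V] {A : Finset V} {l : List (TaggedPoint V p r)}
    (h : IsJoinSimplex A l) : IsFacetList 1 l := by
  obtain ⟨φ, hφ⟩ := h
  have hmem : ∀ s ∈ l, s.1 ∈ facet φ := by
    intro s hs
    obtain ⟨v, -, hs⟩ := hφ s hs
    rw [hs]
    exact single_mem_face rfl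
  exact ⟨⟨φ, hmem⟩, fun s hs t ht =>
    dist_le_one_of_mem_stdSimplex (hmem s hs).1 (hmem t ht).1⟩

lemma IsFacetList.subdivide_mem_supportedOn {N : ℕ} {δ : ℝ} {l : List (TaggedPoint V p r)}
    (h : IsFacetList δ l) (hl : l.length ≤ N + 1) :
    subdivide l.length (Finsupp.single l 1) ∈ supportedOn (IsFacetList (N / (N + 1) * δ)) := by
  obtain ⟨⟨φ, hφ⟩, hδ⟩ := h
  exact supportedOn_mono
    (fun l' hl' => ⟨⟨φ, fun s hs => hull_subset (convex_face _) hφ (hl'.1 s hs)⟩, hl'.2⟩)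
    (subdivide_single_mem_supportedOn _ hl rfl hδ)

theorem exists_isResolutionMap_isFacetList (V : Type*) [Fintype V] (p r : ℕ) [NeZero p] (k : ℕ) :
    ∃ z : (Fin r → ℤ) → Chain (TaggedPoint V p r),
      IsResolutionMap p translate (Fintype.card V) z ∧
      ∀ m, ∑ i, m i < (Fintype.card V : ℤ) → z m ∈ supportedOn
        (IsFacetList ((Fintype.card V / (Fintype.card V + 1) : ℝ) ^ k)) := by
  classical
  induction k with
  | zero =>
    obtain ⟨z, hz, hjoin⟩ := exists_isResolutionMap_join (p := p) (r := r) (Finset.univ : Finset V)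
    exact ⟨z, hz, fun m _ =>
      supportedOn_mono (fun l hl => by simpa using hl.isFacetList) (hjoin m)⟩
  | succ k ih =>
    obtain ⟨z, hz, hfacet⟩ := ih
    have htr : (translate : Fin r → TaggedPoint V p r → TaggedPoint V p r) =
        fun i => Prod.map (translateCoords i) (· + Pi.single i 1) := rfl
    have hsub : IsResolutionMap p translate (Fintype.card V) (subdivideFamily z) := by
      rw [htr] at hz ⊢
      exact isResolutionMap_subdivideFamily hz
    refine ⟨subdivideFamily z, hsub, fun m hm => ?_⟩
    have hmem : z m ∈ supportedOn fun l => l.length = (∑ i, m i).toNat + 1 ∧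
        IsFacetList ((Fintype.card V / (Fintype.card V + 1) : ℝ) ^ k) l := by
      refine mem_supportedOn.2 fun l hl => ⟨?_, mem_supportedOn.1 (hfacet m hm) l hl⟩
      obtain ⟨hnonneg, hlen⟩ := mem_supportedOn.1 (hz.mem m) l hl
      have hsum : 0 ≤ ∑ i, m i := Finset.sum_nonneg fun i _ => hnonneg i
      omega
    refine map_mem_of_mem_supportedOn _ (fun l hl => ?_) hmem
    rw [← hl.1, pow_succ']
    exact hl.2.subdivide_mem_supportedOn (by omega)

end Facet

/-! ### Characters -/

section Characters

/-- Fourier inversion: a function without nontrivial Fourier coefficients is constant. -/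
lemma eq_of_forall_sum_addChar_mul_eq_zero {G : Type*} [AddCommGroup G] [Fintype G] {F : G → ℂ}
    (h : ∀ ψ : AddChar G ℂ, ψ ≠ 0 → ∑ g, ψ g * F g = 0) (g g' : G) : F g = F g' := by
  classical
  have key : ∀ k, (Fintype.card G : ℂ) * F k = ∑ g, F g := fun k =>
    calc (Fintype.card G : ℂ) * F k = ∑ g, (∑ ψ : AddChar G ℂ, ψ (-k + g)) * F g := by
          simp [AddChar.sum_apply_eq_ite, neg_add_eq_zero]
      _ = ∑ ψ : AddChar G ℂ, ψ (-k) * ∑ g, ψ g * F g := by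
          simp_rw [Finset.sum_mul, Finset.mul_sum, AddChar.map_add_eq_mul, mul_assoc]
          exact Finset.sum_comm
      _ = ∑ g, F g := by
          rw [Finset.sum_eq_single 0 (fun ψ _ hψ => by rw [h ψ hψ, mul_zero]) (by simp)]
          simp
  exact mul_left_cancel₀ (Nat.cast_ne_zero.2 Fintype.card_ne_zero) ((key g).trans (key g').symm)

lemma exists_addChar_single_eq_exp {p r : ℕ} [NeZero p]
    (ψ : AddChar (ElementaryGroup p r) ℂ) :
    ∃ a : Fin r → ℤ,
      (∀ i, ψ (Pi.single i 1) = Complex.exp ((2 * Real.pi * a i / p : ℝ) * Complex.I)) ∧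
      (ψ ≠ 0 → ∃ i, (a i : ZMod p) ≠ 0) := by
  have hζ := Complex.isPrimitiveRoot_exp p (NeZero.ne p)
  have hpow : ∀ i, ψ (Pi.single i 1) ^ p = 1 := fun i => by
    rw [← AddChar.map_nsmul_eq_pow, ← Pi.single_smul]
    simp
  choose a _ ha using fun i => hζ.eq_pow_of_pow_eq_one (hpow i)
  refine ⟨fun i => a i, fun i => ?_, fun hψ => ?_⟩
  · rw [← ha, ← Complex.exp_nat_mul]
    congr 1
    push_cast
    ring
  · contrapose! hψ
    have hone : ∀ i, ψ (Pi.single i 1) = 1 := fun i => by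
      rw [← ha, hζ.pow_eq_one_iff_dvd, ← ZMod.natCast_eq_zero_iff]
      exact_mod_cast hψ i
    refine AddChar.eq_zero_iff.2 fun g => ?_
    have hg : g = ∑ i, (g i).val • Pi.single i (1 : ZMod p) := by
      conv_lhs => rw [← Finset.univ_sum_single g]
      simp [← Pi.single_smul]
    refine Additive.ofMul.injective ?_
    rw [← AddChar.toAddMonoidHom_apply, hg, map_sum, ofMul_one]
    exact Finset.sum_eq_zero fun i _ => by
      rw [map_nsmul, AddChar.toAddMonoidHom_apply, hone, ofMul_one, smul_zero]

end Characters

/-! ### Coincidences of complex test functions -/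

section FourierTransform

variable {V : Type*} {p r : ℕ} [NeZero p]

/-- The Fourier coefficient at `ψ` of the function on the group obtained by evaluating `F` on the
blocks `x (·, g)` of a point `x`. -/
def blockFourier (F : (V → ℝ) → ℂ) (ψ : AddChar (ElementaryGroup p r) ℂ)
    (x : V × ElementaryGroup p r → ℝ) : ℂ :=
  ∑ g, ψ g * F fun v => x (v, g)

open Classical in
/-- The Fourier coefficient `blockFourier`, with its zeros filled in equivariantly with the help of
the tags. -/
def blockFourierMod (F : (V → ℝ) → ℂ) (ψ : AddChar (ElementaryGroup p r) ℂ)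
    (s : TaggedPoint V p r) : ℂ :=
  if blockFourier F ψ s.1 = 0 then ψ s.2 else blockFourier F ψ s.1

lemma continuous_blockFourier {F : (V → ℝ) → ℂ} (hF : Continuous F)
    (ψ : AddChar (ElementaryGroup p r) ℂ) : Continuous (blockFourier F ψ) :=
  continuous_finsetSum _ fun g _ => continuous_const.mul (hF.comp (by fun_prop))

lemma blockFourierMod_ne_zero (F : (V → ℝ) → ℂ) (ψ : AddChar (ElementaryGroup p r) ℂ)
    (s : TaggedPoint V p r) : blockFourierMod F ψ s ≠ 0 := by
  unfold blockFourierMod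
  split_ifs with h
  · exact (AddChar.val_isUnit ψ _).ne_zero
  · exact h

lemma blockFourier_translateCoords (F : (V → ℝ) → ℂ) (ψ : AddChar (ElementaryGroup p r) ℂ)
    (i : Fin r) (x : V × ElementaryGroup p r → ℝ) :
    blockFourier F ψ (translateCoords i x) = ψ (Pi.single i 1) * blockFourier F ψ x := by
  rw [blockFourier, blockFourier, Finset.mul_sum,
    ← Equiv.sum_comp (Equiv.addRight (Pi.single i 1 : ElementaryGroup p r))]
  refine Finset.sum_congr rfl fun g _ => ?_
  simp only [translateCoords_apply, Equiv.coe_addRight, add_sub_cancel_right,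
    AddChar.map_add_eq_mul]
  ring

lemma blockFourierMod_translate (F : (V → ℝ) → ℂ) (ψ : AddChar (ElementaryGroup p r) ℂ)
    (i : Fin r) (s : TaggedPoint V p r) :
    blockFourierMod F ψ (translate i s) = ψ (Pi.single i 1) * blockFourierMod F ψ s := by
  have hψ : ψ (Pi.single i 1) ≠ 0 := (AddChar.val_isUnit ψ _).ne_zero
  simp only [blockFourierMod, translate, blockFourier_translateCoords, mul_eq_zero, hψ, false_or,
    AddChar.map_add_eq_mul, mul_comm (ψ s.2), mul_ite]

lemma wind_eq_zero {S : Type*} {W : S → ℂ} (hW : ∀ x, W x ≠ 0) {c : ℂ} {x y w : S}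
    (hx : dist (W x) c < ‖c‖ / 3) (hy : dist (W y) c < ‖c‖ / 3) (hw : dist (W w) c < ‖c‖ / 3) :
    wind W x y w = 0 := by
  have hsweep : ∀ {a b : S}, dist (W a) c < ‖c‖ / 3 → dist (W b) c < ‖c‖ / 3 →
      |sweep W a b| < Real.pi / 2 := by
    intro a b ha hb
    have hab : ‖W b / W a - 1‖ < 1 := by
      rw [div_sub_one (hW a), norm_div, div_lt_one (norm_pos_iff.2 (hW a)), ← dist_eq_norm]
      have := norm_sub_norm_le c (W a)
      rw [← dist_eq_norm, dist_comm] at this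
      linarith [dist_triangle_right (W b) (W a) c]
    have hre := abs_lt.1 ((Complex.abs_re_le_norm _).trans_lt hab)
    rw [Complex.sub_re, Complex.one_re] at hre
    rw [sweep, Complex.abs_arg_lt_pi_div_two_iff]
    exact Or.inl (by linarith [hre.1])
  have hxy := abs_lt.1 (hsweep hx hy)
  have hyw := abs_lt.1 (hsweep hy hw)
  have hxw := abs_lt.1 (hsweep hx hw)
  have htwo := two_pi_mul_wind hW x y w
  have hlt : |(wind W x y w : ℝ)| < 1 :=
    abs_lt.2 ⟨by nlinarith [Real.pi_pos], by nlinarith [Real.pi_pos]⟩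
  exact Int.abs_lt_one_iff.1 (by exact_mod_cast hlt)

lemma exists_forall_wind_blockFourierMod_eq_zero [Fintype V] {F : (V → ℝ) → ℂ}
    (hF : Continuous F) {ψ : AddChar (ElementaryGroup p r) ℂ} {x : V × ElementaryGroup p r → ℝ}
    (hx : blockFourier F ψ x ≠ 0) :
    ∃ ε > 0, ∀ l : List (TaggedPoint V p r), (∀ s ∈ l, dist s.1 x < ε) →
      ∀ s ∈ l, ∀ t ∈ l, ∀ u ∈ l, wind (blockFourierMod F ψ) s t u = 0 := by
  have hpos := norm_pos_iff.2 hx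
  obtain ⟨ε, hε, hball⟩ := Metric.continuousAt_iff.1
    (continuous_blockFourier hF ψ).continuousAt (‖blockFourier F ψ x‖ / 3) (by positivity)
  refine ⟨ε, hε, fun l hl s hs t ht u hu => ?_⟩
  have hclose : ∀ s ∈ l, dist (blockFourierMod F ψ s) (blockFourier F ψ x) <
      ‖blockFourier F ψ x‖ / 3 := fun s hs => by
    have hdist := hball (hl s hs)
    have hne : blockFourier F ψ s.1 ≠ 0 := fun h => by
      rw [h, dist_zero_left] at hdist
      linarith
    rwa [blockFourierMod, if_neg hne]
  exact wind_eq_zero (blockFourierMod_ne_zero F ψ) (hclose s hs) (hclose t ht) (hclose u hu)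

end FourierTransform

section Coincidence

variable {V : Type*} [Fintype V] {p r : ℕ}

lemma exists_isFacetList_forall_wind_ne_zero {K : Type*} [Fintype K] [Fact p.Prime]
    {W : K → TaggedPoint V p r → ℂ} (hW : ∀ j x, W j x ≠ 0) {a : K → Fin r → ℤ}
    (hσW : ∀ j i x, W j (translate i x) =
      Complex.exp ((2 * Real.pi * a j i / p : ℝ) * Complex.I) * W j x)
    (ha : ∀ j, ∃ i, (a j i : ZMod p) ≠ 0) (hK : 2 * Fintype.card K < Fintype.card V) (k : ℕ) :
    ∃ l : List (TaggedPoint V p r), l ≠ [] ∧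
      IsFacetList ((Fintype.card V / (Fintype.card V + 1) : ℝ) ^ k) l ∧
      ∀ j, ∃ x ∈ l, ∃ y ∈ l, ∃ w ∈ l, wind (W j) x y w ≠ 0 := by
  obtain ⟨z, hz, hfacet⟩ := exists_isResolutionMap_isFacetList V p r k
  let ws : List ((TaggedPoint V p r → TaggedPoint V p r → TaggedPoint V p r → ℤ) × (Fin r → ℤ)) :=
    (Finset.univ : Finset K).toList.map fun j => (wind (W j), a j)
  have hlen : ws.length = Fintype.card K := by simp [ws]
  obtain ⟨m, hm, hne⟩ := hz.exists_cupEval_ne_zero isElementaryAction_translate 0 (ws := ws)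
    (List.forall_mem_map.2 fun j _ => hz.isLinearCocycle_wind (NeZero.ne p) (hW j) (hσW j))
    (List.forall_mem_map.2 fun j _ => ha j) (by omega)
  have hmem : z m ∈ supportedOn fun l => l ≠ [] ∧
      IsFacetList ((Fintype.card V / (Fintype.card V + 1) : ℝ) ^ k) l := by
    refine mem_supportedOn.2 fun l hl => ⟨?_, mem_supportedOn.1 (hfacet m (by omega)) l hl⟩
    have hlength := (mem_supportedOn.1 (hz.mem m) l hl).2
    exact List.ne_nil_of_length_pos (by omega)
  obtain ⟨l, ⟨hnil, hl⟩, hwind⟩ := exists_ne_zero_of_cupEval_ne_zero hmem hne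
  exact ⟨l, hnil, hl, fun j => hwind _ (by simp [ws])⟩

lemma exists_mem_facet_forall_exists_dist_lt [NeZero p] {l : ℕ → List (TaggedPoint V p r)}
    {δ : ℕ → ℝ} (hne : ∀ n, l n ≠ []) (hl : ∀ n, IsFacetList (δ n) (l n))
    (hδ : Filter.Tendsto δ Filter.atTop (nhds 0)) :
    ∃ φ : V → ElementaryGroup p r, ∃ x ∈ facet φ, ∀ ε > 0, ∃ n, ∀ s ∈ l n, dist s.1 x < ε := by
  choose s hs using fun n => List.exists_mem_of_ne_nil _ (hne n)
  have hcpt : IsCompact (⋃ φ : V → ElementaryGroup p r, facet φ) := by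
    classical exact isCompact_iUnion fun φ => isCompact_face _
  obtain ⟨x, hx, θ, hθ, hlim⟩ := hcpt.tendsto_subseq (x := fun n => (s n).1) fun n =>
    let ⟨φ, hφ⟩ := (hl n).1
    Set.mem_iUnion.2 ⟨φ, hφ _ (hs n)⟩
  obtain ⟨φ, hφ⟩ := Set.mem_iUnion.1 hx
  refine ⟨φ, x, hφ, fun ε hε => ?_⟩
  obtain ⟨n, hn, hn'⟩ := (((hδ.comp hθ.tendsto_atTop).eventually_lt_const (half_pos hε)).and
    (Metric.tendsto_nhds.1 hlim (ε / 2) (half_pos hε))).exists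
  refine ⟨θ n, fun t ht => ?_⟩
  calc dist t.1 x ≤ dist t.1 (s (θ n)).1 + dist (s (θ n)).1 x := dist_triangle _ _ _
    _ < ε / 2 + ε / 2 := add_lt_add (((hl _).2 t ht _ (hs _)).trans_lt hn) hn'
    _ = ε := add_halves ε

theorem exists_mem_facet_forall_eq [Fact p.Prime] {J : Type*} [Fintype J] {Y : J → (V → ℝ) → ℂ}
    (hY : ∀ j, Continuous (Y j))
    (hV : 2 * (Fintype.card J * (Fintype.card (ElementaryGroup p r) - 1)) < Fintype.card V) :
    ∃ φ : V → ElementaryGroup p r, ∃ x ∈ facet φ, ∀ j g g',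
      Y j (fun v => x (v, g)) = Y j (fun v => x (v, g')) := by
  classical
  let K := J × {ψ : AddChar (ElementaryGroup p r) ℂ // ψ ≠ 0}
  have hK : Fintype.card K = Fintype.card J * (Fintype.card (ElementaryGroup p r) - 1) := by
    rw [Fintype.card_prod, Fintype.card_subtype_compl, Fintype.card_subtype_eq, AddChar.card_eq]
  choose a ha ha0 using exists_addChar_single_eq_exp (p := p) (r := r)
  choose l hnil hl hwind using exists_isFacetList_forall_wind_ne_zero (K := K)
    (W := fun k => blockFourierMod (Y k.1) k.2.1) (fun _ => blockFourierMod_ne_zero _ _)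
    (a := fun k => a k.2.1) (fun k i x => by rw [← ha, blockFourierMod_translate])
    (fun k => ha0 _ k.2.2) (hK ▸ hV)
  obtain ⟨φ, x, hx, hnear⟩ := exists_mem_facet_forall_exists_dist_lt hnil hl
    (tendsto_pow_atTop_nhds_zero_of_lt_one (by positivity)
      ((div_lt_one (by positivity)).2 (lt_add_one _)))
  refine ⟨φ, x, hx, fun j => eq_of_forall_sum_addChar_mul_eq_zero fun ψ hψ => ?_⟩
  by_contra hne
  obtain ⟨ε, hε, hzero⟩ := exists_forall_wind_blockFourierMod_eq_zero (hY j) hne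
  obtain ⟨n, hn⟩ := hnear ε hε
  obtain ⟨s, hs, t, ht, u, hu, hstu⟩ := hwind n (j, ⟨ψ, hψ⟩)
  exact hstu (hzero (l n) hn s hs t ht u hu)

/-- The part of the weight vector `x` carried by the vertices of colour `g`. -/
def colorPart {V G : Type*} [DecidableEq G] (φ : V → G) (x : V → ℝ) (g : G) : V → ℝ :=
  fun v => if φ v = g then x v else 0

lemma colorPart_eq_of_mem_facet [NeZero p] {φ : V → ElementaryGroup p r}
    {x : V × ElementaryGroup p r → ℝ} (hx : x ∈ facet φ) (g : ElementaryGroup p r) :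
    colorPart φ (fun v => x (v, φ v)) g = fun v => x (v, g) := by
  funext v
  rw [colorPart]
  split_ifs with h
  · rw [h]
  · exact (hx.2 (v, g) (Ne.symm h)).symm

lemma eq_zero_of_sum_block_eq [NeZero p] {ι : Type*} [Fintype ι]
    (hι : Fintype.card ι < Fintype.card (ElementaryGroup p r)) (e : ι → V)
    {φ : V → ElementaryGroup p r} {x : V × ElementaryGroup p r → ℝ} (hx : x ∈ facet φ)
    (heq : ∀ g g', ∑ k, x (e k, g) = ∑ k, x (e k, g')) (k : ι) (g : ElementaryGroup p r) :
    x (e k, g) = 0 := by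
  obtain ⟨g', hg'⟩ : ∃ g', ∀ k, φ (e k) ≠ g' := by
    by_contra! hsurj
    exact hι.not_ge (Fintype.card_le_of_surjective (fun k => φ (e k)) hsurj)
  have hsum : ∑ k, x (e k, g) = 0 :=
    (heq g g').trans (Finset.sum_eq_zero fun k _ => hx.2 (_, _) (hg' k).symm)
  exact (Finset.sum_eq_zero_iff_of_nonneg fun k _ => hx.1.1 _).1 hsum k (Finset.mem_univ k)

/-- For each real test function `Ψ j` one adds `|G| - 1` vertices, whose total weight serves as the
imaginary part of a complex test function. In a coincidence some colour is missing among them, so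
their weights vanish. -/
theorem exists_coloring_forall_colorPart_eq [Fact p.Prime] {J : Type*} [Fintype J]
    {Ψ : J → (V → ℝ) → ℝ} (hΨ : ∀ j, Continuous (Ψ j))
    (hV : Fintype.card J * (Fintype.card (ElementaryGroup p r) - 1) < Fintype.card V) :
    ∃ φ : V → ElementaryGroup p r, ∃ x ∈ stdSimplex ℝ V,
      ∀ j g g', Ψ j (colorPart φ x g) = Ψ j (colorPart φ x g') := by
  classical
  let m := Fintype.card (ElementaryGroup p r) - 1
  let Y : J → ((V ⊕ J × Fin m) → ℝ) → ℂ := fun j y =>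
    ⟨Ψ j fun v => y (Sum.inl v), ∑ k, y (Sum.inr (j, k))⟩
  have hY : ∀ j, Continuous (Y j) := fun j =>
    Complex.equivRealProdCLM.symm.continuous.comp
      (((hΨ j).comp (by fun_prop)).prodMk (by fun_prop :
        Continuous fun y : (V ⊕ J × Fin m) → ℝ => ∑ k, y (Sum.inr (j, k))))
  obtain ⟨φ, x, hx, heq⟩ := exists_mem_facet_forall_eq (p := p) (r := r) hY (by
    rw [Fintype.card_sum, Fintype.card_prod, Fintype.card_fin]
    linarith)
  have hextra : ∀ a g, x (Sum.inr a, g) = 0 := fun a g =>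
    eq_zero_of_sum_block_eq (by
      simpa [m] using Fintype.card_pos (α := ElementaryGroup p r))
      (fun k : Fin m => (Sum.inr (a.1, k) : V ⊕ J × Fin m)) hx
      (fun g g' => congrArg Complex.im (heq a.1 g g')) a.2 g
  have hpart : ∀ g, colorPart (fun v => φ (Sum.inl v)) (fun v => x (Sum.inl v, φ (Sum.inl v))) g =
      fun v => x (Sum.inl v, g) := fun g =>
    funext fun v => congrFun (colorPart_eq_of_mem_facet hx g) (Sum.inl v)
  refine ⟨fun v => φ (Sum.inl v), fun v => x (Sum.inl v, φ (Sum.inl v)),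
    ⟨fun v => hx.1.1 _, ?_⟩, fun j g g' => ?_⟩
  · have hsum := hx.1.2
    simp only [Fintype.sum_prod_type, Fintype.sum_sum_type, hextra, Finset.sum_const_zero,
      add_zero] at hsum
    rw [← hsum]
    exact Finset.sum_congr rfl fun v _ => (Finset.sum_eq_single _
      (fun g _ (hg : g ≠ φ (Sum.inl v)) => hx.2 (Sum.inl v, g) hg) (by simp)).symm
  · rw [hpart, hpart]
    exact congrArg Complex.re (heq j g g')

end Coincidence

/-! ### Strong general position -/

section StrongGeneralPosition

lemma finite_setOf_not_linearIndependent_line {ι F : Type*} [Finite ι] [AddCommGroup F]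
    [Module ℝ F] (f₀ f₁ : ι → F) (h₁ : LinearIndependent ℝ f₁) :
    {t : ℝ | ¬ LinearIndependent ℝ (f₀ + t • (f₁ - f₀))}.Finite := by
  have := Fintype.ofFinite ι
  set T₀ := Fintype.linearCombination ℝ f₀ with hT₀
  set T₁ := Fintype.linearCombination ℝ f₁ with hT₁
  obtain ⟨L, hL⟩ := T₁.exists_leftInverse_of_injective (LinearMap.ker_eq_bot.2
    ((linearIndependent_iff_injective_fintypeLinearCombination).1 h₁))
  -- A dependency at time `t` is an eigenvector of `L (T₁ - T₀)` with eigenvalue `(1 - t)⁻¹`.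
  let K : Module.End ℝ (ι → ℝ) := L ∘ₗ (T₁ - T₀)
  refine ((Module.End.finite_hasEigenvalue (f := K)).image fun μ => 1 - μ⁻¹).subset ?_
  intro t ht
  rw [Set.mem_ofPred_eq, Fintype.linearIndependent_iff] at ht
  push Not at ht
  obtain ⟨c, hc, i, hi⟩ := ht
  have hc0 : c ≠ 0 := fun h => hi (by simp [h])
  have hdep : T₀ c + t • (T₁ c - T₀ c) = 0 := by
    rw [← hc]
    simp only [hT₀, hT₁, Fintype.linearCombination_apply, Pi.add_apply, Pi.smul_apply,
      Pi.sub_apply, smul_add, smul_sub, Finset.sum_add_distrib, Finset.sum_sub_distrib,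
      Finset.smul_sum, smul_comm t]
  have hLT₁ : L (T₁ c) = c := by simpa using LinearMap.congr_fun hL c
  have hK : K c = c - L (T₀ c) := by simp [K, hLT₁]
  have hLdep : L (T₀ c) + t • K c = 0 := by simpa [K] using congrArg L hdep
  have hc_eq : c = (1 - t) • K c := by
    rw [sub_smul, one_smul]
    linear_combination hLdep - hK
  have ht1 : 1 - t ≠ 0 := by
    intro h
    rw [h, zero_smul] at hc_eq
    exact hc0 hc_eq
  refine ⟨(1 - t)⁻¹, Module.End.hasEigenvalue_of_hasEigenvector (x := c) ⟨?_, hc0⟩, by simp⟩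
  rw [Module.End.mem_eigenspace_iff, eq_inv_smul_iff₀ ht1, ← hc_eq]

lemma exists_card_le_subset_biUnion {ι α : Type*} [DecidableEq α] (t : Finset ι) (m : ι → ℕ)
    (s : Finset α) (h : s.card ≤ ∑ i ∈ t, m i) :
    ∃ K : ι → Finset α, (∀ i, (K i).card ≤ m i) ∧ s ⊆ t.biUnion K := by
  classical
  induction t using Finset.induction_on generalizing s with
  | empty =>
    obtain rfl : s = ∅ := by simpa using h
    exact ⟨fun _ => ∅, by simp, by simp⟩
  | insert i t hi ih =>
    rw [Finset.sum_insert hi] at h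
    obtain ⟨u, hus, hu⟩ := Finset.exists_subset_card_eq (min_le_right (m i) s.card)
    obtain ⟨K, hK, hsK⟩ := ih (s \ u) (by rw [Finset.card_sdiff_of_subset hus]; omega)
    refine ⟨Function.update K i u, fun j => ?_, fun a ha => ?_⟩
    · rcases eq_or_ne j i with rfl | hj
      · simp [hu]
      · simpa [hj] using hK j
    · by_cases hau : a ∈ u
      · exact Finset.mem_biUnion.2 ⟨i, by simp, by simpa using hau⟩
      · obtain ⟨j, hj, haj⟩ := Finset.mem_biUnion.1 (hsK (Finset.mem_sdiff.2 ⟨ha, hau⟩))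
        refine Finset.mem_biUnion.2 ⟨j, Finset.mem_insert_of_mem hj, ?_⟩
        rwa [Function.update_of_ne (ne_of_mem_of_not_mem hj hi)]

/-- The homogeneous coordinates `(1, x₁, …, x_d)` of a point `x` of `ℝ^d`. -/
def homog {d : ℕ} (x : Fin d → ℝ) : Fin (d + 1) → ℝ := Fin.cons 1 x

lemma exists_homog_dual_family (d : ℕ) :
    ∃ (p : Fin (d + 1) → Fin d → ℝ) (l : Fin (d + 1) → (Fin (d + 1) → ℝ) →ₗ[ℝ] ℝ),
      ∀ j k, l j (homog (p k)) = if j = k then 1 else 0 := by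
  -- The vertices `0, e₁, …, e_d` of a simplex, with their barycentric coordinates.
  refine ⟨Fin.cons 0 fun i => Pi.single i 1,
    Fin.cons (LinearMap.proj 0 - ∑ i : Fin d, LinearMap.proj i.succ) fun i => LinearMap.proj i.succ,
    fun j k => ?_⟩
  cases j using Fin.cases <;> cases k using Fin.cases <;>
    simp [homog, Pi.single_apply, Fin.succ_ne_zero, (Fin.succ_ne_zero _).symm]

variable {I G : Type*} {d : ℕ}

lemma exists_glue_of_pairwise_disjoint {α : Type*} [Nonempty α] {τ : G → Finset I}
    (hdisj : Pairwise (Function.onFun Disjoint τ)) (e : ∀ g, τ g → α) :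
    ∃ κ : I → α, ∀ g, ∀ i : τ g, κ i = e g i := by
  have hinj : Function.Injective fun a : Σ g, τ g => (a.2 : I) := by
    rintro ⟨g, i, hi⟩ ⟨g', i', hi'⟩ (rfl : i = i')
    obtain rfl : g = g' := by
      by_contra hne
      exact Finset.disjoint_left.1 (hdisj hne) hi hi'
    rfl
  exact ⟨Function.extend (fun a : Σ g, τ g => (a.2 : I)) (fun a => e a.1 a.2)
    fun _ => Classical.arbitrary α, fun g i => hinj.extend_apply _ _ ⟨g, i⟩⟩

lemma exists_labels [Fintype G] [Nonempty G] {n : ℕ} [NeZero n] {τ : G → Finset I}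
    (hdisj : Pairwise (Function.onFun Disjoint τ)) (hn : ∀ g, (τ g).card ≤ n)
    (hsum : ∑ g, (τ g).card ≤ n * (Fintype.card G - 1)) :
    ∃ κ : I → Fin n, (∀ g, Set.InjOn κ (τ g)) ∧ ∀ k, ∃ g, ∀ i ∈ τ g, κ i ≠ k := by
  have hcover : (Finset.univ : Finset (Fin n)).card ≤ ∑ g, (n - (τ g).card) := by
    have htotal : ∑ g, (n - (τ g).card) + ∑ g, (τ g).card = Fintype.card G * n := by
      simp [← Finset.sum_add_distrib, Nat.sub_add_cancel (hn _)]
    obtain ⟨q, hq⟩ := Nat.exists_eq_succ_of_ne_zero (Fintype.card_ne_zero (α := G))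
    rw [hq, Nat.succ_mul, mul_comm] at htotal
    rw [hq, Nat.succ_sub_one] at hsum
    rw [Finset.card_univ, Fintype.card_fin]
    omega
  obtain ⟨K, hK, huniv⟩ := exists_card_le_subset_biUnion _ _ _ hcover
  have hemb (g : G) : Nonempty (τ g ↪ ((K g)ᶜ : Finset (Fin n))) := by
    refine Function.Embedding.nonempty_of_card_le ?_
    rw [Fintype.card_coe, Fintype.card_coe, Finset.card_compl, Fintype.card_fin]
    have := hK g
    have := hn g
    omega
  let e (g : G) : τ g ↪ ((K g)ᶜ : Finset (Fin n)) := (hemb g).some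
  obtain ⟨κ, hκ⟩ := exists_glue_of_pairwise_disjoint hdisj fun g i => (e g i : Fin n)
  refine ⟨κ, fun g i hi i' hi' h => ?_, fun k => ?_⟩
  · rw [hκ g ⟨i, hi⟩, hκ g ⟨i', hi'⟩] at h
    exact congrArg Subtype.val ((e g).injective (Subtype.ext h))
  · obtain ⟨g, -, hg⟩ := Finset.mem_biUnion.1 (huniv (Finset.mem_univ k))
    refine ⟨g, fun i hi h => Finset.mem_compl.1 (e g ⟨i, hi⟩).2 ?_⟩
    rwa [← hκ g ⟨i, hi⟩, h]

variable [DecidableEq G]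

/-- A family of vectors whose linear dependencies are the choices of coefficients `s` for which the
vector `∑ i ∈ τ g, s g i • homog (w i)` does not depend on `g`. -/
def coincidenceFamily (τ : G → Finset I) (w : I → Fin d → ℝ) :
    (Σ g, τ g) ⊕ Fin (d + 1) → G → Fin (d + 1) → ℝ :=
  Sum.elim (fun a => Pi.single a.1 (homog (w a.2))) fun k _ => Pi.single k 1

lemma sum_smul_coincidenceFamily [Fintype G] (τ : G → Finset I) (w : I → Fin d → ℝ)
    (s : (Σ g, τ g) ⊕ Fin (d + 1) → ℝ) (g : G) :
    (∑ a, s a • coincidenceFamily τ w a) g =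
      ∑ i : τ g, s (.inl ⟨g, i⟩) • homog (w i) + s ∘ .inr := by
  ext k
  simp only [coincidenceFamily, Fintype.sum_sum_type, Sum.elim_inl, Sum.elim_inr, Pi.add_apply,
    Finset.sum_apply, Pi.smul_apply, smul_eq_mul, Fintype.sum_sigma, Function.comp_apply]
  congr 1
  · refine (Finset.sum_eq_single g (fun g' _ hg' => ?_) (by simp)).trans (by simp)
    simp [Pi.single_eq_of_ne' hg']
  · simp [Pi.single_apply]

lemma exists_linearIndependent_coincidenceFamily [Fintype G] [Nonempty G] {τ : G → Finset I}
    (hdisj : Pairwise (Function.onFun Disjoint τ)) (hcard : ∀ g, (τ g).card ≤ d + 1)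
    (hsum : ∑ g, (τ g).card ≤ (d + 1) * (Fintype.card G - 1)) :
    ∃ w : I → Fin d → ℝ, LinearIndependent ℝ (coincidenceFamily τ w) := by
  obtain ⟨κ, hinj, hmiss⟩ := exists_labels hdisj hcard hsum
  obtain ⟨p, l, hl⟩ := exists_homog_dual_family d
  refine ⟨p ∘ κ, Fintype.linearIndependent_iff.2 fun s hs => ?_⟩
  have hsum_eq (g : G) : ∑ i : τ g, s (.inl ⟨g, i⟩) • homog (p (κ i)) + s ∘ .inr = 0 := by
    rw [← Pi.zero_apply (M := fun _ => Fin (d + 1) → ℝ) g, ← hs]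
    exact (sum_smul_coincidenceFamily τ (p ∘ κ) s g).symm
  have hcoord (g : G) (k : Fin (d + 1)) :
      ∑ i : τ g, (if k = κ i then s (.inl ⟨g, i⟩) else 0) + l k (s ∘ .inr) = 0 := by
    simpa [hl] using congrArg (l k) (hsum_eq g)
  have hconst (k : Fin (d + 1)) : l k (s ∘ .inr) = 0 := by
    obtain ⟨g, hg⟩ := hmiss k
    simpa [fun i : τ g => (hg i i.2).symm] using hcoord g k
  have hinl (g : G) (i : τ g) : s (.inl ⟨g, i⟩) = 0 := by
    have h := hcoord g (κ i)
    rw [hconst, add_zero, Finset.sum_eq_single i _ (by simp), if_pos rfl] at h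
    · exact h
    · exact fun i' _ hne => if_neg fun hκ => hne (Subtype.ext (hinj g i'.2 i.2 hκ.symm))
  have hinr : s ∘ .inr = 0 := by
    simpa [hinl] using hsum_eq (Classical.arbitrary G)
  exact Sum.rec (fun a => hinl a.1 a.2) (congrFun hinr)

lemma continuous_coincidenceFamily (τ : G → Finset I) :
    Continuous fun w : I → Fin d → ℝ => coincidenceFamily τ w := by
  refine continuous_pi fun a => ?_
  rcases a with a | k
  · have hhomog : Continuous fun w : I → Fin d → ℝ => homog (w a.2) :=
      continuous_const.finCons (continuous_apply (a.2 : I))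
    exact (continuous_single a.1).comp hhomog
  · exact continuous_const

lemma coincidenceFamily_line (τ : G → Finset I) (w₀ w₁ : I → Fin d → ℝ) (t : ℝ) :
    coincidenceFamily τ (w₀ + t • (w₁ - w₀)) =
      coincidenceFamily τ w₀ + t • (coincidenceFamily τ w₁ - coincidenceFamily τ w₀) := by
  ext (a | k) g j
  · rcases eq_or_ne g a.1 with rfl | hg
    · cases j using Fin.cases <;> simp [coincidenceFamily, homog]
    · simp [coincidenceFamily, Pi.single_eq_of_ne hg]
  · simp [coincidenceFamily]

lemma dense_setOf_linearIndependent_coincidenceFamily [Fintype G] [Nonempty G] {τ : G → Finset I}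
    (hdisj : Pairwise (Function.onFun Disjoint τ)) (hcard : ∀ g, (τ g).card ≤ d + 1)
    (hsum : ∑ g, (τ g).card ≤ (d + 1) * (Fintype.card G - 1)) :
    Dense {w : I → Fin d → ℝ | LinearIndependent ℝ (coincidenceFamily τ w)} := by
  obtain ⟨w₁, hw₁⟩ := exists_linearIndependent_coincidenceFamily hdisj hcard hsum
  intro w
  let line : ℝ → I → Fin d → ℝ := fun t => w + t • (w₁ - w)
  have hdense : Dense {t | LinearIndependent ℝ (coincidenceFamily τ (line t))} := by
    simp only [line, coincidenceFamily_line]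
    convert (finite_setOf_not_linearIndependent_line (coincidenceFamily τ w) _
      hw₁).countable.dense_compl ℝ using 1
    ext t
    simp
  have hline : Continuous line := by fun_prop
  have hzero : line 0 = w := by simp [line]
  rw [← hzero]
  exact closure_mono (Set.image_subset_iff.2 fun t ht => ht)
    (image_closure_subset_closure_image hline ⟨0, hdense 0, rfl⟩)

/-- Strong general position with respect to disjoint families indexed by `G`: whenever the expected
dimension of the intersection of the flats spanned by pairwise disjoint sets of at most `d + 1`
points is negative, the flats have no point in common. -/
def IsInStrongGeneralPosition (G : Type*) [Fintype G] (w : I → Fin d → ℝ) : Prop :=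
  ∀ τ : G → Finset I, Pairwise (Function.onFun Disjoint τ) → (∀ g, (τ g).card ≤ d + 1) →
    ∑ g, (τ g).card ≤ (d + 1) * (Fintype.card G - 1) →
      ⋂ g, (affineSpan ℝ (w '' τ g) : Set (Fin d → ℝ)) = ∅

lemma exists_sum_smul_homog_eq {τ : Finset I} {w : I → Fin d → ℝ} {z : Fin d → ℝ}
    (hz : z ∈ affineSpan ℝ (w '' τ)) :
    ∃ c : I → ℝ, ∑ i ∈ τ, c i • homog (w i) = homog z := by
  classical
  obtain ⟨t, c, ht, hc, rfl⟩ := eq_affineCombination_of_mem_affineSpan_image hz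
  rw [Finset.coe_subset] at ht
  refine ⟨fun i => if i ∈ t then c i else 0, ?_⟩
  simp only [ite_smul, zero_smul]
  rw [← Finset.sum_filter, Finset.filter_mem_eq_inter, Finset.inter_eq_right.2 ht,
    Finset.affineCombination_eq_linear_combination _ _ _ hc]
  ext k
  cases k using Fin.cases <;> simp [homog, hc]

lemma iInter_affineSpan_eq_empty [Finite G] [Nonempty G] {τ : G → Finset I} {w : I → Fin d → ℝ}
    (h : LinearIndependent ℝ (coincidenceFamily τ w)) :
    ⋂ g, (affineSpan ℝ (w '' τ g) : Set (Fin d → ℝ)) = ∅ := by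
  refine Set.eq_empty_of_forall_notMem fun z hz => ?_
  choose c hc using fun g => exists_sum_smul_homog_eq (Set.mem_iInter.1 hz g)
  have := Fintype.ofFinite G
  let s : (Σ g, τ g) ⊕ Fin (d + 1) → ℝ := Sum.elim (fun a => c a.1 a.2) (-homog z)
  have hs : ∑ a, s a • coincidenceFamily τ w a = 0 := by
    funext g
    have hg : ∑ i : τ g, c g i • homog (w i) = homog z :=
      (Finset.sum_coe_sort (τ g) fun i => c g i • homog (w i)).trans (hc g)
    rw [sum_smul_coincidenceFamily, Pi.zero_apply]
    simp only [s, Sum.elim_inl, Sum.elim_comp_inr, hg, add_neg_cancel]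
  simpa [s, homog] using Fintype.linearIndependent_iff.1 h s hs (.inr 0)

theorem dense_setOf_isInStrongGeneralPosition (I G : Type*) (d : ℕ) [Finite I] [Fintype G]
    [Nonempty G] : Dense {w : I → Fin d → ℝ | IsInStrongGeneralPosition G w} := by
  classical
  have := Fintype.ofFinite I
  let X := {τ : G → Finset I // Pairwise (Function.onFun Disjoint τ) ∧ (∀ g, (τ g).card ≤ d + 1) ∧
    ∑ g, (τ g).card ≤ (d + 1) * (Fintype.card G - 1)}
  have hdense : Dense (⋂ x : X, {w | LinearIndependent ℝ (coincidenceFamily (d := d) x.1 w)}) :=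
    dense_iInter_of_isOpen
      (fun x => isOpen_setOfPred_linearIndependent.preimage (continuous_coincidenceFamily x.1))
      fun x => dense_setOf_linearIndependent_coincidenceFamily x.2.1 x.2.2.1 x.2.2.2
  exact hdense.mono fun w hw τ hdisj hcard hsum =>
    iInter_affineSpan_eq_empty (Set.mem_iInter.1 hw ⟨τ, hdisj, hcard, hsum⟩)

end StrongGeneralPosition

/-! ### Fine subdivisions of a simplex -/

section PosSupport

variable {V : Type*} [Fintype V]

lemma exists_mem_ne_zero_of_mem_face {S : Set V} {x : V → ℝ} (hx : x ∈ face S) :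
    ∃ v ∈ S, x v ≠ 0 := by
  by_contra! h
  have hzero : ∀ v, x v = 0 := fun v => (em (v ∈ S)).elim (h v) (hx.2 v)
  simpa [hzero] using hx.1.2

lemma disjoint_face {S T : Set V} (h : Disjoint S T) : Disjoint (face S) (face T) := by
  refine Set.disjoint_left.2 fun x hS hT => ?_
  obtain ⟨v, hv, hxv⟩ := exists_mem_ne_zero_of_mem_face hS
  exact hxv (hT.2 v (Set.disjoint_left.1 h hv))

/-- The indices of the positive coordinates of `y`. -/
def posSupport (y : V → ℝ) : Finset V :=
  {v | 0 < y v}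

@[simp]
lemma mem_posSupport {y : V → ℝ} {v : V} : v ∈ posSupport y ↔ 0 < y v := by
  simp [posSupport]

end PosSupport

section BarycentricWeight

variable {I : Type*} [Fintype I] [DecidableEq I] {y : I → ℝ}

/-- The unnormalised barycentric coordinate, with respect to the vertex `S` of the barycentric
subdivision, of the point with unnormalised coordinates `y`. The sets `S` of positive weight are
the superlevel sets of `y` at positive levels, and the empty set. -/
def sdWeight (y : I → ℝ) (S : Finset I) : ℝ :=
  ∏ v ∈ S, (max (y v) 0 * ∏ u ∈ Sᶜ, max (y v - y u) 0)

lemma sdWeight_nonneg (y : I → ℝ) (S : Finset I) : 0 ≤ sdWeight y S :=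
  Finset.prod_nonneg fun _ _ => mul_nonneg (le_max_right _ _)
    (Finset.prod_nonneg fun _ _ => le_max_right _ _)

lemma sdWeight_pos_iff {S : Finset I} :
    0 < sdWeight y S ↔ ∀ v ∈ S, 0 < y v ∧ ∀ u ∉ S, y u < y v := by
  have hmax (a : ℝ) : max a 0 ≠ 0 ↔ 0 < a := by rw [Ne, max_eq_right_iff, not_le]
  rw [(sdWeight_nonneg y S).lt_iff_ne']
  simp only [sdWeight, Finset.prod_ne_zero_iff, mul_ne_zero_iff, hmax, Finset.mem_compl, sub_pos]

lemma subset_posSupport_of_sdWeight_pos {S : Finset I} (hS : 0 < sdWeight y S) :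
    S ⊆ posSupport y :=
  fun v hv => mem_posSupport.2 (sdWeight_pos_iff.1 hS v hv).1

lemma sdWeight_posSupport_pos (hy : ∀ i, 0 ≤ y i) : 0 < sdWeight y (posSupport y) := by
  refine sdWeight_pos_iff.2 fun v hv => ⟨mem_posSupport.1 hv, fun u hu => ?_⟩
  have hu0 : y u = 0 := le_antisymm (not_lt.1 (mem_posSupport.not.1 hu)) (hy u)
  exact hu0 ▸ mem_posSupport.1 hv

lemma subset_or_subset_of_sdWeight_pos {S T : Finset I} (hS : 0 < sdWeight y S)
    (hT : 0 < sdWeight y T) : S ⊆ T ∨ T ⊆ S := by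
  by_contra! h
  obtain ⟨v, hvS, hvT⟩ := Finset.not_subset.1 h.1
  obtain ⟨u, huT, huS⟩ := Finset.not_subset.1 h.2
  exact lt_asymm ((sdWeight_pos_iff.1 hS v hvS).2 u huS) ((sdWeight_pos_iff.1 hT u huT).2 v hvT)

lemma continuous_sdWeight (S : Finset I) : Continuous fun y : I → ℝ => sdWeight y S := by
  unfold sdWeight
  fun_prop

lemma card_posSupport_sdWeight_le (y : I → ℝ) :
    (posSupport fun S : {S : Finset I // S.Nonempty} => sdWeight y S).card ≤
      (posSupport y).card := by
  suffices h : (posSupport fun S : {S : Finset I // S.Nonempty} => sdWeight y S).card ≤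
      (Finset.Icc 1 (posSupport y).card).card by simpa using h
  -- The sets of positive weight form a chain, so that they are determined by their cardinality.
  refine Finset.card_le_card_of_injOn (fun S => S.1.card) (fun S hS => ?_) fun S hS T hT hST => ?_
  · rw [Finset.mem_coe, mem_posSupport] at hS
    exact Finset.mem_coe.2 <| Finset.mem_Icc.2
      ⟨S.2.card_pos, Finset.card_le_card (subset_posSupport_of_sdWeight_pos hS)⟩
  · rw [Finset.mem_coe, mem_posSupport] at hS hT
    rcases subset_or_subset_of_sdWeight_pos hS hT with h | h
    · exact Subtype.ext (Finset.eq_of_subset_of_card_le h hST.ge)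
    · exact Subtype.ext (Finset.eq_of_subset_of_card_le h hST.le).symm

end BarycentricWeight

section SimplexSubdivision

universe u

/-- A subdivision, of mesh at most `δ`, of the simplex on `V`. Its vertices, indexed by `I`, are the
points `vertex i`, and `weight y` are the unnormalised barycentric coordinates with respect to them
of the point with unnormalised coordinates `y`. -/
structure SimplexSubdivision (V : Type*) [Fintype V] (δ : ℝ) (I : Type*) [Fintype I] where
  vertex : I → V → ℝ
  weight : (V → ℝ) → I → ℝ
  continuous_weight : Continuous weight
  weight_nonneg : ∀ y i, 0 ≤ weight y i
  nonempty_posSupport : ∀ {y}, (posSupport y).Nonempty → (posSupport (weight y)).Nonempty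
  card_posSupport_le : ∀ y, (posSupport (weight y)).card ≤ (posSupport y).card
  vertex_mem_face : ∀ {y i}, i ∈ posSupport (weight y) → vertex i ∈ face (posSupport y)
  dist_vertex_le : ∀ {y i j}, i ∈ posSupport (weight y) → j ∈ posSupport (weight y) →
    dist (vertex i) (vertex j) ≤ δ

namespace SimplexSubdivision

variable {V I : Type*} [Fintype V] [Fintype I] {δ : ℝ}

/-- The simplex on `V` as a subdivision of itself. -/
def trivial (V : Type*) [Fintype V] [DecidableEq V] : SimplexSubdivision V 1 V :=
  have hpos (y : V → ℝ) : posSupport (fun v => max (y v) 0) = posSupport y := by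
    ext
    simp
  { vertex := fun v => Pi.single v 1
    weight := fun y v => max (y v) 0
    continuous_weight := by fun_prop
    weight_nonneg := fun _ _ => le_max_right _ _
    nonempty_posSupport := fun {y} hy => (hpos y).symm ▸ hy
    card_posSupport_le := fun y => (hpos y).symm ▸ le_rfl
    vertex_mem_face := fun {y v} hv => single_mem_face (Finset.mem_coe.2 (hpos y ▸ hv))
    dist_vertex_le := fun _ _ =>
      dist_le_one_of_mem_stdSimplex (single_mem_stdSimplex ℝ _) (single_mem_stdSimplex ℝ _) }

lemma dist_average_vertex_le (C : SimplexSubdivision V δ I) {N : ℕ} (hN : Fintype.card V ≤ N + 1)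
    {y : V → ℝ} {S T : Finset I} (hS : S.Nonempty) (hST : S ⊆ T)
    (hT : T ⊆ posSupport (C.weight y)) :
    dist (average (S.val.map C.vertex)) (average (T.val.map C.vertex)) ≤ N / (N + 1) * δ := by
  have hcard : (T.val.map C.vertex).card ≤ N + 1 := by
    rw [Multiset.card_map, Finset.card_val]
    exact (Finset.card_le_card hT).trans <| (C.card_posSupport_le y).trans <|
      (Finset.card_le_univ _).trans hN
  refine Metric.mem_closedBall.1 (average_mem (by simpa using hS.ne_empty)
    (convex_closedBall _ _) ?_)
  simp only [Multiset.mem_map, Finset.mem_val, Metric.mem_closedBall, forall_exists_index, and_imp,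
    forall_apply_eq_imp_iff₂]
  intro i hi
  refine dist_average_le hcard ?_ (Multiset.mem_map_of_mem _ (hST hi))
  simp only [Multiset.mem_map, Finset.mem_val, forall_exists_index, and_imp,
    forall_apply_eq_imp_iff₂]
  exact fun i hi j hj => C.dist_vertex_le (hT hi) (hT hj)

/-- The barycentric subdivision of a subdivision. -/
def barycentric [DecidableEq I] (C : SimplexSubdivision V δ I) {N : ℕ}
    (hN : Fintype.card V ≤ N + 1) :
    SimplexSubdivision V (N / (N + 1) * δ) {S : Finset I // S.Nonempty} where
  vertex S := average (S.1.val.map C.vertex)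
  weight y S := sdWeight (C.weight y) S
  continuous_weight := continuous_pi fun S => (continuous_sdWeight S.1).comp C.continuous_weight
  weight_nonneg _ _ := sdWeight_nonneg _ _
  nonempty_posSupport hy :=
    ⟨⟨_, C.nonempty_posSupport hy⟩, mem_posSupport.2 (sdWeight_posSupport_pos (C.weight_nonneg _))⟩
  card_posSupport_le y := (card_posSupport_sdWeight_le _).trans (C.card_posSupport_le y)
  vertex_mem_face {y S} hS := by
    rw [mem_posSupport] at hS
    have hSpos := subset_posSupport_of_sdWeight_pos hS
    refine average_mem (by simpa using S.2.ne_empty) (convex_face _) ?_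
    simpa using fun i hi => C.vertex_mem_face (hSpos hi)
  dist_vertex_le {y S T} hS hT := by
    rw [mem_posSupport] at hS hT
    rcases subset_or_subset_of_sdWeight_pos hS hT with h | h
    · exact C.dist_average_vertex_le hN S.2 h (subset_posSupport_of_sdWeight_pos hT)
    · rw [dist_comm]
      exact C.dist_average_vertex_le hN T.2 h (subset_posSupport_of_sdWeight_pos hS)

end SimplexSubdivision

theorem exists_simplexSubdivision (V : Type u) [Fintype V] {N : ℕ} (hN : Fintype.card V ≤ N + 1)
    (n : ℕ) : ∃ (I : Type u) (_ : Fintype I),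
      Nonempty (SimplexSubdivision V ((N / (N + 1) : ℝ) ^ n) I) := by
  classical
  induction n with
  | zero => exact ⟨V, inferInstance, by rw [pow_zero]; exact ⟨.trivial V⟩⟩
  | succ n ih =>
    obtain ⟨I, _, ⟨C⟩⟩ := ih
    exact ⟨_, inferInstance, by rw [pow_succ']; exact ⟨C.barycentric hN⟩⟩

end SimplexSubdivision

/-! ### Tverberg partitions into faces of dimension at most `d` -/

section Skeleton

variable {V : Type*} [Fintype V] {d : ℕ}

/-- The `d`-skeleton of the simplex on `V`. -/
def skeleton (V : Type*) [Fintype V] (d : ℕ) : Set (V → ℝ) :=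
  ⋃ S : {S : Finset V // S.card ≤ d + 1}, face (S : Set V)

lemma face_subset_skeleton {S : Finset V} (hS : S.card ≤ d + 1) :
    face (S : Set V) ⊆ skeleton V d :=
  Set.subset_iUnion (fun S : {S : Finset V // S.card ≤ d + 1} => face (S : Set V)) ⟨S, hS⟩

lemma isCompact_skeleton (V : Type*) [Fintype V] (d : ℕ) : IsCompact (skeleton V d) :=
  isCompact_iUnion fun S => isCompact_face (S : Set V)

lemma simpFace_eq_face {N : ℕ} (S : Finset (Fin (N + 1))) :
    simpFace S = face (S : Set (Fin (N + 1))) :=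
  rfl

lemma skel_eq_skeleton (N k : ℕ) : skel N k = skeleton (Fin (N + 1)) k := by
  classical
  have hncard (x : Fin (N + 1) → ℝ) : {i | x i ≠ 0}.ncard = Finset.card {i | x i ≠ 0} := by
    rw [← Set.ncard_coe_finset, Finset.coe_filter_univ]
  ext x
  simp only [skeleton, Set.mem_iUnion]
  constructor
  · rintro ⟨hx, hcard⟩
    exact ⟨⟨_, hncard x ▸ hcard⟩, hx, fun v hv => by simpa using hv⟩
  · rintro ⟨S, hx, hS⟩
    refine ⟨hx, (hncard x).trans_le ((Finset.card_le_card fun v hv => ?_).trans S.2)⟩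
    by_contra hvS
    exact (Finset.mem_filter.1 hv).2 (hS v hvS)

/-- A family of pairwise disjoint vertex sets which span faces of dimension at most `d`. -/
structure IsSkeletalFamily {V G : Type*} (d : ℕ) (S : G → Finset V) : Prop where
  nonempty : ∀ g, (S g).Nonempty
  disjoint : Pairwise (Function.onFun Disjoint S)
  card_le : ∀ g, (S g).card ≤ d + 1

lemma IsSkeletalFamily.injective {V G : Type*} {S : G → Finset V} (hS : IsSkeletalFamily d S) :
    Function.Injective S := by
  intro g g' h
  by_contra hne
  have hdisj : Disjoint (S g) (S g') := hS.disjoint hne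
  exact (hS.nonempty g).ne_empty (disjoint_self.1 (h ▸ hdisj))

lemma IsSkeletalFamily.exists_isTverbergPartition {G : Type*} [Fintype G] {N n : ℕ}
    {S : G → Finset (Fin (N + 1))} (hS : IsSkeletalFamily d S) {f : (Fin (N + 1) → ℝ) → Euc n}
    (hf : (⋂ g, f '' face (S g : Set (Fin (N + 1)))).Nonempty) :
    ∃ P, IsTverbergPartition (Fintype.card G) f P ∧ ∀ T ∈ P, T.card ≤ d + 1 := by
  refine ⟨Finset.univ.image S, ⟨Finset.card_image_of_injective _ hS.injective,
    by simpa using hS.nonempty, ?_, ?_⟩, by simpa using hS.card_le⟩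
  · simp only [Finset.mem_image, Finset.mem_univ, true_and, forall_exists_index,
      forall_apply_eq_imp_iff]
    exact fun g g' hne => hS.disjoint (ne_of_apply_ne S hne)
  · simpa only [simpFace_eq_face, Finset.set_biInter_finset_image, Finset.mem_univ,
      Set.iInter_true] using hf

end Skeleton

section Coincidence

variable {V G I : Type*} {d : ℕ}

lemma exists_subset_card_le_mem_convexHull_image {E : Type*} [AddCommGroup E] [Module ℝ E]
    [FiniteDimensional ℝ E] {A : Set I} {w : I → E} {z : E} (hz : z ∈ convexHull ℝ (w '' A)) :
    ∃ τ : Finset I, ↑τ ⊆ A ∧ τ.card ≤ Module.finrank ℝ E + 1 ∧ z ∈ convexHull ℝ (w '' τ) := by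
  classical
  rw [convexHull_eq_union] at hz
  simp only [Set.mem_iUnion] at hz
  obtain ⟨t, htA, hindep, hzt⟩ := hz
  obtain ⟨τ, hτA, hτ, hτt⟩ :=
    Finset.exists_subset_injOn_image_eq_of_surjOn A t (show Set.SurjOn w A t from htA)
  refine ⟨τ, hτA, ?_, by rwa [← Finset.coe_image, hτt]⟩
  rw [← Finset.card_image_of_injOn hτ, hτt, ← Fintype.card_coe]
  exact hindep.card_le_finrank_succ.trans (by gcongr; exact Submodule.finrank_le _)

lemma exists_forall_mem_convexHull_image_posSupport [Fintype I] {E : Type*} [AddCommGroup E]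
    [Module ℝ E] {b : G → I → ℝ} {w : I → E} (hb : ∀ g i, 0 ≤ b g i)
    (hsum : ∀ g g', ∑ i, b g i = ∑ i, b g' i)
    (hmoment : ∀ g g', ∑ i, b g i • w i = ∑ i, b g' i • w i)
    {g₀ : G} (hg₀ : (posSupport (b g₀)).Nonempty) :
    ∃ z, ∀ g, z ∈ convexHull ℝ (w '' posSupport (b g)) := by
  have hzero {g : G} {i : I} (hi : i ∉ posSupport (b g)) : b g i = 0 :=
    le_antisymm (not_lt.1 (mem_posSupport.not.1 hi)) (hb g i)
  refine ⟨Finset.univ.centerMass (b g₀) w, fun g => ?_⟩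
  have hpos : 0 < ∑ i ∈ posSupport (b g), b g i := by
    obtain ⟨i, hi⟩ := hg₀
    rw [Finset.sum_subset (Finset.subset_univ _) fun i _ => hzero, hsum g g₀]
    exact Finset.sum_pos' (fun i _ => hb g₀ i) ⟨i, Finset.mem_univ i, mem_posSupport.1 hi⟩
  rw [Finset.centerMass, hsum g₀ g, hmoment g₀ g, ← Finset.centerMass,
    ← Finset.centerMass_subset _ (Finset.subset_univ _) fun i _ => hzero]
  exact Finset.centerMass_mem_convexHull _ (fun i _ => hb g i) hpos fun i hi => ⟨i, hi, rfl⟩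

lemma IsInStrongGeneralPosition.card_eq [Fintype G] [Fintype V] {w : I → Fin d → ℝ}
    (hw : IsInStrongGeneralPosition G w)
    (hV : Fintype.card V ≤ (d + 1) * (Fintype.card G - 1) + 1)
    {τ : G → Finset I} (hτ : Pairwise (Function.onFun Disjoint τ)) (hτd : ∀ g, (τ g).card ≤ d + 1)
    {z : Fin d → ℝ} (hz : ∀ g, z ∈ affineSpan ℝ (w '' τ g))
    {S : G → Finset V} (hS : Pairwise (Function.onFun Disjoint S))
    (hτS : ∀ g, (τ g).card ≤ (S g).card) (g : G) : (τ g).card = (S g).card := by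
  classical
  have hτsum : (d + 1) * (Fintype.card G - 1) < ∑ g, (τ g).card := by
    by_contra! hle
    have hempty := hw τ hτ hτd hle
    exact Set.eq_empty_iff_forall_notMem.1 hempty z (Set.mem_iInter.2 hz)
  have hSsum : ∑ g, (S g).card ≤ Fintype.card V := by
    rw [← Finset.card_biUnion fun g _ g' _ hne => hS hne]
    exact Finset.card_le_univ _
  have hle : ∑ g, (τ g).card ≤ ∑ g, (S g).card := Finset.sum_le_sum fun g _ => hτS g
  exact (Finset.sum_eq_sum_iff_of_le fun g _ => hτS g).1 (by omega) g (Finset.mem_univ g)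

lemma pairwise_disjoint_posSupport_colorPart [Fintype V] [DecidableEq G] (φ : V → G) (x : V → ℝ) :
    Pairwise (Function.onFun Disjoint fun g => posSupport (colorPart φ x g)) := by
  have hcolor {g : G} {v : V} (hv : v ∈ posSupport (colorPart φ x g)) : φ v = g := by
    by_contra hne
    simp [colorPart, hne] at hv
  exact fun g g' hne => Finset.disjoint_left.2 fun v hv hv' =>
    hne ((hcolor hv).symm.trans (hcolor hv'))

lemma exists_nonempty_posSupport_colorPart [Fintype V] [DecidableEq G] (φ : V → G) {x : V → ℝ}
    (hx : x ∈ stdSimplex ℝ V) : ∃ g, (posSupport (colorPart φ x g)).Nonempty := by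
  obtain ⟨v, hv⟩ : ∃ v, 0 < x v := by
    simpa using Finset.exists_lt_of_sum_lt (s := Finset.univ) (f := 0) (g := x) (by simp [hx.2])
  exact ⟨φ v, v, by simpa [colorPart] using hv⟩

lemma exists_mem_convexHull_image_posSupport_weight [Fintype V] [Fintype I] [DecidableEq G]
    {δ : ℝ} (C : SimplexSubdivision V δ I) {w : I → Fin d → ℝ} {φ : V → G} {x : V → ℝ}
    (hx : x ∈ stdSimplex ℝ V)
    (heq : ∀ j g g', ∑ i, C.weight (colorPart φ x g) i * homog (w i) j =
      ∑ i, C.weight (colorPart φ x g') i * homog (w i) j) :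
    ∃ z, ∀ g, z ∈ convexHull ℝ (w '' posSupport (C.weight (colorPart φ x g))) := by
  obtain ⟨g₀, hg₀⟩ := exists_nonempty_posSupport_colorPart φ hx
  refine exists_forall_mem_convexHull_image_posSupport (fun g => C.weight_nonneg _)
    (fun g g' => ?_) (fun g g' => ?_) (C.nonempty_posSupport hg₀)
  · simpa [homog] using heq 0 g g'
  · funext j
    simpa [homog, Finset.sum_apply] using heq j.succ g g'

/-- Carathéodory's theorem shrinks the supports in the subdivision to `d + 1` elements, and strong
general position leaves no room for the supports in `V` to be any larger. -/
lemma isSkeletalFamily_posSupport_colorPart [Fintype G] [DecidableEq G] [Fintype V] [Fintype I]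
    {δ : ℝ} (C : SimplexSubdivision V δ I) {w : I → Fin d → ℝ}
    (hw : IsInStrongGeneralPosition G w)
    (hV : Fintype.card V ≤ (d + 1) * (Fintype.card G - 1) + 1) {φ : V → G} {x : V → ℝ}
    {z : Fin d → ℝ}
    (hz : ∀ g, z ∈ convexHull ℝ (w '' posSupport (C.weight (colorPart φ x g)))) :
    IsSkeletalFamily d fun g => posSupport (colorPart φ x g) := by
  choose τ hτ hτd hzτ using fun g => exists_subset_card_le_mem_convexHull_image (hz g)
  simp only [Module.finrank_fin_fun] at hτd
  have hface {g : G} {i : I} (hi : i ∈ τ g) :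
      C.vertex i ∈ face (posSupport (colorPart φ x g) : Set V) := C.vertex_mem_face (hτ g hi)
  have hdisj := pairwise_disjoint_posSupport_colorPart φ x
  have hτdisj : Pairwise (Function.onFun Disjoint τ) := fun g g' hne =>
    Finset.disjoint_left.2 fun i hi hi' => Set.disjoint_left.1
      (disjoint_face (Finset.disjoint_coe.2 (hdisj hne))) (hface hi) (hface hi')
  have hcard := hw.card_eq hV hτdisj hτd (fun g => convexHull_subset_affineSpan _ (hzτ g)) hdisj
    fun g => (Finset.card_le_card (hτ g)).trans (C.card_posSupport_le _)
  refine ⟨fun g => ?_, hdisj, fun g => hcard g ▸ hτd g⟩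
  obtain ⟨_, i, hi, -⟩ := convexHull_nonempty_iff.1 ⟨z, hzτ g⟩
  obtain ⟨v, hv, -⟩ := exists_mem_ne_zero_of_mem_face (hface hi)
  exact ⟨v, hv⟩

end Coincidence

section PrimePower

variable {V : Type*} [Fintype V] {p r d : ℕ} [Fact p.Prime]

lemma exists_isSkeletalFamily_dist_le
    (hV : Fintype.card V = (d + 1) * (Fintype.card (ElementaryGroup p r) - 1) + 1)
    {f : (V → ℝ) → Fin d → ℝ} (hf : ContinuousOn f (skeleton V d)) {ε : ℝ} (hε : 0 < ε) :
    ∃ S : ElementaryGroup p r → Finset V, IsSkeletalFamily d S ∧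
      ∃ z, ∀ g, ∃ b ∈ f '' face (S g : Set V), dist z b ≤ ε := by
  obtain ⟨δ, hδ, hfδ⟩ := Metric.uniformContinuousOn_iff.1
    ((isCompact_skeleton V d).uniformContinuousOn_of_continuous hf) (ε / 2) (half_pos hε)
  obtain ⟨n, hn⟩ := exists_pow_lt_of_lt_one hδ (y := (Fintype.card V / (Fintype.card V + 1) : ℝ))
    ((div_lt_one (by positivity)).2 (lt_add_one _))
  obtain ⟨I, _, ⟨C⟩⟩ := exists_simplexSubdivision V (N := Fintype.card V) (Nat.le_succ _) n
  obtain ⟨w, hw, hwε⟩ := (dense_setOf_isInStrongGeneralPosition I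
    (ElementaryGroup p r) d).exists_dist_lt (fun i => f (C.vertex i)) (half_pos hε)
  obtain ⟨φ, x, hx, heq⟩ := exists_coloring_forall_colorPart_eq (p := p) (r := r)
    (Ψ := fun j y => ∑ i, C.weight y i * homog (w i) j)
    (fun j => have := C.continuous_weight; by fun_prop) (by rw [Fintype.card_fin]; omega)
  obtain ⟨z, hz⟩ := exists_mem_convexHull_image_posSupport_weight C hx heq
  have hS := isSkeletalFamily_posSupport_colorPart C hw hV.le hz
  refine ⟨_, hS, z, fun g => ?_⟩
  have hskel {i : I} (hi : i ∈ posSupport (C.weight (colorPart φ x g))) :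
      C.vertex i ∈ skeleton V d := face_subset_skeleton (hS.card_le g) (C.vertex_mem_face hi)
  obtain ⟨_, i₀, hi₀, -⟩ := convexHull_nonempty_iff.1 ⟨z, hz g⟩
  refine ⟨_, ⟨_, C.vertex_mem_face hi₀, rfl⟩,
    Metric.mem_closedBall.1 (convexHull_min ?_ (convex_closedBall _ _) (hz g))⟩
  rintro _ ⟨i, hi, rfl⟩
  calc dist (w i) (f (C.vertex i₀))
      ≤ dist (w i) (f (C.vertex i)) + dist (f (C.vertex i)) (f (C.vertex i₀)) :=
        dist_triangle _ _ _
    _ ≤ ε / 2 + ε / 2 := by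
        refine add_le_add ?_ (hfδ _ (hskel hi) _ (hskel hi₀) ?_).le
        · rw [dist_comm]
          exact (dist_le_pi_dist (fun i => f (C.vertex i)) w i).trans hwε.le
        · exact (C.dist_vertex_le hi hi₀).trans_lt hn
    _ = ε := add_halves ε

lemma nonempty_iInter_of_forall_dist_le {E G : Type*} [MetricSpace E] [Finite G] [Nonempty G]
    {L : G → Set E} (hL : ∀ g, IsCompact (L g))
    (h : ∀ ε > 0, ∃ z, ∀ g, ∃ b ∈ L g, dist z b ≤ ε) : (⋂ g, L g).Nonempty := by
  have := Fintype.ofFinite G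
  have hne (g : G) : (L g).Nonempty := by
    obtain ⟨z, hz⟩ := h 1 one_pos
    exact (hz g).imp fun b hb => hb.1
  let g₀ := Classical.arbitrary G
  obtain ⟨b₀, -, hmin⟩ := (hL g₀).exists_isMinOn (hne g₀)
    (f := fun b => ∑ g, Metric.infDist b (L g))
    (continuous_finsetSum _ fun g _ => Metric.continuous_infDist_pt _).continuousOn
  suffices hzero : ∑ g, Metric.infDist b₀ (L g) ≤ 0 by
    refine ⟨b₀, Set.mem_iInter.2 fun g => ((hL g).isClosed.mem_iff_infDist_zero (hne g)).2 ?_⟩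
    have hsum := le_antisymm hzero (Finset.sum_nonneg fun g _ => Metric.infDist_nonneg)
    exact (Finset.sum_eq_zero_iff_of_nonneg fun g _ => Metric.infDist_nonneg).1 hsum g
      (Finset.mem_univ g)
  refine le_of_forall_pos_le_add fun ε hε => ?_
  obtain ⟨z, hz⟩ := h (ε / (2 * Fintype.card G)) (by positivity)
  choose b hb hzb using hz
  calc ∑ g, Metric.infDist b₀ (L g) ≤ ∑ g, Metric.infDist (b g₀) (L g) := hmin (hb g₀)
    _ ≤ ∑ _g : G, 2 * (ε / (2 * Fintype.card G)) := Finset.sum_le_sum fun g _ => by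
        refine (Metric.infDist_le_dist_of_mem (hb g)).trans ((dist_triangle_left _ _ z).trans ?_)
        linarith [hzb g₀, hzb g]
    _ = 0 + ε := by
        rw [Finset.sum_const, Finset.card_univ, nsmul_eq_mul]
        field_simp
        ring

theorem exists_isSkeletalFamily_nonempty_iInter_image
    (hV : Fintype.card V = (d + 1) * (Fintype.card (ElementaryGroup p r) - 1) + 1)
    {f : (V → ℝ) → Fin d → ℝ} (hf : ContinuousOn f (skeleton V d)) :
    ∃ S : ElementaryGroup p r → Finset V, IsSkeletalFamily d S ∧
      (⋂ g, f '' face (S g : Set V)).Nonempty := by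
  classical
  by_contra! hcon
  have hgap : ∀ S : {S : ElementaryGroup p r → Finset V // IsSkeletalFamily d S}, ∃ ε > 0,
      ∀ z, ∃ g, ∀ b ∈ f '' face (S.1 g : Set V), ε < dist z b := by
    intro S
    by_contra! h
    refine (nonempty_iInter_of_forall_dist_le (fun g => ?_) h).ne_empty (hcon S.1 S.2)
    exact (isCompact_face _).image_of_continuousOn
      (hf.mono (face_subset_skeleton (S.2.card_le g)))
  choose ε hε hgap using hgap
  have hsmall : ∀ᶠ η in nhdsWithin (0 : ℝ) (Set.Ioi 0), ∀ S, η < ε S :=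
    Filter.eventually_all.2 fun S =>
      eventually_nhdsWithin_of_eventually_nhds (eventually_lt_nhds (hε S))
  obtain ⟨η, hηε, hη⟩ := (hsmall.and self_mem_nhdsWithin).exists
  obtain ⟨S, hS, z, hz⟩ := exists_isSkeletalFamily_dist_le (p := p) (r := r) hV hf hη
  obtain ⟨g, hg⟩ := hgap ⟨S, hS⟩ z
  obtain ⟨b, hb, hzb⟩ := hz g
  exact (hzb.trans_lt (hηε ⟨S, hS⟩)).not_gt (hg b hb)

end PrimePower

section Line

variable {V : Type*} [Fintype V]

lemma mem_image_face_pair [DecidableEq V] {f : (V → ℝ) → ℝ} {u v : V}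
    (hf : ContinuousOn f (face {u, v})) {c : ℝ}
    (hc : c ∈ Set.Icc (f (Pi.single u 1)) (f (Pi.single v 1))) : c ∈ f '' face {u, v} :=
  (convex_face _).isPreconnected.intermediate_value (single_mem_face (by simp))
    (single_mem_face (by simp)) hf hc

/-- The vertices with the `k`-th smallest and the `k`-th largest value span an edge whose image
contains the median. -/
theorem exists_isSkeletalFamily_one_nonempty_iInter_image {m : ℕ} (hV : Fintype.card V = 2 * m + 1)
    {f : (V → ℝ) → ℝ} (hf : ContinuousOn f (skeleton V 1)) :
    ∃ S : Fin (m + 1) → Finset V, IsSkeletalFamily 1 S ∧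
      (⋂ k, f '' face (S k : Set V)).Nonempty := by
  classical
  let e : Fin (2 * m + 1) ≃ V := (Fintype.equivFinOfCardEq hV).symm
  let F : Fin (2 * m + 1) → ℝ := fun i => f (Pi.single (e i) 1)
  let v : Fin (2 * m + 1) → V := fun i => e (Tuple.sort F i)
  have hv : Function.Injective v := e.injective.comp (Tuple.sort F).injective
  have hmono : Monotone fun i => f (Pi.single (v i) 1) := Tuple.monotone_sort F
  let lo : Fin (m + 1) → Fin (2 * m + 1) := Fin.castLE (by omega)
  have hlo (k : Fin (m + 1)) : lo k ≤ lo (Fin.last m) := Fin.le_last k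
  have hhi (k : Fin (m + 1)) : lo (Fin.last m) ≤ (lo k).rev := by
    simp only [lo, Fin.le_def, Fin.val_castLE, Fin.val_last, Fin.val_rev]
    omega
  refine ⟨fun k => {v (lo k), v (lo k).rev}, ⟨fun k => Finset.insert_nonempty _ _, ?_,
    fun k => Finset.card_le_two⟩, f (Pi.single (v (lo (Fin.last m))) 1),
    Set.mem_iInter.2 fun k => ?_⟩
  · intro k k' hne
    simp only [Function.onFun, Finset.disjoint_insert_left, Finset.disjoint_singleton_left,
      Finset.mem_insert, Finset.mem_singleton, hv.eq_iff, lo, Fin.ext_iff, Fin.val_castLE,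
      Fin.val_rev]
    omega
  · rw [Finset.coe_pair]
    have hsubset := face_subset_skeleton (d := 1) (S := {v (lo k), v (lo k).rev}) Finset.card_le_two
    rw [Finset.coe_pair] at hsubset
    exact mem_image_face_pair (hf.mono hsubset) ⟨hmono (hlo k), hmono (hhi k)⟩

end Line

lemma nonempty_iInter_image_of_comp {X Y Z G : Type*} [Nonempty G] {e : Y → Z}
    (he : Function.Injective e) {f : X → Y} {K : G → Set X}
    (h : (⋂ g, (fun x => e (f x)) '' K g).Nonempty) : (⋂ g, f '' K g).Nonempty := by
  simp_rw [← Set.image_image e f] at h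
  rw [← he.injOn.image_iInter_eq] at h
  exact h.of_image

end SkeletonTverberg

/-- The `d`-Skeleton Conjecture holds (a) for `d = 1` and all `q ≥ 1`, and
(b) for all `d ≥ 1` whenever `q` is a prime power. -/
theorem dSkeleton_cases :
    (∀ q : ℕ, 1 ≤ q →
      ∀ f : (Fin (2*(q-1)+1) → ℝ) → Euc 1,
        ContinuousOn f (skel (2*(q-1)) 1) →
        ∃ P : Finset (Finset (Fin (2*(q-1)+1))),
          IsTverbergPartition q f P ∧ ∀ S ∈ P, S.card ≤ 2) ∧
    (∀ q : ℕ, IsPrimePow q → ∀ d : ℕ, 1 ≤ d →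
      ∀ f : (Fin ((d+1)*(q-1)+1) → ℝ) → Euc d,
        ContinuousOn f (skel ((d+1)*(q-1)) d) →
        ∃ P : Finset (Finset (Fin ((d+1)*(q-1)+1))),
          IsTverbergPartition q f P ∧ ∀ S ∈ P, S.card ≤ d + 1) := by
  open SkeletonTverberg in
  simp only [skel_eq_skeleton]
  refine ⟨fun q hq f hf => ?_, fun q hq d _ f hf => ?_⟩
  · obtain ⟨S, hS, hfS⟩ := exists_isSkeletalFamily_one_nonempty_iInter_image (m := q - 1)
      (by simp) ((PiLp.continuous_apply 2 (fun _ : Fin 1 => ℝ) 0).comp_continuousOn hf)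
    have heval : Function.Injective fun y : Euc 1 => y 0 := fun y y' h =>
      PiLp.ext (Fin.forall_fin_one.2 h)
    simpa [Nat.sub_add_cancel hq] using
      hS.exists_isTverbergPartition (nonempty_iInter_image_of_comp heval hfS)
  · obtain ⟨p, k, hp, -, rfl⟩ := (isPrimePow_nat_iff q).1 hq
    have : Fact p.Prime := ⟨hp⟩
    have hG : Fintype.card (ElementaryGroup p k) = p ^ k := by simp [ZMod.card]
    obtain ⟨S, hS, hfS⟩ := exists_isSkeletalFamily_nonempty_iInter_image (p := p) (r := k)
      (by rw [hG, Fintype.card_fin]) ((PiLp.continuous_ofLp 2 _).comp_continuousOn hf)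
    simpa only [hG] using hS.exists_isTverbergPartition
      (nonempty_iInter_image_of_comp (WithLp.ofLp_injective 2) hfS)
end
end

section
/- Let d, q ≥ 1. (a) For every continuous map F : Δ^{(d+1)(q-1)} → ℝ^d, every Tverberg partition of the restriction of F to the d-skeleton Δ_d^{(d+1)(q-1)} is also a Tverberg partition of F. (b) For every continuous map f : Δ_d^{(d+1)(q-1)} → ℝ^d and every ε > 0 there exists a continuous map F : Δ^{(d+1)(q-1)} → ℝ^d with sup_{x ∈ Δ_d^{(d+1)(q-1)}} ‖F(x) − f(x)‖ < ε such that every Tverberg partition {S_1, …, S_q} of F satisfies |S_i| ≤ d+1 for all i and is a Tverberg partition of f. -/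
open scoped BigOperators

noncomputable section

/-!
The map `f` on the skeleton is approximated by a smooth map `g` on the whole space, which is then
replaced by `x ↦ g x + ∑ i, x i • a i` for a small generic `a`. For pairwise disjoint faces with
fewer than `(d + 1) (r - 1) + 1` vertices in total, `r` being the number of faces, almost no `a`
makes the images meet. Indeed, choose in each face a vertex at which the coincidence point has a
positive coordinate: since the faces are disjoint, the value of `a` at that vertex can be solved for
in terms of the points, their common image and the values of `a` at all the other vertices, so the
bad `a` form the `C¹` image of a space of smaller dimension.

If one of the `q` blocks of a Tverberg partition had more than `d + 1` of the at most
`(d + 1) (q - 1) + 1` vertices, then the blocks with at most `d + 1` vertices would be such faces,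
and their images would not meet. Finally, disjointness of the images of faces of the skeleton is
stable under small changes of the map by compactness, and there are only finitely many partitions.
-/

open Set Filter Metric Module MeasureTheory
open scoped Topology ContDiff Manifold

section LinearPerturbation

variable {ι V : Type*} [Fintype ι] [NormedAddCommGroup V] [NormedSpace ℝ V]

/-- The perturbation of `g` by the linear map that sends the `i`-th vertex of the simplex to
`a i`. -/
def perturb (g : (ι → ℝ) → V) (a : ι → V) (x : ι → ℝ) : V :=
  g x + ∑ i, x i • a i

lemma contDiff_perturb {X : Type*} [NormedAddCommGroup X] [NormedSpace ℝ X] {n : ℕ∞ω}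
    {g : (ι → ℝ) → V} (hg : ContDiff ℝ n g) {a : X → ι → V} (ha : ContDiff ℝ n a)
    {x : X → ι → ℝ} (hx : ContDiff ℝ n x) : ContDiff ℝ n fun p => perturb g (a p) (x p) := by
  unfold perturb
  fun_prop

lemma perturb_sub_perturb_of_eq_off {g : (ι → ℝ) → V} {a b : ι → V} {x : ι → ℝ} {i₀ : ι}
    (h : ∀ i ≠ i₀, x i ≠ 0 → a i = b i) :
    perturb g a x - perturb g b x = x i₀ • (a i₀ - b i₀) := by
  rw [perturb, perturb, add_sub_add_left_eq_sub, ← Finset.sum_sub_distrib]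
  simp only [← smul_sub]
  refine Finset.sum_eq_single i₀ (fun i _ hi => ?_) (by simp)
  by_cases hx : x i = 0
  · rw [hx, zero_smul]
  · rw [h i hi hx, sub_self, smul_zero]

lemma dist_perturb_le (g : (ι → ℝ) → V) (a : ι → V) {x : ι → ℝ} (hx : x ∈ stdSimplex ℝ ι) :
    dist (perturb g a x) (g x) ≤ ‖a‖ := by
  have hmem : ∑ i, x i • a i ∈ closedBall 0 ‖a‖ :=
    (convex_closedBall 0 ‖a‖).sum_mem (fun i _ => hx.1 i) hx.2 fun i _ => by
      simpa using norm_le_pi_norm a i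
  simpa [perturb, dist_eq_norm] using hmem

end LinearPerturbation

section FaceSpan

variable {ι : Type*} [Fintype ι]

/-- The affine hull of the face of the standard simplex spanned by the vertices in `s`. -/
def faceSpan (s : Finset ι) : Set (ι → ℝ) :=
  {x | (∀ i ∉ s, x i = 0) ∧ ∑ i, x i = 1}

lemma exists_pos_of_mem_faceSpan {s : Finset ι} {x : ι → ℝ} (hx : x ∈ faceSpan s) :
    ∃ i ∈ s, 0 < x i := by
  obtain ⟨i, -, hi⟩ : ∃ i ∈ Finset.univ, 0 < x i :=
    Finset.exists_lt_of_sum_lt (by simp [hx.2])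
  exact ⟨i, by_contra fun his => hi.ne' (hx.1 i his), hi⟩

end FaceSpan

section FacePoint

variable {ι : Type*} [DecidableEq ι]

/-- The point of the affine hull of the face `s` with barycentric coordinates `u` away from the
pivot vertex `j`. -/
def facePoint (s : Finset ι) (j : ι) (u : s.erase j → ℝ) : ι → ℝ :=
  Pi.single j 1 + ∑ i, u i • (Pi.single i.1 1 - Pi.single j 1)

lemma facePoint_pivot (s : Finset ι) (j : ι) (u : s.erase j → ℝ) :
    facePoint s j u j = 1 - ∑ i, u i := by
  have hne (i : s.erase j) : j ≠ i.1 := (Finset.ne_of_mem_erase i.2).symm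
  simp [facePoint, hne, sub_eq_add_neg]

variable [Fintype ι]

lemma contDiff_facePoint (s : Finset ι) (j : ι) {n : ℕ∞ω} : ContDiff ℝ n (facePoint s j) := by
  unfold facePoint
  fun_prop

lemma facePoint_restrict {s : Finset ι} (j : ι) {x : ι → ℝ} (hx : x ∈ faceSpan s) :
    facePoint s j (fun i => x i) = x := by
  let e : ι → ι → ℝ := fun i => Pi.single i 1
  have hvanish : ∀ i ∉ s.erase j, x i • (e i - e j) = 0 := fun i hi => by
    by_cases hij : i = j
    · rw [hij, sub_self, smul_zero]
    · rw [hx.1 i fun his => hi (Finset.mem_erase.2 ⟨hij, his⟩), zero_smul]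
  calc facePoint s j (fun i => x i)
      = e j + ∑ i ∈ s.erase j, x i • (e i - e j) := by
        rw [facePoint, Finset.sum_coe_sort (s.erase j) fun i => x i • (e i - e j)]
    _ = e j + ∑ i, x i • (e i - e j) := by
        rw [Finset.sum_subset (Finset.subset_univ _) fun i _ => hvanish i]
    _ = ∑ i, x i • e i := by
        simp only [smul_sub, Finset.sum_sub_distrib, ← Finset.sum_smul, hx.2, one_smul,
          add_sub_cancel]
    _ = x := (pi_eq_sum_univ' x).symm

end FacePoint

lemma contDiffOn_extend {ι κ V X : Type*} [Fintype ι] [Fintype κ] [NormedAddCommGroup V]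
    [NormedSpace ℝ V] [NormedAddCommGroup X] [NormedSpace ℝ X] {n : ℕ∞ω} {j : κ → ι}
    (hj : Function.Injective j) {c : X → κ → V} {b : X → ι → V} {t : Set X}
    (hc : ContDiffOn ℝ n c t) (hb : ContDiffOn ℝ n b t) :
    ContDiffOn ℝ n (fun p => Function.extend j (c p) (b p)) t := by
  refine contDiffOn_pi.2 fun i => ?_
  by_cases hi : ∃ k, j k = i
  · obtain ⟨k, rfl⟩ := hi
    simpa only [hj.extend_apply] using contDiffOn_pi.1 hc k
  · simpa only [Function.extend_apply' _ _ _ hi] using contDiffOn_pi.1 hb i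

section PivotSolution

variable {ι κ V : Type*} [DecidableEq ι] {s : κ → Finset ι} {j : κ → ι}

/-- The free parameters of a coincidence of the faces `s k` with pivots `j k`: the barycentric
coordinates of the points away from the pivots, their common image, and the perturbation at the
vertices that are not pivots. -/
abbrev PivotParam (V : Type*) (s : κ → Finset ι) (j : κ → ι) : Type _ :=
  (∀ k, (s k).erase (j k) → ℝ) × V × (↥(range j)ᶜ → V)

/-- The parameters for which every point has a positive coordinate at its pivot. -/
def positivePivots (V : Type*) (s : κ → Finset ι) (j : κ → ι) : Set (PivotParam V s j) :=
  {p | ∀ k, ∑ i, p.1 k i < 1}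

variable [NormedAddCommGroup V] [NormedSpace ℝ V]

lemma convex_positivePivots : Convex ℝ (positivePivots V s j) := by
  simp only [positivePivots, ofPred_forall]
  refine convex_iInter fun k => convex_halfSpace_lt ⟨fun p q => ?_, fun c p => ?_⟩ 1
  · simp [Finset.sum_add_distrib]
  · simp [Finset.mul_sum]

lemma finrank_pivotParam_lt [Finite ι] [Fintype κ] [FiniteDimensional ℝ V]
    (hjs : ∀ k, j k ∈ s k) (hj : Function.Injective j)
    (hcard : ∑ k, (s k).card + finrank ℝ V < (finrank ℝ V + 1) * Fintype.card κ) :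
    finrank ℝ (PivotParam V s j) < finrank ℝ (ι → V) := by
  have := Fintype.ofFinite ι
  have hfaces : ∑ k, ((s k).erase (j k)).card + Fintype.card κ = ∑ k, (s k).card := by
    rw [Fintype.card_eq_sum_ones, ← Finset.sum_add_distrib]
    exact Finset.sum_congr rfl fun k _ => Finset.card_erase_add_one (hjs k)
  have hpivots : Fintype.card ↥(range j)ᶜ + Fintype.card κ = Fintype.card ι := by
    rw [← card_range_of_injective hj, add_comm, ← Fintype.card_sum]
    exact Fintype.card_congr (Equiv.Set.sumCompl _)
  simp only [finrank_prod, finrank_pi, finrank_pi_fintype, Finset.sum_const, Finset.card_univ,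
    smul_eq_mul, Fintype.card_coe, ← hpivots]
  linarith

variable [Fintype ι]

/-- The perturbation determined by the parameters `p`: the equation `perturb g a x = y` at the
`k`-th point `x` is solved for the value of `a` at the pivot `j k`. -/
def pivotSolution (g : (ι → ℝ) → V) (s : κ → Finset ι) (j : κ → ι) (p : PivotParam V s j) :
    ι → V :=
  let x (k : κ) : ι → ℝ := facePoint (s k) (j k) (p.1 k)
  let b : ι → V := Function.extend Subtype.val p.2.2 0
  Function.extend j (fun k => (x k (j k))⁻¹ • (p.2.1 - perturb g b (x k))) b

lemma contDiffOn_pivotSolution [Fintype κ] {n : ℕ∞ω} {g : (ι → ℝ) → V} (hg : ContDiff ℝ n g)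
    (hj : Function.Injective j) :
    ContDiffOn ℝ n (pivotSolution g s j) (positivePivots V s j) := by
  have hb : ContDiff ℝ n fun p : PivotParam V s j =>
      (Function.extend Subtype.val p.2.2 0 : ι → V) := by
    rw [← contDiffOn_univ]
    exact contDiffOn_extend Subtype.val_injective (by fun_prop) contDiffOn_const
  have hx (k : κ) : ContDiff ℝ n fun p : PivotParam V s j => facePoint (s k) (j k) (p.1 k) :=
    (contDiff_facePoint (s k) (j k)).comp (contDiff_pi.1 contDiff_fst k)
  unfold pivotSolution
  refine contDiffOn_extend hj (contDiffOn_pi.2 fun k => ?_) hb.contDiffOn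
  refine ((contDiff_pi.1 (hx k) (j k)).contDiffOn.inv fun p hp => ?_).smul
    (contDiff_snd.fst.sub (contDiff_perturb hg hb (hx k))).contDiffOn
  rw [facePoint_pivot]
  exact (sub_pos.2 (hp k)).ne'

lemma mem_image_pivotSolution {g : (ι → ℝ) → V} (hs : Pairwise fun k l => Disjoint (s k) (s l))
    (hjs : ∀ k, j k ∈ s k) (hj : Function.Injective j) {a : ι → V} {x : κ → ι → ℝ} {y : V}
    (hx : ∀ k, x k ∈ faceSpan (s k)) (hpos : ∀ k, 0 < x k (j k))
    (hy : ∀ k, perturb g a (x k) = y) :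
    a ∈ pivotSolution g s j '' positivePivots V s j := by
  have hface (k : κ) := facePoint_restrict (j k) (hx k)
  refine ⟨⟨fun k i => x k i, y, fun i => a i⟩, fun k => ?_, ?_⟩
  · rw [← sub_pos, ← facePoint_pivot, hface]
    exact hpos k
  let b : ι → V := Function.extend Subtype.val (fun i : ↥(range j)ᶜ => a i) 0
  have hb_off {i : ι} (hi : i ∉ range j) : b i = a i :=
    Subtype.val_injective.extend_apply _ _ (⟨i, hi⟩ : ↥(range j)ᶜ)
  have hb_pivot (k : κ) : b (j k) = 0 :=
    Function.extend_apply' _ _ _ fun ⟨i, hi⟩ => i.2 ⟨k, hi.symm⟩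
  have heq_off (k : κ) (i : ι) (hik : i ≠ j k) (hxi : x k i ≠ 0) : a i = b i := by
    refine (hb_off ?_).symm
    rintro ⟨l, rfl⟩
    have hkl : k ≠ l := fun h => hik (congrArg j h.symm)
    exact hxi ((hx k).1 _ (Finset.disjoint_right.1 (hs hkl) (hjs l)))
  have hsolve (k : κ) : (x k (j k))⁻¹ • (y - perturb g b (x k)) = a (j k) := by
    rw [← hy k, perturb_sub_perturb_of_eq_off (heq_off k), hb_pivot, sub_zero,
      inv_smul_smul₀ (hpos k).ne']
  funext i
  simp only [pivotSolution, hface]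
  by_cases hi : i ∈ range j
  · obtain ⟨k, rfl⟩ := hi
    rw [hj.extend_apply]
    exact hsolve k
  · rw [Function.extend_apply' _ _ _ hi]
    exact hb_off hi

lemma addHaar_image_pivotSolution_eq_zero [Fintype κ] [FiniteDimensional ℝ V]
    [MeasurableSpace V] [BorelSpace V] (μ : Measure (ι → V)) [μ.IsAddHaarMeasure]
    {g : (ι → ℝ) → V} (hg : ContDiff ℝ 1 g) (hjs : ∀ k, j k ∈ s k) (hj : Function.Injective j)
    (hcard : ∑ k, (s k).card + finrank ℝ V < (finrank ℝ V + 1) * Fintype.card κ) :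
    μ (pivotSolution g s j '' positivePivots V s j) = 0 := by
  refine Measure.absolutelyContinuous_isAddHaarMeasure μ (μH[finrank ℝ (ι → V)]) ?_
  rw [← NNReal.coe_natCast]
  refine hausdorffMeasure_of_dimH_lt ?_
  calc dimH (pivotSolution g s j '' positivePivots V s j)
      ≤ dimH (positivePivots V s j) :=
        (contDiffOn_pivotSolution hg hj).dimH_image_le convex_positivePivots le_rfl
    _ ≤ finrank ℝ (PivotParam V s j) :=
        (dimH_mono (subset_univ _)).trans_eq (Real.dimH_univ_eq_finrank _)
    _ < finrank ℝ (ι → V) := by exact_mod_cast finrank_pivotParam_lt hjs hj hcard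

end PivotSolution

theorem ae_iInter_image_faceSpan_eq_empty {ι κ V : Type*} [Fintype ι] [Fintype κ]
    [NormedAddCommGroup V] [NormedSpace ℝ V] [FiniteDimensional ℝ V] [MeasurableSpace V]
    [BorelSpace V] (μ : Measure (ι → V)) [μ.IsAddHaarMeasure] {g : (ι → ℝ) → V}
    (hg : ContDiff ℝ 1 g) {s : κ → Finset ι} (hs : Pairwise fun k l => Disjoint (s k) (s l))
    (hcard : ∑ k, (s k).card + finrank ℝ V < (finrank ℝ V + 1) * Fintype.card κ) :
    ∀ᵐ a ∂μ, ⋂ k, perturb g a '' faceSpan (s k) = ∅ := by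
  classical
  have hinj {j : κ → ι} (hjs : ∀ k, j k ∈ s k) : Function.Injective j := fun k l hkl =>
    by_contra fun hne => Finset.disjoint_left.1 (hs hne) (hjs k) (hkl ▸ hjs l)
  have hpivots : ∀ᵐ a ∂μ, ∀ j : κ → ι, (∀ k, j k ∈ s k) →
      a ∉ pivotSolution g s j '' positivePivots V s j :=
    ae_all_iff.2 fun j => ae_all_iff.2 fun hjs =>
      measure_eq_zero_iff_ae_notMem.1 <|
        addHaar_image_pivotSolution_eq_zero μ hg hjs (hinj hjs) hcard
  filter_upwards [hpivots] with a ha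
  refine eq_empty_of_forall_notMem fun y hy => ?_
  choose x hx hxy using mem_iInter.1 hy
  choose j hjs hpos using fun k => exists_pos_of_mem_faceSpan (hx k)
  exact ha j hjs (mem_image_pivotSolution hs hjs (hinj hjs) hx hpos hxy)

section Approximation

lemma exists_contDiff_dist_lt {E V : Type*} [NormedAddCommGroup E] [NormedSpace ℝ E]
    [FiniteDimensional ℝ E] [NormedAddCommGroup V] [NormedSpace ℝ V] {K : Set E}
    (hK : IsClosed K) {f : E → V} (hf : ContinuousOn f K) {δ : ℝ} (hδ : 0 < δ) :
    ∃ g : E → V, ContDiff ℝ ∞ g ∧ ∀ x ∈ K, dist (g x) (f x) < δ := by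
  let t (x : E) : Set V := {v | x ∈ K → dist v (f x) < δ}
  have hconvex (x : E) : Convex ℝ (t x) := by
    by_cases hx : x ∈ K
    · simpa [t, hx, ball] using convex_ball (f x) δ
    · simpa [t, hx] using convex_univ
  have hlocal (x : E) : ∃ c : V, ∀ᶠ y in 𝓝 x, c ∈ t y := by
    refine ⟨f x, ?_⟩
    by_cases hx : x ∈ K
    · have := hf x hx (ball_mem_nhds (f x) hδ)
      filter_upwards [mem_nhdsWithin_iff_eventually.1 this] with y hy hyK
      rw [dist_comm]
      exact hy hyK
    · filter_upwards [hK.isOpen_compl.mem_nhds hx] with y hy hyK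
      exact absurd hyK hy
  obtain ⟨g, hg⟩ := exists_contMDiffMap_forall_mem_convex_of_local_const 𝓘(ℝ, E) (n := ⊤)
    hconvex hlocal
  exact ⟨g, g.contMDiff.contDiff, hg⟩

theorem eventually_iInter_image_eq_empty_of_dist_lt {X Y κ : Type*} [TopologicalSpace X]
    [MetricSpace Y] [Finite κ] [Nonempty κ] {K : κ → Set X} (hK : ∀ k, IsCompact (K k)) {f : X → Y}
    (hf : ∀ k, ContinuousOn f (K k)) (hempty : ⋂ k, f '' K k = ∅) :
    ∀ᶠ δ in 𝓝[>] (0 : ℝ), ∀ F : X → Y, (∀ k, ∀ x ∈ K k, dist (F x) (f x) < δ) →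
      ⋂ k, F '' K k = ∅ := by
  have := Fintype.ofFinite κ
  let k₀ := Classical.arbitrary κ
  let images : Set (κ → Y) := (fun (x : κ → X) k => f (x k)) '' univ.pi K
  let diagonal : Set (κ → Y) := {v | ∀ k, v k = v k₀}
  have himages : IsCompact images :=
    (isCompact_univ_pi hK).image_of_continuousOn <| continuousOn_pi.2 fun k =>
      (hf k).comp (continuous_apply k).continuousOn fun x hx => hx k (mem_univ k)
  have hdiagonal : IsClosed diagonal := by
    simp only [diagonal, ofPred_forall]
    exact isClosed_iInter fun k => isClosed_eq (continuous_apply k) (continuous_apply k₀)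
  have hdisj : Disjoint images diagonal := by
    refine Set.disjoint_left.2 ?_
    rintro _ ⟨x, hx, rfl⟩ hv
    exact notMem_empty (f (x k₀)) <| hempty ▸
      mem_iInter.2 fun k => ⟨x k, hx k (mem_univ k), hv k⟩
  obtain ⟨δ₀, hδ₀, hthick⟩ := hdisj.exists_thickenings himages hdiagonal
  filter_upwards [Ioc_mem_nhdsGT hδ₀] with δ hδ F hF
  refine eq_empty_of_forall_notMem fun y hy => ?_
  choose x hxK hxy using mem_iInter.1 hy
  have hnear : (fun k => F (x k)) ∈ thickening δ₀ images :=
    mem_thickening_iff.2 ⟨_, mem_image_of_mem _ fun k _ => hxK k,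
      (dist_pi_lt_iff hδ₀).2 fun k => (hF k _ (hxK k)).trans_le hδ.2⟩
  have hdiag : (fun k => F (x k)) ∈ diagonal := fun k => (hxy k).trans (hxy k₀).symm
  exact Set.disjoint_left.1 hthick hnear (self_subset_thickening hδ₀ _ hdiag)

end Approximation

section Simplex

variable {N k : ℕ}

lemma isCompact_simpFace (S : Finset (Fin (N + 1))) : IsCompact (simpFace S) := by
  have h : simpFace S = stdSimplex ℝ (Fin (N + 1)) ∩ ⋂ i ∉ S, {x | x i = 0} := by
    ext x
    simp [simpFace, stdSimp, stdSimplex]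
  rw [h]
  exact (isCompact_stdSimplex ℝ _).inter_right <| isClosed_biInter fun i _ =>
    isClosed_eq (continuous_apply i) continuous_const

lemma simpFace_subset_faceSpan (S : Finset (Fin (N + 1))) : simpFace S ⊆ faceSpan S :=
  fun _ hx => ⟨hx.2, hx.1.2⟩

lemma simpFace_subset_skel {S : Finset (Fin (N + 1))} (hS : S.card ≤ k + 1) :
    simpFace S ⊆ skel N k := fun x hx => by
  refine ⟨hx.1, le_trans ?_ hS⟩
  rw [← ncard_coe_finset]
  exact ncard_le_ncard (fun i hi => by_contra fun h => hi (hx.2 i h)) S.finite_toSet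

lemma isClosed_skel (N k : ℕ) : IsClosed (skel N k) := by
  have h : skel N k = ⋃ S ∈ {S : Finset (Fin (N + 1)) | S.card ≤ k + 1}, simpFace S := by
    refine Subset.antisymm (fun x hx => ?_) (iUnion₂_subset fun S hS => simpFace_subset_skel hS)
    refine mem_iUnion₂.2 ⟨(toFinite {i | x i ≠ 0}).toFinset, ?_, hx.1, by simp⟩
    rw [mem_ofPred_eq, ← ncard_eq_toFinset_card]
    exact hx.2
  rw [h]
  exact (toFinite _).isClosed_biUnion fun S _ => (isCompact_simpFace S).isClosed

end Simplex

section GenericOnFaces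

variable {N : ℕ} {V : Type*} [NormedAddCommGroup V] [NormedSpace ℝ V]

/-- General position of a map on a simplex with respect to its faces: pairwise disjoint faces have
images without a common point whenever the expected dimension of the intersection is negative.
With `n = dim V`, the codimensions `n - (|S| - 1)` of the images add up to more than `n` exactly
when `∑ |S| + n < (n + 1) |Q|`. -/
def GenericOnFaces (F : (Fin (N + 1) → ℝ) → V) : Prop :=
  ∀ Q : Finset (Finset (Fin (N + 1))), (∀ S ∈ Q, ∀ T ∈ Q, S ≠ T → Disjoint S T) →
    ∑ S ∈ Q, S.card + finrank ℝ V < (finrank ℝ V + 1) * Q.card →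
    ⋂ S ∈ Q, F '' simpFace S = ∅

variable [FiniteDimensional ℝ V]

theorem ae_genericOnFaces_perturb [MeasurableSpace V] [BorelSpace V]
    (μ : Measure (Fin (N + 1) → V)) [μ.IsAddHaarMeasure] {g : (Fin (N + 1) → ℝ) → V}
    (hg : ContDiff ℝ 1 g) : ∀ᵐ a ∂μ, GenericOnFaces (perturb g a) := by
  refine ae_all_iff.2 fun Q => ae_all_iff.2 fun hQ => ae_all_iff.2 fun hcard => ?_
  have hspan := ae_iInter_image_faceSpan_eq_empty μ hg (s := fun S : Q => S.1)
    (fun S T hST => hQ S S.2 T T.2 fun h => hST (Subtype.ext h))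
    (by rwa [Finset.sum_coe_sort Q Finset.card, Fintype.card_coe])
  filter_upwards [hspan] with a ha
  refine subset_empty_iff.1 (ha ▸ subset_iInter fun S => ?_)
  exact (biInter_subset_of_mem S.2).trans (image_mono (simpFace_subset_faceSpan S.1))

theorem exists_genericOnFaces_dist_lt {K : Set (Fin (N + 1) → ℝ)} (hK : IsClosed K)
    (hKsub : K ⊆ stdSimp N) {f : (Fin (N + 1) → ℝ) → V} (hf : ContinuousOn f K) {δ : ℝ}
    (hδ : 0 < δ) :
    ∃ F : (Fin (N + 1) → ℝ) → V, Continuous F ∧ GenericOnFaces F ∧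
      ∀ x ∈ K, dist (F x) (f x) < δ := by
  obtain ⟨g, hg, hgf⟩ := exists_contDiff_dist_lt hK hf (half_pos hδ)
  borelize V
  have hdense := Measure.dense_of_ae <| ae_genericOnFaces_perturb
    (Measure.addHaar : Measure (Fin (N + 1) → V)) (hg.of_le (by exact_mod_cast le_top))
  obtain ⟨a, hgeneric, ha⟩ := hdense.exists_dist_lt 0 (half_pos hδ)
  refine ⟨perturb g a, ?_, hgeneric, fun x hx => ?_⟩
  · exact (contDiff_perturb hg contDiff_const contDiff_id).continuous
  · calc dist (perturb g a x) (f x)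
        ≤ dist (perturb g a x) (g x) + dist (g x) (f x) := dist_triangle _ _ _
      _ < δ / 2 + δ / 2 :=
        add_lt_add ((dist_perturb_le g a (hKsub hx)).trans_lt (by simpa using ha)) (hgf x hx)
      _ = δ := add_halves δ

end GenericOnFaces

section TverbergPartition

variable {N d k q : ℕ} {F f : (Fin (N + 1) → ℝ) → Euc d} {P : Finset (Finset (Fin (N + 1)))}

lemma sum_card_filter_add_lt (hN : N ≤ (d + 1) * (q - 1)) (hP : P.card = q)
    (hdisj : ∀ S ∈ P, ∀ T ∈ P, S ≠ T → Disjoint S T) {T : Finset (Fin (N + 1))} (hT : T ∈ P)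
    (hTcard : d + 1 < T.card) :
    ∑ S ∈ P with S.card ≤ d + 1, S.card + d < (d + 1) * (P.filter (·.card ≤ d + 1)).card := by
  have htotal : ∑ S ∈ P, S.card ≤ N + 1 := by
    rw [← Finset.card_biUnion hdisj]
    simpa using Finset.card_le_univ (P.biUnion fun S => S)
  have hsum := Finset.sum_filter_add_sum_filter_not P (·.card ≤ d + 1) Finset.card
  have hcount := Finset.card_filter_add_card_filter_not (s := P) (·.card ≤ d + 1)
  have hbig : (P.filter (¬ ·.card ≤ d + 1)).card * (d + 2) ≤
      ∑ S ∈ P with ¬ S.card ≤ d + 1, S.card :=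
    Finset.card_nsmul_le_sum _ Finset.card (d + 2) fun S hS => not_le.1 (Finset.mem_filter.1 hS).2
  have hbig_pos : 0 < (P.filter (¬ ·.card ≤ d + 1)).card :=
    Finset.card_pos.2 ⟨T, Finset.mem_filter.2 ⟨hT, by omega⟩⟩
  have hfaces : (d + 1) * (P.filter (·.card ≤ d + 1)).card +
      (d + 1) * (P.filter (¬ ·.card ≤ d + 1)).card = (d + 1) * (q - 1) + (d + 1) := by
    rw [← mul_add, hcount, hP, ← mul_add_one, Nat.sub_add_cancel]
    exact hP ▸ Finset.card_pos.2 ⟨T, hT⟩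
  linarith

/-- The faces of dimension at most `d` in the partition already violate general position, because
the larger faces use up too many of the vertices. -/
theorem GenericOnFaces.card_le_of_isTverbergPartition (hF : GenericOnFaces F)
    (hN : N ≤ (d + 1) * (q - 1)) (hP : IsTverbergPartition q F P) :
    ∀ S ∈ P, S.card ≤ d + 1 := by
  obtain ⟨hPq, -, hdisj, hcommon⟩ := hP
  by_contra! ⟨T, hT, hTcard⟩
  have hsmall := hF (P.filter (·.card ≤ d + 1))
    (fun S hS T hT => hdisj S (Finset.mem_of_mem_filter S hS) T (Finset.mem_of_mem_filter T hT))
    (by simpa using sum_card_filter_add_lt hN hPq hdisj hT hTcard)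
  refine (hcommon.mono (biInter_subset_biInter_left fun S hS => ?_)).ne_empty hsmall
  exact Finset.mem_of_mem_filter S hS

lemma IsTverbergPartition.congr (hP : IsTverbergPartition q f P) (hcard : ∀ S ∈ P, S.card ≤ k + 1)
    (hfF : EqOn f F (skel N k)) : IsTverbergPartition q F P := by
  refine ⟨hP.1, hP.2.1, hP.2.2.1, ?_⟩
  have himage (S) (hS : S ∈ P) : f '' simpFace S = F '' simpFace S :=
    image_congr fun x hx => hfF (simpFace_subset_skel (hcard S hS) hx)
  rw [← iInter₂_congr himage]
  exact hP.2.2.2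

theorem eventually_isTverbergPartition_of_dist_lt (q : ℕ) (hf : ContinuousOn f (skel N k)) :
    ∀ᶠ δ in 𝓝[>] (0 : ℝ), ∀ P : Finset (Finset (Fin (N + 1))), ∀ F : (Fin (N + 1) → ℝ) → Euc d,
      (∀ x ∈ skel N k, dist (F x) (f x) < δ) → (∀ S ∈ P, S.card ≤ k + 1) →
      IsTverbergPartition q F P → IsTverbergPartition q f P := by
  refine eventually_all.2 fun P => ?_
  by_cases hcommon : (⋂ S ∈ P, f '' simpFace S).Nonempty
  · exact Eventually.of_forall fun δ F _ _ hFP => ⟨hFP.1, hFP.2.1, hFP.2.2.1, hcommon⟩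
  by_cases hcard : ∀ S ∈ P, S.card ≤ k + 1
  swap
  · exact Eventually.of_forall fun δ F _ hcard' => absurd hcard' hcard
  have hsub (G : (Fin (N + 1) → ℝ) → Euc d) :
      ⋂ S ∈ P, G '' simpFace S = ⋂ S : P, G '' simpFace S.1 :=
    (iInter_subtype (· ∈ P) fun S => G '' simpFace S.1).symm
  have hPne : Nonempty P := by
    by_contra! hPempty
    exact hcommon (by simp [hsub])
  rw [hsub, not_nonempty_iff_eq_empty] at hcommon
  have hskel (S : P) : simpFace S.1 ⊆ skel N k := simpFace_subset_skel (hcard S S.2)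
  filter_upwards [eventually_iInter_image_eq_empty_of_dist_lt
    (fun S : P => isCompact_simpFace S.1) (fun S => hf.mono (hskel S)) hcommon]
    with δ hδ F hF _ hFP
  refine absurd ?_ hFP.2.2.2.ne_empty
  rw [hsub]
  exact hδ F fun S x hx => hF x (hskel S hx)

end TverbergPartition

theorem tverberg_full_vs_skeleton_general (d q N : ℕ) (hN : N ≤ (d + 1) * (q - 1)) :
    (∀ f F : (Fin (N + 1) → ℝ) → Euc d, EqOn f F (skel N d) →
      ∀ P : Finset (Finset (Fin (N + 1))),
        (IsTverbergPartition q f P ∧ ∀ S ∈ P, S.card ≤ d + 1) → IsTverbergPartition q F P) ∧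
    (∀ f : (Fin (N + 1) → ℝ) → Euc d, ContinuousOn f (skel N d) → ∀ ε > (0 : ℝ),
      ∃ F : (Fin (N + 1) → ℝ) → Euc d, Continuous F ∧ (∀ x ∈ skel N d, ‖F x - f x‖ < ε) ∧
        ∀ P : Finset (Finset (Fin (N + 1))), IsTverbergPartition q F P →
          (∀ S ∈ P, S.card ≤ d + 1) ∧ IsTverbergPartition q f P) := by
  refine ⟨fun f F hfF P hP => hP.1.congr hP.2 hfF, fun f hf ε hε => ?_⟩
  obtain ⟨δ, htransfer, hδ, hδε⟩ :=
    ((eventually_isTverbergPartition_of_dist_lt q hf).and (Ioo_mem_nhdsGT hε)).exists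
  obtain ⟨F, hFcont, hFgen, hFf⟩ := exists_genericOnFaces_dist_lt (isClosed_skel N d)
    (fun _ hx => hx.1) hf hδ
  refine ⟨F, hFcont, fun x hx => ?_, fun P hP => ?_⟩
  · rw [← dist_eq_norm]
    exact (hFf x hx).trans hδε
  · have hcard := hFgen.card_le_of_isTverbergPartition hN hP
    exact ⟨hcard, htransfer P F hFf hcard hP⟩

/-- (a) Every Tverberg partition of the restriction of `F` to the `d`-skeleton is a
Tverberg partition of `F`. (b) Any continuous map on the `d`-skeleton can be slightly
distorted and extended to the full simplex so that every Tverberg partition of the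
extension lies in the `d`-skeleton and is a Tverberg partition of the original map. -/
theorem tverberg_full_vs_skeleton (d q : ℕ) (hd : 1 ≤ d) (hq : 1 ≤ q) :
    (∀ F : (Fin ((d+1)*(q-1)+1) → ℝ) → Euc d,
      ContinuousOn F (stdSimp ((d+1)*(q-1))) →
      ∀ P : Finset (Finset (Fin ((d+1)*(q-1)+1))),
        (IsTverbergPartition q F P ∧ ∀ S ∈ P, S.card ≤ d + 1) →
        IsTverbergPartition q F P) ∧
    (∀ f : (Fin ((d+1)*(q-1)+1) → ℝ) → Euc d,
      ContinuousOn f (skel ((d+1)*(q-1)) d) →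
      ∀ ε > (0:ℝ),
      ∃ F : (Fin ((d+1)*(q-1)+1) → ℝ) → Euc d,
        ContinuousOn F (stdSimp ((d+1)*(q-1))) ∧
        (∀ x ∈ skel ((d+1)*(q-1)) d, ‖F x - f x‖ < ε) ∧
        ∀ P : Finset (Finset (Fin ((d+1)*(q-1)+1))),
          IsTverbergPartition q F P →
          (∀ S ∈ P, S.card ≤ d + 1) ∧ IsTverbergPartition q f P) := by
  obtain ⟨hrestrict, happrox⟩ := tverberg_full_vs_skeleton_general d q _ le_rfl
  refine ⟨fun F _ P hP => hrestrict F F (eqOn_refl F _) P hP, fun f hf ε hε => ?_⟩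
  obtain ⟨F, hF, hclose⟩ := happrox f hf ε hε
  exact ⟨F, hF.continuousOn, hclose⟩
end
end
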